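/- arXiv:2301.11192 — 2 statements merged into one kernel-verified Lean document; each statement's English description precedes it below -/
import Mathlib

section
/- Let 𝒬 be the set of odd primes p such that the Diophantine equation 8x^2 + 27y^2 = jp has a primitive solution for some j ∈ {1, 4, 8}. For each k ∈ {1, 5, 7, 11}, let 𝒬ₖ = {p ∈ 𝒬 : p ≡ k (mod 24)}. Then for each k ∈ {1, 5, 7, 11}, the Dirichlet density of 𝒬ₖ equals 1/24; in particular, each 𝒬ₖ is infinite. -/
open Filter Topology

/-- The set 𝒬 of odd primes `p` such that `8x² + 27y² = jp` has a primitive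
solution for some `j ∈ {1, 4, 8}`. -/
def QSet : Set ℕ :=
  {p | p.Prime ∧ Odd p ∧ ∃ j ∈ ({1, 4, 8} : Set ℤ), ∃ x y : ℤ,
    8 * x ^ 2 + 27 * y ^ 2 = j * p ∧ Int.gcd x y = 1}

/-- The subset of 𝒬 consisting of primes congruent to `k` modulo 24. -/
def QSetMod (k : ℕ) : Set ℕ := {p ∈ QSet | p % 24 = k}

/-!
If `p ≡ 1, 5, 7, 11 (mod 24)`, then `-6` is a square modulo `p`, and one of `p`, `2p` is a norm
`x² + 6y²` from `ℤ[√-6]`. In terms of this representation, `p ∈ 𝒬` if and only if `3 ∣ y`, that is,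
if and only if the cubic ring class character of conductor `3` is trivial on the primes above `p`.
Each of the two ideals of norm `p` therefore has character value `1` or of real part `-1/2`, and the
associated Dirichlet coefficient at `p` is `3 · 1_𝒬(p) - 1`. It is `0` at the other odd primes.

Twist this series by the real characters `χ` modulo `8`. A lattice point count shows that the
partial sums of the coefficients are `O(√N)`, so the twisted `L`-series extend analytically past
`s = 1`. The logarithm of such an `L`-series differs by `O(1)` from the sum over primes; hence that
sum is bounded as `s → 1⁺`, or the `L`-series vanishes at `1` and the sum is at most
`log (s - 1) + O(1)`. The sum over all four `χ` is `12 ∑ p⁻ˢ` over `𝒬₁` minus `4 ∑ p⁻ˢ` over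
`p ≡ 1 (mod 24)`, hence at least `½ log (s - 1) - O(1)`, and this excludes every zero. By
orthogonality, `𝒬ₖ` has one third of the density `1 / 8` of the residue class of `k` modulo `24`.
-/

open Asymptotics MeasureTheory

section EulerProduct

lemma norm_log_one_add_sub_self_le_of_norm_le {u : ℂ} {y : ℝ} (hy : y < 1 / 2)
    (hu : ‖u‖ ≤ y / (1 - y)) : ‖Complex.log (1 + u) - u‖ ≤ y ^ 2 / (1 - 2 * y) := by
  have one_sub_norm : (1 - 2 * y) / (1 - y) ≤ 1 - ‖u‖ := by
    have : (1 - 2 * y) / (1 - y) = 1 - y / (1 - y) := by field [(by linarith : 1 - y ≠ 0)]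
    linarith
  have hpos : 0 < (1 - 2 * y) / (1 - y) := div_pos (by linarith) (by linarith)
  have hnonneg : 0 ≤ (1 - ‖u‖)⁻¹ := inv_nonneg.2 (by linarith)
  calc ‖Complex.log (1 + u) - u‖
      ≤ ‖u‖ ^ 2 * (1 - ‖u‖)⁻¹ / 2 := Complex.norm_log_one_add_sub_self_le (by linarith)
    _ ≤ (y / (1 - y)) ^ 2 * ((1 - 2 * y) / (1 - y))⁻¹ / 2 := by gcongr
    _ = y ^ 2 / (1 - 2 * y) * (1 / (2 * (1 - y))) := by
      field [(by linarith : 1 - y ≠ 0), (by linarith : 1 - 2 * y ≠ 0)]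
    _ ≤ y ^ 2 / (1 - 2 * y) :=
      mul_le_of_le_one_right (div_nonneg (sq_nonneg y) (by linarith))
        ((div_le_one (by linarith)).2 (by linarith))

lemma exists_tsum_eq_exp_add {c : ℕ → ℂ} {y θ : ℝ} (hyθ : y ≤ θ) (hθ : θ < 1 / 2)
    (h0 : c 0 = 1) (hc : ∀ k, ‖c k‖ ≤ y ^ k) :
    ∃ E : ℂ, ‖E‖ ≤ 3 / (1 - 2 * θ) * y ^ 2 ∧ ∑' k, c k = Complex.exp (c 1 + E) := by
  have hy0 : 0 ≤ y := (norm_nonneg _).trans ((hc 1).trans_eq (pow_one y))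
  have hy1 : y < 1 := by linarith
  have hsum : Summable c := .of_norm_bounded (summable_geometric_of_lt_one hy0 hy1) hc
  have norm_tail (m : ℕ) : ‖∑' k, c (k + m)‖ ≤ y ^ m / (1 - y) :=
    tsum_of_norm_bounded ((hasSum_geometric_of_lt_one hy0 hy1).mul_left (y ^ m))
      fun k ↦ (hc (k + m)).trans_eq (by ring)
  have head_one : ∑' k, c k = 1 + ∑' k, c (k + 1) := by rw [hsum.tsum_eq_zero_add, h0]
  have head_two : ∑' k, c (k + 1) = c 1 + ∑' k, c (k + 2) :=
    ((summable_nat_add_iff 1).2 hsum).tsum_eq_zero_add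
  set u := ∑' k, c (k + 1)
  have hu : ‖u‖ ≤ y / (1 - y) := by simpa using norm_tail 1
  refine ⟨Complex.log (1 + u) - c 1, ?_, ?_⟩
  · calc ‖Complex.log (1 + u) - c 1‖
        = ‖(Complex.log (1 + u) - u) + ∑' k, c (k + 2)‖ := by rw [head_two]; ring_nf
      _ ≤ y ^ 2 / (1 - 2 * y) + y ^ 2 / (1 - y) :=
        norm_add_le_of_le (norm_log_one_add_sub_self_le_of_norm_le (by linarith) hu) (norm_tail 2)
      _ ≤ y ^ 2 / (1 - 2 * θ) + y ^ 2 / (1 / 2) := by gcongr <;> linarith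
      _ ≤ 3 / (1 - 2 * θ) * y ^ 2 := by
        have : 1 ≤ 1 / (1 - 2 * θ) := (one_le_div (by linarith)).2 (by linarith)
        have := mul_le_mul_of_nonneg_right this (sq_nonneg y)
        linear_combination 2 * this
  · have hne : 1 + u ≠ 0 := fun h ↦ by
      have hnorm : ‖u‖ = 1 := by rw [← neg_eq_of_add_eq_zero_right h, norm_neg, norm_one]
      rw [hnorm, le_div_iff₀ (by linarith)] at hu
      linarith
    rw [add_sub_cancel, Complex.exp_log hne, head_one]

lemma norm_term_prime_pow_le {f : ℕ → ℂ} {p k : ℕ} {B : ℝ} (hp : p.Prime)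
    (hf : ‖f (p ^ k)‖ ≤ B ^ k) {s : ℂ} (hs : 1 ≤ s.re) :
    ‖LSeries.term f s (p ^ k)‖ ≤ (B / p) ^ k := by
  have hpk : 1 ≤ (p : ℝ) ^ k := one_le_pow₀ (mod_cast hp.one_le)
  have hpow : (p : ℝ) ^ k ≤ ((p : ℝ) ^ k) ^ s.re := by
    simpa using Real.rpow_le_rpow_of_exponent_le hpk hs
  rw [LSeries.norm_term_eq, if_neg (pow_ne_zero k hp.ne_zero), div_pow, Nat.cast_pow]
  have := (norm_nonneg _).trans hf
  gcongr

lemma term_mul_of_coprime {f : ℕ → ℂ} {m n : ℕ} (hf : f (m * n) = f m * f n) (s : ℂ) :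
    LSeries.term f s (m * n) = LSeries.term f s m * LSeries.term f s n := by
  rcases eq_or_ne m 0 with rfl | hm
  · simp
  rcases eq_or_ne n 0 with rfl | hn
  · simp
  rw [LSeries.term_of_ne_zero (mul_ne_zero hm hn), LSeries.term_of_ne_zero hm,
    LSeries.term_of_ne_zero hn, hf, Nat.cast_mul, Complex.natCast_mul_natCast_cpow,
    mul_div_mul_comm]

lemma exists_LSeries_eq_exp_tsum_primes {f : ℕ → ℂ} {B : ℕ → ℝ} {M θ : ℝ} (hθ : θ < 1 / 2)
    (h1 : f 1 = 1) (hmul : ∀ m n, m.Coprime n → f (m * n) = f m * f n)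
    (hBM : ∀ p, p.Prime → B p ≤ M) (hBθ : ∀ p, p.Prime → B p ≤ θ * p)
    (hf : ∀ p k, p.Prime → ‖f (p ^ k)‖ ≤ B p ^ k) :
    ∃ K : ℝ, ∀ s : ℂ, 1 < s.re → LSeriesSummable f s →
      ∃ E : ℂ, ‖E‖ ≤ K ∧
        LSeries f s = Complex.exp (∑' p : Nat.Primes, LSeries.term f s p + E) := by
  have hB0 (p : Nat.Primes) : 0 ≤ B p := (norm_nonneg _).trans (by simpa using hf p 1 p.2)
  have hsq : Summable fun p : Nat.Primes ↦ 3 / (1 - 2 * θ) * (B p / p) ^ 2 := by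
    refine .mul_left _ (.of_nonneg_of_le (fun p ↦ by positivity) (fun p ↦ ?_)
      ((Nat.Primes.summable_rpow.2 (by norm_num : (-2 : ℝ) < -1)).mul_left (M ^ 2)))
    rw [div_pow, div_eq_mul_inv, Real.rpow_neg (by positivity), Real.rpow_two]
    have := hB0 p
    gcongr
    exact hBM p p.2
  refine ⟨∑' p : Nat.Primes, 3 / (1 - 2 * θ) * (B p / p) ^ 2, fun s hs hsum ↦ ?_⟩
  have local_factor (p : Nat.Primes) := exists_tsum_eq_exp_add
    (c := fun k ↦ LSeries.term f s ((p : ℕ) ^ k)) (y := B p / p)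
    ((div_le_iff₀ (mod_cast p.2.pos)).2 (hBθ p p.2)) hθ (by simp [h1])
    fun k ↦ norm_term_prime_pow_le p.2 (hf p k p.2) hs.le
  choose E hE hexp using local_factor
  have hprod := EulerProduct.eulerProduct_hasProd (f := LSeries.term f s) (by simp [h1])
    (fun {m n} h ↦ term_mul_of_coprime (hmul m n h) s) hsum.norm (LSeries.term_zero ..)
  have hterm : Summable fun p : Nat.Primes ↦ LSeries.term f s p :=
    hsum.comp_injective Subtype.val_injective
  have hEsum : Summable E := .of_norm_bounded hsq hE
  refine ⟨∑' p, E p, tsum_of_norm_bounded hsq.hasSum hE, ?_⟩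
  rw [← hterm.tsum_add hEsum]
  refine hprod.unique ?_
  simp only [hexp, pow_one]
  exact (hterm.add hEsum).hasSum.cexp

end EulerProduct

section PrimeSeries

/-- The prime sum `∑ₚ a(p) p⁻ˢ` with coefficients `a`, for a real variable `s`. -/
noncomputable def primeSeries (a : ℕ → ℝ) (s : ℝ) : ℝ :=
  ∑' p : Nat.Primes, a p * (p : ℝ) ^ (-s)

lemma ofReal_primeSeries (a : ℕ → ℝ) (s : ℝ) :
    (primeSeries a s : ℂ) = ∑' p : Nat.Primes, LSeries.term (fun n ↦ (a n : ℂ)) s p := by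
  rw [primeSeries, Complex.ofReal_tsum]
  refine tsum_congr fun p ↦ ?_
  rw [LSeries.term_of_ne_zero p.2.ne_zero, Complex.ofReal_mul,
    Complex.ofReal_cpow (Nat.cast_nonneg _), Complex.ofReal_neg, Complex.ofReal_natCast,
    Complex.cpow_neg, div_eq_mul_inv]

lemma exists_exp_primeSeries_le_norm_LSeries {a : ℕ → ℝ} {B : ℕ → ℝ} {M θ : ℝ} (hθ : θ < 1 / 2)
    (h1 : a 1 = 1) (hmul : ∀ m n, m.Coprime n → a (m * n) = a m * a n)
    (hBM : ∀ p, p.Prime → B p ≤ M) (hBθ : ∀ p, p.Prime → B p ≤ θ * p)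
    (ha : ∀ p k, p.Prime → |a (p ^ k)| ≤ B p ^ k) :
    ∃ K : ℝ, ∀ s : ℝ, 1 < s → LSeriesSummable (fun n ↦ (a n : ℂ)) s →
      Real.exp (primeSeries a s - K) ≤ ‖LSeries (fun n ↦ (a n : ℂ)) s‖ ∧
        ‖LSeries (fun n ↦ (a n : ℂ)) s‖ ≤ Real.exp (primeSeries a s + K) := by
  obtain ⟨K, hK⟩ := exists_LSeries_eq_exp_tsum_primes (f := fun n ↦ (a n : ℂ)) hθ
    (by simp [h1]) (fun m n h ↦ by simp [hmul m n h]) hBM hBθ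
    (fun p k hp ↦ by simpa using ha p k hp)
  refine ⟨K, fun s hs hsum ↦ ?_⟩
  obtain ⟨E, hE, hL⟩ := hK s (by simpa using hs) hsum
  have := abs_le.1 ((Complex.abs_re_le_norm E).trans hE)
  rw [hL, ← ofReal_primeSeries, Complex.norm_exp, Complex.add_re, Complex.ofReal_re]
  constructor <;> gcongr <;> linarith

end PrimeSeries

section Continuation

lemma LSeries_eq_mul_mellin {f : ℕ → ℂ} {r : ℝ} (hr : 0 ≤ r) {s : ℂ} (hs : r < s.re)
    (hf : LSeriesSummable f s)
    (hO : (fun n ↦ ∑ k ∈ Finset.Icc 1 n, f k) =O[atTop] fun n ↦ (n : ℝ) ^ r) :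
    LSeries f s = s * mellin (fun t ↦ ∑ k ∈ Finset.Icc 1 ⌊t⌋₊, f k) (-s) := by
  rw [LSeries_eq_mul_integral f hr hs hf hO, mellin]
  congr 1
  rw [← integral_Ici_eq_integral_Ioi, ← setIntegral_eq_of_subset_of_forall_sdiff_eq_zero
    measurableSet_Ioi (Set.Ici_subset_Ioi.2 one_pos)]
  · refine integral_congr_ae (.of_forall fun t ↦ ?_)
    simp only [smul_eq_mul, neg_add', mul_comm]
  · rintro t ⟨-, ht⟩
    have ht : t < 1 := not_le.1 (Set.mem_Ici.not.1 ht)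
    simp [Nat.floor_eq_zero.2 ht]

lemma differentiableAt_mellin_sum_Icc {f : ℕ → ℂ} {r : ℝ} (hr : 0 ≤ r) {s : ℂ} (hs : r < s.re)
    (hO : (fun n ↦ ∑ k ∈ Finset.Icc 1 n, f k) =O[atTop] fun n ↦ (n : ℝ) ^ r) :
    DifferentiableAt ℂ (mellin fun t ↦ ∑ k ∈ Finset.Icc 1 ⌊t⌋₊, f k) (-s) := by
  have locallyIntegrable := (locallyIntegrableOn_mul_sum_Icc f (m := 1) le_rfl
    ((locallyIntegrable_const (1 : ℂ)).locallyIntegrableOn _)).mono_set Set.Ioi_subset_Ici_self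
  refine mellin_differentiableAt_of_isBigO_rpow (a := -r) (b := -s.re - 1)
    (by simpa using locallyIntegrable) ?_ (by simpa using hs) ?_ (by simp)
  · simpa only [neg_neg, Function.comp_def] using (hO.comp_tendsto tendsto_nat_floor_atTop).trans
      (isEquivalent_nat_floor.isBigO.rpow hr (eventually_ge_atTop 0))
  · refine (isBigO_zero _ _).congr' ?_ .rfl
    filter_upwards [Ioo_mem_nhdsGT zero_lt_one] with t ht
    simp [Nat.floor_eq_zero.2 ht.2]

lemma exists_LSeries_sub_isBigO {f : ℕ → ℂ} {r : ℝ} (hr : 0 ≤ r) (hr1 : r < 1)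
    (hf : ∀ s : ℂ, 1 < s.re → LSeriesSummable f s)
    (hO : (fun n ↦ ∑ k ∈ Finset.Icc 1 n, f k) =O[atTop] fun n ↦ (n : ℝ) ^ r) :
    ∃ l : ℂ, (fun s : ℝ ↦ LSeries f s - l) =O[𝓝[>] 1] fun s ↦ s - 1 := by
  set F : ℂ → ℂ := fun s ↦ s * mellin (fun t ↦ ∑ k ∈ Finset.Icc 1 ⌊t⌋₊, f k) (-s)
  have hF : DifferentiableAt ℂ F 1 :=
    differentiableAt_id.mul ((differentiableAt_mellin_sum_Icc hr (by simpa) hO).comp 1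
      differentiableAt_id.neg)
  have hlim : Tendsto (fun s : ℝ ↦ (s : ℂ)) (𝓝[>] 1) (𝓝 1) :=
    (Complex.continuous_ofReal.tendsto' 1 1 Complex.ofReal_one).mono_left nhdsWithin_le_nhds
  refine ⟨F 1, ((hF.isBigO_sub.comp_tendsto hlim).congr' ?_ .rfl).trans (.of_bound 1 ?_)⟩
  · filter_upwards [self_mem_nhdsWithin] with s hs
    have hs : 1 < (s : ℂ).re := hs
    simp only [Function.comp_apply, F]
    rw [← LSeries_eq_mul_mellin hr (hr1.trans hs) (hf s hs) hO]
  · refine .of_forall fun s ↦ ?_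
    simp [← Complex.ofReal_one, ← Complex.ofReal_sub]

end Continuation

section Dichotomy

lemma tendsto_sub_one_nhdsGT : Tendsto (fun s : ℝ ↦ s - 1) (𝓝[>] 1) (𝓝[>] 0) :=
  tendsto_nhdsWithin_iff.2
    ⟨((continuous_sub_right (1 : ℝ)).tendsto' 1 0 (sub_self 1)).mono_left nhdsWithin_le_nhds,
      eventually_mem_nhdsWithin.mono fun _ hs ↦ Set.mem_Ioi.2 (sub_pos.2 hs)⟩

lemma tendsto_log_sub_one : Tendsto (fun s : ℝ ↦ Real.log (s - 1)) (𝓝[>] 1) atBot :=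
  Real.tendsto_log_nhdsGT_zero.comp tendsto_sub_one_nhdsGT

lemma isBigO_one_or_exists_le_log {P : ℝ → ℝ} {L : ℝ → ℂ} {K : ℝ} {l : ℂ}
    (hL : (fun s ↦ L s - l) =O[𝓝[>] 1] fun s ↦ s - 1)
    (hP : ∀ᶠ s in 𝓝[>] 1, Real.exp (P s - K) ≤ ‖L s‖ ∧ ‖L s‖ ≤ Real.exp (P s + K)) :
    P =O[𝓝[>] 1] (fun _ ↦ (1 : ℝ)) ∨
      ∃ C, ∀ᶠ s in 𝓝[>] 1, P s ≤ Real.log (s - 1) + C := by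
  rcases eq_or_ne l 0 with rfl | hl
  · right
    obtain ⟨C, hC, hCL⟩ := hL.exists_pos
    refine ⟨Real.log C + K, ?_⟩
    filter_upwards [hCL.bound, hP, self_mem_nhdsWithin] with s hs hPs hs1
    have hs1 : 0 < s - 1 := sub_pos.2 hs1
    rw [sub_zero, Real.norm_of_nonneg hs1.le] at hs
    have := (Real.le_log_iff_exp_le (mul_pos hC hs1)).2 (hPs.1.trans hs)
    rw [Real.log_mul hC.ne' hs1.ne'] at this
    linarith
  · left
    have hlim : Tendsto L (𝓝[>] 1) (𝓝 l) := tendsto_sub_nhds_zero_iff.1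
      (hL.trans_tendsto (tendsto_sub_one_nhdsGT.mono_right nhdsWithin_le_nhds))
    have hlog := ((hlim.norm.log (norm_ne_zero_iff.2 hl)).isBigO_one ℝ).norm_left
    refine .trans (.of_bound 1 ?_) (hlog.add (isBigO_const_const |K| one_ne_zero _))
    filter_upwards [hP] with s hPs
    have hpos := (Real.exp_pos _).trans_le hPs.1
    have := (Real.le_log_iff_exp_le hpos).2 hPs.1
    have := (Real.log_le_iff_le_exp hpos).2 hPs.2
    rw [one_mul, Real.norm_eq_abs, Real.norm_of_nonneg (by positivity), Real.norm_eq_abs, abs_le]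
    constructor <;>
      linarith [le_abs_self K, le_abs_self (Real.log ‖L s‖), neg_abs_le (Real.log ‖L s‖)]

lemma forall_isBigO_one_of_le_sum {ι : Type*} [Fintype ι] {P : ι → ℝ → ℝ} {c C : ℝ} (hc : c < 1)
    (hP : ∀ i, P i =O[𝓝[>] 1] (fun _ ↦ (1 : ℝ)) ∨
      ∃ C, ∀ᶠ s in 𝓝[>] 1, P i s ≤ Real.log (s - 1) + C)
    (hsum : ∀ᶠ s in 𝓝[>] 1, c * Real.log (s - 1) - C ≤ ∑ i, P i s) (i : ι) :
    P i =O[𝓝[>] 1] (fun _ ↦ (1 : ℝ)) := by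
  classical
  refine (hP i).resolve_right fun ⟨C₀, hC₀⟩ ↦ ?_
  have upper (j : ι) :
      ∃ C, ∀ᶠ s in 𝓝[>] 1, P j s ≤ (if j = i then Real.log (s - 1) else 0) + C := by
    rcases eq_or_ne j i with rfl | hj
    · exact ⟨C₀, by simpa using hC₀⟩
    simp only [if_neg hj, zero_add]
    rcases hP j with h | ⟨C, hC⟩
    · obtain ⟨C, hC⟩ := h.bound
      exact ⟨C, hC.mono fun s hs ↦ (le_abs_self _).trans (by simpa using hs)⟩
    · refine ⟨C, ?_⟩
      filter_upwards [hC, tendsto_log_sub_one.eventually_le_atBot 0] with s hs hs0 using by linarith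
  choose D hD using upper
  have hlog' := tendsto_log_sub_one.eventually_lt_atBot (-(C + ∑ j, D j) / (1 - c))
  obtain ⟨s, hs, hsD, hslog⟩ := (hsum.and ((eventually_all.2 hD).and hlog')).exists
  have := hs.trans (Finset.sum_le_sum fun j _ ↦ hsD j)
  rw [Finset.sum_add_distrib, Finset.sum_ite_eq' _ i, if_pos (Finset.mem_univ i)] at this
  rw [lt_div_iff₀ (by linarith)] at hslog
  linarith

end Dichotomy

section PrimesInResidueClass

lemma ofReal_primeSeries_eq_LSeries (a : ℕ → ℝ) (s : ℝ) :
    (primeSeries a s : ℂ) = LSeries (fun n ↦ if n.Prime then (a n : ℂ) else 0) s := by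
  rw [ofReal_primeSeries, LSeries]
  refine (tsum_subtype {p : ℕ | p.Prime} _).trans (tsum_congr fun n ↦ ?_)
  rcases eq_or_ne n 0 with rfl | hn
  · simp
  · by_cases h : n.Prime <;> simp [h, LSeries.term_of_ne_zero hn]

open ArithmeticFunction.vonMangoldt (residueClass)

variable {q : ℕ} {a : ZMod q}

/-- The indicator function of the primes in the residue class `a`, complex-valued for use with
`LSeries`. -/
noncomputable def primeResidueIndicator (a : ZMod q) (n : ℕ) : ℂ :=
  if n.Prime then (({m : ℕ | (m : ZMod q) = a}.indicator 1 n : ℝ) : ℂ) else 0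

lemma abscissaOfAbsConv_primeResidueIndicator_le_one (a : ZMod q) :
    LSeries.abscissaOfAbsConv (primeResidueIndicator a) ≤ 1 := by
  refine LSeries.abscissaOfAbsConv_le_of_le_const ⟨1, fun n _ ↦ ?_⟩
  unfold primeResidueIndicator
  by_cases hn : n.Prime <;> by_cases ha : (n : ZMod q) = a <;> simp [hn, ha]

lemma residueClass_sub_logMul_primeResidueIndicator (n : ℕ) :
    (residueClass a n : ℂ) - LSeries.logMul (primeResidueIndicator a) n =
      ((if n.Prime then 0 else residueClass a n : ℝ) : ℂ) := by
  unfold primeResidueIndicator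
  by_cases hn : n.Prime <;> by_cases ha : (n : ZMod q) = a <;>
    simp [hn, ha, ArithmeticFunction.vonMangoldt_apply_prime]

lemma exists_norm_LSeries_residueClass_sub_le (a : ZMod q) :
    ∃ C, ∀ s : ℝ, 1 < s → ‖LSeries (fun n ↦ (residueClass a n : ℂ)) s
      - LSeries (LSeries.logMul (primeResidueIndicator a)) s‖ ≤ C := by
  have hsum := ArithmeticFunction.vonMangoldt.summable_residueClass_non_primes_div a
  refine ⟨∑' n : ℕ, (if n.Prime then 0 else residueClass a n) / n, fun s hs ↦ ?_⟩
  have hs' : (1 : EReal) < (s : ℂ).re := mod_cast hs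
  rw [← LSeries_sub]
  · refine tsum_of_norm_bounded hsum.hasSum fun n ↦ ?_
    have hnonneg : 0 ≤ if n.Prime then 0 else residueClass a n := by
      split_ifs
      exacts [le_rfl, ArithmeticFunction.vonMangoldt.residueClass_nonneg a n]
    rcases eq_or_ne n 0 with rfl | hn
    · simp
    have hpow : (n : ℝ) ≤ (n : ℝ) ^ s := by
      simpa using Real.rpow_le_rpow_of_exponent_le (Nat.one_le_cast.2 (Nat.pos_of_ne_zero hn)) hs.le
    rw [LSeries.norm_term_eq, if_neg hn, Pi.sub_apply,
      residueClass_sub_logMul_primeResidueIndicator, Complex.norm_real,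
      Real.norm_of_nonneg hnonneg, Complex.ofReal_re]
    gcongr
  · exact LSeriesSummable_of_abscissaOfAbsConv_lt_re
      ((ArithmeticFunction.vonMangoldt.abscissaOfAbsConv_residueClass_le_one a).trans_lt hs')
  · exact LSeriesSummable_of_abscissaOfAbsConv_lt_re (LSeries.abscissaOfAbsConv_logMul.trans_lt
      ((abscissaOfAbsConv_primeResidueIndicator_le_one a).trans_lt hs'))

lemma exists_norm_LSeries_residueClass_sub_pole_le [NeZero q] (ha : IsUnit a) :
    ∃ C, ∀ s ∈ Set.Ioc (1 : ℝ) 2, ‖LSeries (fun n ↦ (residueClass a n : ℂ)) s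
      - (q.totient : ℂ)⁻¹ / (s - 1)‖ ≤ C := by
  have hcont : ContinuousOn
      (fun s : ℝ ↦ ArithmeticFunction.vonMangoldt.LFunctionResidueClassAux a s) (Set.Icc 1 2) :=
    (ArithmeticFunction.vonMangoldt.continuousOn_LFunctionResidueClassAux a).comp
      Complex.continuous_ofReal.continuousOn fun s hs ↦ by simpa using hs.1
  obtain ⟨C, hC⟩ := isCompact_Icc.exists_bound_of_continuousOn hcont
  refine ⟨C, fun s hs ↦ ?_⟩
  have := hC s ⟨hs.1.le, hs.2⟩
  rwa [ArithmeticFunction.vonMangoldt.eqOn_LFunctionResidueClassAux ha (by simpa using hs.1)]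
    at this

lemma isBigO_one_of_norm_deriv_le {E : Type*} [NormedAddCommGroup E] [NormedSpace ℝ E]
    {F F' : ℝ → E} {a b C : ℝ} (hab : a < b) (hF : ∀ s ∈ Set.Ioc a b, HasDerivAt F (F' s) s)
    (hF' : ∀ s ∈ Set.Ioc a b, ‖F' s‖ ≤ C) : F =O[𝓝[>] a] (fun _ ↦ (1 : ℝ)) := by
  refine .of_bound (‖F b‖ + C * (b - a)) ?_
  filter_upwards [Ioc_mem_nhdsGT hab] with s hs
  have hC : 0 ≤ C := (norm_nonneg _).trans (hF' s hs)
  have hdist := (convex_Ioc a b).norm_image_sub_le_of_norm_hasDerivWithin_le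
    (fun x hx ↦ (hF x hx).hasDerivWithinAt) hF' (Set.right_mem_Ioc.2 hab) hs
  rw [norm_one, mul_one]
  calc ‖F s‖ ≤ ‖F b‖ + ‖F s - F b‖ := norm_le_norm_add_norm_sub' _ _
    _ ≤ ‖F b‖ + C * (b - a) := by
      gcongr
      refine hdist.trans (mul_le_mul_of_nonneg_left ?_ hC)
      rw [Real.norm_eq_abs, abs_le]
      constructor <;> linarith [hs.1, hs.2]

theorem primeSeries_residueClass_add_log_isBigO [NeZero q] (ha : IsUnit a) :
    (fun s ↦ primeSeries ({n : ℕ | (n : ZMod q) = a}.indicator 1) s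
      + (q.totient : ℝ)⁻¹ * Real.log (s - 1)) =O[𝓝[>] 1] fun _ ↦ (1 : ℝ) := by
  obtain ⟨C₁, hC₁⟩ := exists_norm_LSeries_residueClass_sub_le a
  obtain ⟨C₂, hC₂⟩ := exists_norm_LSeries_residueClass_sub_pole_le ha
  set G : ℝ → ℂ := fun s ↦ LSeries (primeResidueIndicator a) s
    + ((q.totient : ℝ)⁻¹ * Real.log (s - 1) : ℝ)
  set G' : ℝ → ℂ := fun s ↦ -LSeries (LSeries.logMul (primeResidueIndicator a)) s
    + (q.totient : ℂ)⁻¹ / (s - 1)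
  have hderiv : ∀ s ∈ Set.Ioc (1 : ℝ) 2, HasDerivAt G (G' s) s := by
    intro s hs
    have hL := (LSeries_hasDerivAt ((abscissaOfAbsConv_primeResidueIndicator_le_one a).trans_lt
      (show (1 : EReal) < (s : ℂ).re from mod_cast hs.1))).comp_ofReal
    have hlog := ((((hasDerivAt_id s).sub_const 1).log (sub_ne_zero.2 hs.1.ne')).const_mul
      (q.totient : ℝ)⁻¹).ofReal_comp
    exact (hL.add hlog).congr_deriv (by simp [G', div_eq_mul_inv])
  have hbound : ∀ s ∈ Set.Ioc (1 : ℝ) 2, ‖G' s‖ ≤ C₁ + C₂ := fun s hs ↦ by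
    have := norm_sub_le_of_le (hC₁ s hs.1) (hC₂ s hs)
    rwa [sub_sub_sub_cancel_left, sub_eq_neg_add] at this
  refine ((isBigO_one_of_norm_deriv_le one_lt_two hderiv hbound).norm_left.congr_left
    fun s ↦ ?_).of_norm_left
  rw [← Complex.norm_real, Complex.ofReal_add, ofReal_primeSeries_eq_LSeries]
  rfl

end PrimesInResidueClass

section DirichletDensity

variable {S : Set ℕ} {δ : ℝ}

lemma primeSeries_indicator_one (hS : ∀ p ∈ S, p.Prime) (s : ℝ) :
    primeSeries (S.indicator 1) s = ∑' p : S, (p : ℝ) ^ (-s) := by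
  rw [primeSeries]
  refine (tsum_subtype {p : ℕ | p.Prime} fun n ↦ S.indicator 1 n * (n : ℝ) ^ (-s)).trans
    (.trans (tsum_congr fun n ↦ ?_) (tsum_subtype S fun n ↦ (n : ℝ) ^ (-s)).symm)
  by_cases hn : n ∈ S
  · simp [hn, hS n hn]
  · simp [hn]

lemma tendsto_div_neg_log {P : ℝ → ℝ}
    (hP : (fun s ↦ P s + δ * Real.log (s - 1)) =O[𝓝[>] 1] fun _ ↦ (1 : ℝ)) :
    Tendsto (fun s ↦ P s / -Real.log (s - 1)) (𝓝[>] 1) (𝓝 δ) := by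
  have hlog : Tendsto (fun s ↦ -Real.log (s - 1)) (𝓝[>] 1) atTop :=
    tendsto_neg_atBot_atTop.comp tendsto_log_sub_one
  have herr := (hP.trans_isLittleO ((isLittleO_one_left_iff ℝ).2
    (tendsto_norm_atTop_atTop.comp hlog))).tendsto_div_nhds_zero
  refine ((herr.add_const δ).congr' ?_).trans (by rw [zero_add])
  filter_upwards [hlog.eventually_ne_atTop 0] with s hs
  rw [add_div, mul_div_assoc, div_neg, div_neg, div_self (neg_ne_zero.1 hs)]
  ring

lemma primeSeries_one_add_log_isBigO :
    (fun s ↦ (∑' p : {n : ℕ // n.Prime}, ((p : ℕ) : ℝ) ^ (-s)) + 1 * Real.log (s - 1))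
      =O[𝓝[>] 1] fun _ ↦ (1 : ℝ) := by
  have h := primeSeries_residueClass_add_log_isBigO (q := 1) isUnit_one
  have huniv : {n : ℕ | (n : ZMod 1) = 1} = Set.univ :=
    Set.eq_univ_of_forall fun n ↦ Subsingleton.elim _ _
  simp only [huniv, Set.indicator_univ, Nat.totient_one, Nat.cast_one, inv_one] at h
  refine h.congr_left fun s ↦ ?_
  simp only [primeSeries, Pi.one_apply, one_mul]
  rfl

theorem tendsto_tsum_div_tsum_primes (hS : ∀ p ∈ S, p.Prime)
    (h : (fun s ↦ primeSeries (S.indicator 1) s + δ * Real.log (s - 1))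
      =O[𝓝[>] 1] fun _ ↦ (1 : ℝ)) :
    Tendsto (fun s : ℝ ↦ (∑' p : S, ((p : ℕ) : ℝ) ^ (-s)) /
      ∑' p : {n : ℕ // n.Prime}, ((p : ℕ) : ℝ) ^ (-s)) (𝓝[>] 1) (𝓝 δ) := by
  have hnum := tendsto_div_neg_log h
  have hden := tendsto_div_neg_log primeSeries_one_add_log_isBigO
  refine ((hnum.div hden one_ne_zero).congr' ?_).trans (by rw [div_one])
  filter_upwards [tendsto_log_sub_one.eventually_ne_atBot 0] with s hs
  rw [Pi.div_apply, div_div_div_cancel_right₀ (neg_ne_zero.2 hs), primeSeries_indicator_one hS]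

theorem infinite_of_primeSeries_add_log_isBigO (hS : ∀ p ∈ S, p.Prime) (hδ : δ ≠ 0)
    (h : (fun s ↦ primeSeries (S.indicator 1) s + δ * Real.log (s - 1))
      =O[𝓝[>] 1] fun _ ↦ (1 : ℝ)) : S.Infinite := by
  intro hfin
  have := hfin.fintype
  have hbound : (fun s ↦ primeSeries (S.indicator 1) s) =O[𝓝[>] 1] fun _ ↦ (1 : ℝ) := by
    simp only [primeSeries_indicator_one hS, tsum_fintype]
    refine .fun_sum fun p _ ↦ Tendsto.isBigO_one ℝ (c := (p : ℝ) ^ (-1 : ℝ)) ?_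
    have hp : (p : ℝ) ≠ 0 := Nat.cast_ne_zero.2 (hS p p.2).ne_zero
    exact (tendsto_const_nhds.rpow (continuous_neg.tendsto 1) (.inl hp)).mono_left
      nhdsWithin_le_nhds
  exact hδ (tendsto_nhds_unique (tendsto_div_neg_log h)
    (tendsto_div_neg_log (δ := 0) (by simpa using hbound)))

end DirichletDensity

/-- The recursion at `p` satisfied by the coefficients of a Dirichlet series whose Euler factor
at `p` is `(1 - α p⁻ˢ + κ p⁻²ˢ)⁻¹`. -/
structure HeckeRecursion {R : Type*} [CommRing R] (c : ℕ → R) (p : ℕ) (α κ : R) : Prop where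
  mul_of_not_dvd : ∀ n, ¬p ∣ n → c (p * n) = α * c n
  mul_mul_self : ∀ n, c (p * (p * n)) = α * c (p * n) - κ * c n

namespace HeckeRecursion

variable {R : Type*} [CommRing R] {c : ℕ → R} {p : ℕ} {α κ : R}

lemma twist (h : HeckeRecursion c p α κ) (ε : ℕ →* R) :
    HeckeRecursion (fun n ↦ ε n * c n) p (ε p * α) (ε p ^ 2 * κ) where
  mul_of_not_dvd n hn := by
    rw [h.mul_of_not_dvd n hn, map_mul]
    ring
  mul_mul_self n := by
    rw [h.mul_mul_self n, map_mul, map_mul]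
    ring

lemma map_prime (h : HeckeRecursion c p α κ) (h1 : c 1 = 1) (hp : p.Prime) : c p = α := by
  simpa [h1] using h.mul_of_not_dvd 1 hp.not_dvd_one

lemma map_pow_mul (h : HeckeRecursion c p α κ) (h1 : c 1 = 1) (hp : p.Prime) {n : ℕ}
    (hn : ¬p ∣ n) (k : ℕ) : c (p ^ k * n) = c (p ^ k) * c n := by
  induction k using Nat.twoStepInduction with
  | zero => simp [h1]
  | one => rw [pow_one, h.mul_of_not_dvd n hn, h.map_prime h1 hp]
  | more k ih ih' =>
    have hpow : p ^ (k + 2) = p * (p * p ^ k) := by ring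
    have hsucc : p ^ (k + 1) = p * p ^ k := pow_succ' p k
    rw [hsucc, mul_assoc] at ih'
    rw [hpow, mul_assoc, mul_assoc, h.mul_mul_self, h.mul_mul_self, ih, ih']
    ring

lemma map_mul_of_coprime (h : ∀ p, p.Prime → ∃ α κ, HeckeRecursion c p α κ) (h1 : c 1 = 1)
    (m n : ℕ) (hmn : m.Coprime n) : c (m * n) = c m * c n := by
  induction m using Nat.recOnPrimePow with
  | zero => simp [(Nat.coprime_zero_left n).1 hmn, h1]
  | one => simp [h1]
  | prime_pow_mul a p k hp hpa hk ih =>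
    obtain ⟨α, κ, hc⟩ := h p hp
    have hpn : ¬p ∣ n := (Nat.Prime.coprime_iff_not_dvd hp).1
      (hmn.coprime_dvd_left ((dvd_pow_self p hk.ne').mul_right a))
    rw [mul_assoc, hc.map_pow_mul h1 hp (hp.not_dvd_mul hpa hpn), hc.map_pow_mul h1 hp hpa,
      ih (hmn.coprime_dvd_left (dvd_mul_left a _)), mul_assoc]

lemma abs_map_pow_le {c : ℕ → ℝ} {α κ B : ℝ} (h : HeckeRecursion c p α κ) (h1 : c 1 = 1)
    (hp : p.Prime) (hB : |α| ≤ B) (hακ : |α| * B + |κ| ≤ B ^ 2) (k : ℕ) :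
    |c (p ^ k)| ≤ B ^ k := by
  have hB0 : 0 ≤ B := (abs_nonneg α).trans hB
  induction k using Nat.twoStepInduction with
  | zero => simp [h1]
  | one => rwa [pow_one, pow_one, h.map_prime h1 hp]
  | more k ih ih' =>
    have hpow : p ^ (k + 2) = p * (p * p ^ k) := by ring
    rw [pow_succ'] at ih'
    rw [hpow, h.mul_mul_self]
    calc |α * c (p * p ^ k) - κ * c (p ^ k)|
        ≤ |α| * B ^ (k + 1) + |κ| * B ^ k := by
          refine (abs_sub _ _).trans ?_
          rw [abs_mul, abs_mul]
          gcongr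
      _ = (|α| * B + |κ|) * B ^ k := by ring
      _ ≤ B ^ 2 * B ^ k := by gcongr
      _ = B ^ (k + 2) := by ring

end HeckeRecursion

section NormForm

lemma norm_eq_sq_add_six_mul_sq (z : ℤ√(-6)) : z.norm = z.re ^ 2 + 6 * z.im ^ 2 := by
  rw [Zsqrtd.norm_def]
  ring

/-- The elements of `ℤ[√-6]` of norm `n`. -/
noncomputable def elementsOfNorm (n : ℕ) : Finset (ℤ√(-6)) :=
  {z ∈ (Finset.Icc (-n : ℤ) n ×ˢ Finset.Icc (-n : ℤ) n).image fun v ↦ ⟨v.1, v.2⟩ | z.norm = n}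

lemma mem_Icc_neg_self_of_sq_le {x : ℤ} {n : ℕ} (h : x ^ 2 ≤ n) :
    x ∈ Finset.Icc (-n : ℤ) n := by
  rw [Finset.mem_Icc]
  constructor <;> nlinarith

@[simp]
lemma mem_elementsOfNorm {n : ℕ} {z : ℤ√(-6)} : z ∈ elementsOfNorm n ↔ z.norm = n := by
  simp only [elementsOfNorm, Finset.mem_filter, Finset.mem_image, Finset.mem_product,
    and_iff_right_iff_imp]
  intro h
  rw [norm_eq_sq_add_six_mul_sq] at h
  exact ⟨(z.re, z.im), ⟨mem_Icc_neg_self_of_sq_le (by nlinarith [sq_nonneg z.im]),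
    mem_Icc_neg_self_of_sq_le (by nlinarith [sq_nonneg z.re, sq_nonneg z.im])⟩, rfl⟩

/-- The trace of the cubic character `a + b√-6 ↦ ω ^ (b / a)` of `(ℤ[√-6] / 3)ˣ`, extended by
zero to elements that are not prime to `3`. -/
def cubicTrace (z : ℤ√(-6)) : ℤ :=
  if (z.re : ZMod 3) = 0 then 0 else if (z.im : ZMod 3) = 0 then 2 else -1

lemma cubicTrace_mul_cubicTrace (z w : ℤ√(-6)) :
    cubicTrace z * cubicTrace w = cubicTrace (z * w) + cubicTrace (star z * w) := by
  simp only [cubicTrace, Zsqrtd.re_mul, Zsqrtd.im_mul, Zsqrtd.re_star, Zsqrtd.im_star]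
  push_cast
  generalize (z.re : ZMod 3) = a
  generalize (z.im : ZMod 3) = b
  generalize (w.re : ZMod 3) = c
  generalize (w.im : ZMod 3) = d
  revert a b c d
  decide

lemma cubicTrace_intCast_mul {c : ℤ} (hc : (c : ZMod 3) ≠ 0) (z : ℤ√(-6)) :
    cubicTrace (c * z) = cubicTrace z := by
  have : Fact (Nat.Prime 3) := ⟨Nat.prime_three⟩
  simp [cubicTrace, hc]

lemma cubicTrace_eq_zero_of_three_dvd_norm {z : ℤ√(-6)} (h : 3 ∣ z.norm) : cubicTrace z = 0 := by
  have hre : (z.re : ZMod 3) = 0 := by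
    have hsq : 3 ∣ z.re ^ 2 := by
      rw [norm_eq_sq_add_six_mul_sq] at h
      omega
    exact (ZMod.intCast_zmod_eq_zero_iff_dvd _ 3).2 (Int.prime_three.dvd_of_dvd_pow hsq)
  exact if_pos hre

/-- The number of elements of norm `n`, weighted by `cubicTrace`. -/
noncomputable def traceSum (n : ℕ) : ℤ := ∑ z ∈ elementsOfNorm n, cubicTrace z

lemma sum_filter_dvd_elementsOfNorm {z : ℤ√(-6)} {m : ℕ} (hz : z.norm = m) (hm : m ≠ 0) (n : ℕ)
    [DecidablePred (z ∣ ·)] :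
    ∑ u ∈ elementsOfNorm (m * n) with z ∣ u, cubicTrace u =
      ∑ w ∈ elementsOfNorm n, cubicTrace (z * w) := by
  have hm' : (m : ℤ) ≠ 0 := mod_cast hm
  symm
  refine Finset.sum_nbij (z * ·) (fun w hw ↦ ?_) (fun w _ w' _ h ↦ ?_) (fun u hu ↦ ?_)
    fun _ _ ↦ rfl
  · simp_all [Zsqrtd.norm_mul]
  · have key (v : ℤ√(-6)) : ((m : ℤ) : ℤ√(-6)) * v = star z * (z * v) := by
      rw [← hz, Zsqrtd.norm_eq_mul_conj]
      ring
    refine Zsqrtd.eq_of_smul_eq_smul_left hm' ?_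
    rw [key, key]
    exact congrArg _ h
  · obtain ⟨hu, w, rfl⟩ : u.norm = (m * n : ℕ) ∧ z ∣ u := by simpa using hu
    refine ⟨w, ?_, rfl⟩
    rw [Zsqrtd.norm_mul, hz, Nat.cast_mul] at hu
    simpa using mul_left_cancel₀ hm' hu

lemma sum_filter_natCast_dvd_elementsOfNorm {c : ℕ} (hc : (c : ZMod 3) ≠ 0) (n : ℕ)
    [DecidablePred ((c : ℤ√(-6)) ∣ ·)] :
    ∑ u ∈ elementsOfNorm (c * c * n) with (c : ℤ√(-6)) ∣ u, cubicTrace u = traceSum n := by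
  have hc0 : c ≠ 0 := by
    rintro rfl
    simp at hc
  rw [sum_filter_dvd_elementsOfNorm (by simp) (mul_ne_zero hc0 hc0)]
  exact Finset.sum_congr rfl fun w _ ↦ mod_cast cubicTrace_intCast_mul (c := c) (by simpa) w

lemma two_dvd_of_four_dvd_norm {z : ℤ√(-6)} (h : 4 ∣ z.norm) : 2 ∣ z := by
  rw [norm_eq_sq_add_six_mul_sq] at h
  have hre : Even z.re := by
    have : Even (z.re ^ 2) := by rw [Int.even_iff]; omega
    exact (Int.even_pow.1 this).1
  have him : Even z.im := by
    obtain ⟨a, ha⟩ := hre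
    have : Even (z.im ^ 2) := by
      rw [ha, show (a + a) ^ 2 = 4 * a ^ 2 by ring] at h
      rw [Int.even_iff]
      omega
    exact (Int.even_pow.1 this).1
  exact (Zsqrtd.intCast_dvd 2 z).2 ⟨hre.two_dvd, him.two_dvd⟩

lemma traceSum_four_mul (n : ℕ) : traceSum (4 * n) = traceSum n := by
  classical
  have hdvd : ∀ u ∈ elementsOfNorm (2 * 2 * n), ((2 : ℕ) : ℤ√(-6)) ∣ u := fun u hu ↦
    two_dvd_of_four_dvd_norm ⟨n, by simpa using hu⟩
  rw [← sum_filter_natCast_dvd_elementsOfNorm (c := 2) (by decide) n,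
    Finset.filter_true_of_mem hdvd, traceSum]

end NormForm

section Hecke

variable {p e : ℕ} {z u : ℤ√(-6)}

lemma not_dvd_two_mul (h6 : p.Coprime 6) {n : ℕ} (hn : ¬p ∣ n) : ¬p ∣ 2 * n :=
  fun h ↦ hn ((h6.coprime_dvd_right (by decide)).dvd_of_dvd_mul_left h)

lemma natCast_zmod_three_ne_zero (h6 : p.Coprime 6) : (p : ZMod 3) ≠ 0 :=
  ((ZMod.isUnit_iff_coprime p 3).2 (h6.coprime_dvd_right (by decide))).ne_zero

lemma not_dvd_re_of_norm_eq_mul_prime (hp : p.Prime) (h6 : p.Coprime 6) (he : e = 1 ∨ e = 2)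
    (hz : z.norm = (e * p : ℕ)) : ¬(p : ℤ) ∣ z.re := by
  intro hre
  have hpe : ¬p ∣ e := by
    rcases he with rfl | rfl
    · exact hp.not_dvd_one
    · exact not_dvd_two_mul h6 hp.not_dvd_one
  have hre2 : (p : ℤ) ^ 2 ∣ z.re ^ 2 := pow_dvd_pow_of_dvd hre 2
  rw [norm_eq_sq_add_six_mul_sq, Nat.cast_mul] at hz
  have him : (p : ℤ) ∣ z.im := by
    have : (p : ℤ) ∣ 6 * z.im ^ 2 :=
      (dvd_add_right ((dvd_pow_self _ two_ne_zero).trans hre2)).1 (hz ▸ dvd_mul_left _ _)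
    exact Int.Prime.dvd_pow' hp
      ((Nat.isCoprime_iff_coprime (n := 6).2 h6).dvd_of_dvd_mul_left this)
  have : (p : ℤ) * p ∣ e * p := by
    rw [← hz, ← sq]
    exact dvd_add hre2 ((pow_dvd_pow_of_dvd him 2).mul_left 6)
  exact hpe (mod_cast Int.dvd_of_mul_dvd_mul_right (mod_cast hp.ne_zero) this)

lemma dvd_iff_natCast_dvd_star_mul (hp : p.Prime) (he : e = 1 ∨ e = 2)
    (hz : z.norm = (e * p : ℕ)) (hu : z.norm ∣ u.norm) : z ∣ u ↔ (p : ℤ√(-6)) ∣ star z * u := by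
  have hp0 : (p : ℤ) ≠ 0 := mod_cast hp.ne_zero
  have hzz : star z * z = e * p := by
    rw [mul_comm, ← Zsqrtd.norm_eq_mul_conj, hz]
    push_cast
    rfl
  constructor
  · rintro ⟨w, rfl⟩
    rw [← mul_assoc, hzz]
    exact (dvd_mul_left _ _).mul_right w
  · rintro ⟨v, hv⟩
    have heu : e * u = z * v := by
      refine Zsqrtd.eq_of_smul_eq_smul_left hp0 ?_
      push_cast
      linear_combination z * hv - u * hzz
    rcases he with rfl | rfl
    · exact ⟨v, by simpa using heu⟩
    · obtain ⟨n, hn⟩ := hu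
      have hnorm : 4 ∣ v.norm := by
        have := congrArg Zsqrtd.norm heu
        rw [Zsqrtd.norm_mul, Zsqrtd.norm_mul, hn, Zsqrtd.norm_natCast] at this
        have hz0 : z.norm ≠ 0 := by
          rw [hz]
          exact mod_cast mul_ne_zero two_ne_zero hp.ne_zero
        exact ⟨n, mul_left_cancel₀ hz0 (by linear_combination -this)⟩
      obtain ⟨w, rfl⟩ := two_dvd_of_four_dvd_norm hnorm
      refine ⟨w, Zsqrtd.eq_of_smul_eq_smul_left (a := 2) two_ne_zero ?_⟩
      push_cast at heu ⊢
      linear_combination heu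

lemma natCast_dvd_of_dvd_im_of_dvd_norm (hp : p.Prime) (him : (p : ℤ) ∣ u.im)
    (hnorm : (p : ℤ) ∣ u.norm) : (p : ℤ√(-6)) ∣ u := by
  have hre : (p : ℤ) ∣ u.re ^ 2 := by
    rw [norm_eq_sq_add_six_mul_sq] at hnorm
    exact (dvd_add_left ((dvd_pow him two_ne_zero).mul_left 6)).1 hnorm
  exact mod_cast (Zsqrtd.intCast_dvd p u).2 ⟨Int.Prime.dvd_pow' hp hre, him⟩

lemma natCast_dvd_mul_or_star_mul (hp : p.Prime) (hz : (p : ℤ) ∣ z.norm)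
    (hu : (p : ℤ) ∣ u.norm) : (p : ℤ√(-6)) ∣ z * u ∨ (p : ℤ√(-6)) ∣ star z * u := by
  have him : (p : ℤ) ∣ (z * u).im * (star z * u).im := by
    have : (z * u).im * (star z * u).im = z.norm * u.im ^ 2 - z.im ^ 2 * u.norm := by
      simp only [norm_eq_sq_add_six_mul_sq, Zsqrtd.im_mul, Zsqrtd.re_star, Zsqrtd.im_star]
      ring
    rw [this]
    exact dvd_sub (hz.mul_right _) (hu.mul_left _)
  refine (Int.Prime.dvd_mul' hp him).imp (fun h ↦ ?_) fun h ↦ ?_ <;>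
    refine natCast_dvd_of_dvd_im_of_dvd_norm hp h ?_ <;>
    exact Zsqrtd.norm_mul _ _ ▸ hu.mul_left _

lemma natCast_dvd_mul_and_star_mul_iff (hp : p.Prime) (h2 : p ≠ 2) (hre : ¬(p : ℤ) ∣ z.re) :
    (p : ℤ√(-6)) ∣ z * u ∧ (p : ℤ√(-6)) ∣ star z * u ↔ (p : ℤ√(-6)) ∣ u := by
  refine ⟨fun ⟨h, h'⟩ ↦ ?_, fun h ↦ ⟨h.mul_left _, h.mul_left _⟩⟩
  have hsum : ((p : ℤ) : ℤ√(-6)) ∣ ((2 * z.re : ℤ) : ℤ√(-6)) * u := by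
    have : ((2 * z.re : ℤ) : ℤ√(-6)) = z + star z := by
      ext <;> simp [two_mul]
    rw [this, add_mul]
    exact mod_cast dvd_add h h'
  have hcop : IsCoprime (p : ℤ) (2 * z.re) :=
    ((Nat.prime_iff_prime_int.1 hp).coprime_iff_not_dvd.2 fun h ↦
      (Int.Prime.dvd_mul' hp h).elim
        (fun h ↦ h2 ((Nat.prime_dvd_prime_iff_eq hp Nat.prime_two).1 (mod_cast h))) hre)
  rw [Zsqrtd.intCast_dvd, Zsqrtd.re_smul, Zsqrtd.im_smul] at hsum
  exact mod_cast (Zsqrtd.intCast_dvd p u).2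
    ⟨hcop.dvd_of_dvd_mul_left hsum.1, hcop.dvd_of_dvd_mul_left hsum.2⟩

lemma star_dvd_iff_natCast_dvd_mul (hp : p.Prime) (he : e = 1 ∨ e = 2)
    (hz : z.norm = (e * p : ℕ)) (hu : z.norm ∣ u.norm) : star z ∣ u ↔ (p : ℤ√(-6)) ∣ z * u := by
  rw [dvd_iff_natCast_dvd_star_mul hp he (by rw [Zsqrtd.norm_conj, hz])
    (by rwa [Zsqrtd.norm_conj]), star_star]

lemma dvd_or_star_dvd (hp : p.Prime) (he : e = 1 ∨ e = 2) (hz : z.norm = (e * p : ℕ))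
    (hu : z.norm ∣ u.norm) : z ∣ u ∨ star z ∣ u := by
  have hpz : (p : ℤ) ∣ z.norm := hz ▸ (mod_cast dvd_mul_left p e)
  rw [dvd_iff_natCast_dvd_star_mul hp he hz hu, star_dvd_iff_natCast_dvd_mul hp he hz hu, or_comm]
  exact natCast_dvd_mul_or_star_mul hp hpz (hpz.trans hu)

lemma dvd_and_star_dvd_iff (hp : p.Prime) (h6 : p.Coprime 6) (he : e = 1 ∨ e = 2)
    (hz : z.norm = (e * p : ℕ)) (hu : z.norm ∣ u.norm) :
    z ∣ u ∧ star z ∣ u ↔ (p : ℤ√(-6)) ∣ u := by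
  have h2 : p ≠ 2 := by
    rintro rfl
    exact absurd h6 (by decide)
  rw [dvd_iff_natCast_dvd_star_mul hp he hz hu, star_dvd_iff_natCast_dvd_mul hp he hz hu, and_comm]
  exact natCast_dvd_mul_and_star_mul_iff hp h2 (not_dvd_re_of_norm_eq_mul_prime hp h6 he hz)

lemma cubicTrace_mul_traceSum (hp : p.Prime) (h6 : p.Coprime 6) (he : e = 1 ∨ e = 2)
    (hz : z.norm = (e * p : ℕ)) (n : ℕ) [DecidablePred ((p : ℤ√(-6)) ∣ ·)] :
    cubicTrace z * traceSum n = traceSum (e * p * n) +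
      ∑ u ∈ elementsOfNorm (e * p * n) with (p : ℤ√(-6)) ∣ u, cubicTrace u := by
  classical
  have hep : e * p ≠ 0 := mul_ne_zero (by omega) hp.ne_zero
  have hz' : (star z).norm = (e * p : ℕ) := by rw [Zsqrtd.norm_conj, hz]
  have hnorm : ∀ u ∈ elementsOfNorm (e * p * n), z.norm ∣ u.norm := fun u hu ↦
    ⟨n, by simpa [hz] using hu⟩
  have hsum := Finset.sum_union_inter (f := cubicTrace)
    (s₁ := {u ∈ elementsOfNorm (e * p * n) | z ∣ u})
    (s₂ := {u ∈ elementsOfNorm (e * p * n) | star z ∣ u})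
  rw [← Finset.filter_or, ← Finset.filter_and,
    Finset.filter_true_of_mem fun u hu ↦ dvd_or_star_dvd hp he hz (hnorm u hu),
    Finset.filter_congr fun u hu ↦ dvd_and_star_dvd_iff hp h6 he hz (hnorm u hu),
    sum_filter_dvd_elementsOfNorm hz hep, sum_filter_dvd_elementsOfNorm hz' hep,
    ← Finset.sum_add_distrib] at hsum
  rw [traceSum, traceSum, hsum, Finset.mul_sum]
  exact Finset.sum_congr rfl fun w _ ↦ cubicTrace_mul_cubicTrace z w

lemma traceSum_mul_of_not_dvd (hp : p.Prime) (h6 : p.Coprime 6) (he : e = 1 ∨ e = 2)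
    (hz : z.norm = (e * p : ℕ)) {n : ℕ} (hn : ¬p ∣ e * n) :
    traceSum (e * p * n) = cubicTrace z * traceSum n := by
  classical
  rw [cubicTrace_mul_traceSum hp h6 he hz, Finset.filter_false_of_mem, Finset.sum_empty, add_zero]
  rintro u hu ⟨v, rfl⟩
  have hp0 : (p : ℤ) ≠ 0 := mod_cast hp.ne_zero
  rw [mem_elementsOfNorm, Zsqrtd.norm_mul, Zsqrtd.norm_natCast] at hu
  push_cast at hu
  have : (p : ℤ) * v.norm = e * n := mul_left_cancel₀ hp0 (by linear_combination hu)
  exact hn (by exact_mod_cast Dvd.intro _ this)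

lemma traceSum_mul_mul_self (hp : p.Prime) (h6 : p.Coprime 6) (he : e = 1 ∨ e = 2)
    (hz : z.norm = (e * p : ℕ)) (n : ℕ) :
    traceSum (e * p * (p * n)) = cubicTrace z * traceSum (p * n) - traceSum (e * n) := by
  classical
  rw [cubicTrace_mul_traceSum hp h6 he hz, show e * p * (p * n) = p * p * (e * n) by ring,
    sum_filter_natCast_dvd_elementsOfNorm (natCast_zmod_three_ne_zero h6)]
  ring

lemma natCast_dvd_of_not_isSquare (hp : p.Prime) (hsq : ¬IsSquare (-6 : ZMod p))
    (hu : (p : ℤ) ∣ u.norm) : (p : ℤ√(-6)) ∣ u := by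
  have : Fact p.Prime := ⟨hp⟩
  refine natCast_dvd_of_dvd_im_of_dvd_norm hp (by_contra fun him ↦ hsq ?_) hu
  rw [← ZMod.intCast_zmod_eq_zero_iff_dvd] at him
  rw [norm_eq_sq_add_six_mul_sq, ← ZMod.intCast_zmod_eq_zero_iff_dvd] at hu
  push_cast at hu
  refine ⟨u.re / u.im, ?_⟩
  field_simp
  linear_combination -hu

lemma traceSum_mul_of_not_isSquare (hp : p.Prime) (hsq : ¬IsSquare (-6 : ZMod p)) {n : ℕ}
    (hn : ¬p ∣ n) : traceSum (p * n) = 0 := by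
  refine Finset.sum_eq_zero fun u hu ↦ ?_
  have hp0 : (p : ℤ) ≠ 0 := mod_cast hp.ne_zero
  rw [mem_elementsOfNorm, Nat.cast_mul] at hu
  obtain ⟨v, rfl⟩ := natCast_dvd_of_not_isSquare hp hsq (Dvd.intro _ hu.symm)
  rw [Zsqrtd.norm_mul, Zsqrtd.norm_natCast, mul_assoc] at hu
  exact absurd (by exact_mod_cast Dvd.intro _ (mul_left_cancel₀ hp0 hu)) hn

lemma traceSum_mul_mul_self_of_not_isSquare (hp : p.Prime) (h6 : p.Coprime 6)
    (hsq : ¬IsSquare (-6 : ZMod p)) (n : ℕ) : traceSum (p * (p * n)) = traceSum n := by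
  classical
  have hdvd : ∀ u ∈ elementsOfNorm (p * p * n), (p : ℤ√(-6)) ∣ u := fun u hu ↦
    natCast_dvd_of_not_isSquare hp hsq ⟨p * n, by simpa [mul_assoc] using hu⟩
  rw [← sum_filter_natCast_dvd_elementsOfNorm (natCast_zmod_three_ne_zero h6) n,
    Finset.filter_true_of_mem hdvd, traceSum, mul_assoc]

lemma traceSum_three_mul (n : ℕ) : traceSum (3 * n) = 0 := Finset.sum_eq_zero fun u hu ↦ by
  rw [mem_elementsOfNorm, Nat.cast_mul] at hu
  exact cubicTrace_eq_zero_of_three_dvd_norm (Dvd.intro _ hu.symm)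

end Hecke

section RingClassCoeff

/-- The `n`-th coefficient of the Dirichlet series of a cubic ring class character `ψ` of conductor
`3` of `ℚ(√-6)`. Writing `𝔭` for the prime above `2`, an ideal of norm `n` is either `(z)` with
`N z = n` or `𝔭⁻¹(z)` with `N z = 2 n`; each is counted for `±z`, and once for each of `ψ`, `ψ⁻¹`,
whence the factor `1 / 4`. -/
noncomputable def ringClassCoeff (n : ℕ) : ℝ := (traceSum n + traceSum (2 * n)) / 4

lemma ringClassCoeff_one : ringClassCoeff 1 = 1 := by
  have h1 : traceSum 1 = 4 := by decide +kernel
  have h2 : traceSum (2 * 1) = 0 := by decide +kernel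
  norm_num [ringClassCoeff, h1, h2]

variable {p : ℕ}

lemma heckeRecursion_of_norm_eq (hp : p.Prime) (h6 : p.Coprime 6) {z : ℤ√(-6)}
    (hz : z.norm = p ∨ z.norm = 2 * p) : HeckeRecursion ringClassCoeff p (cubicTrace z) 1 := by
  rcases hz with hz | hz
  · have hz' : z.norm = (1 * p : ℕ) := by simpa using hz
    refine ⟨fun n hn ↦ ?_, fun n ↦ ?_⟩
    · have h := traceSum_mul_of_not_dvd hp h6 (.inl rfl) hz' (n := n) (by simpa)
      have h' := traceSum_mul_of_not_dvd hp h6 (.inl rfl) hz' (n := 2 * n)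
        (by simpa using not_dvd_two_mul h6 hn)
      rw [one_mul] at h h'
      rw [ringClassCoeff, ringClassCoeff, mul_left_comm, h, h']
      push_cast
      ring
    · have h := traceSum_mul_mul_self hp h6 (.inl rfl) hz' n
      have h' := traceSum_mul_mul_self hp h6 (.inl rfl) hz' (2 * n)
      simp only [one_mul] at h h'
      simp only [ringClassCoeff, mul_left_comm 2, h, h']
      push_cast
      ring
  · have hz' : z.norm = (2 * p : ℕ) := by simpa using hz
    refine ⟨fun n hn ↦ ?_, fun n ↦ ?_⟩
    · have h := traceSum_mul_of_not_dvd hp h6 (.inr rfl) hz' (n := n) (not_dvd_two_mul h6 hn)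
      have h' := traceSum_mul_of_not_dvd hp h6 (.inr rfl) hz' (n := 2 * n)
        (not_dvd_two_mul h6 (not_dvd_two_mul h6 hn))
      rw [show 2 * p * (2 * n) = 4 * (p * n) by ring, traceSum_four_mul] at h'
      rw [ringClassCoeff, ringClassCoeff, ← mul_assoc, h, h']
      push_cast
      ring
    · have h := traceSum_mul_mul_self hp h6 (.inr rfl) hz' n
      have h' := traceSum_mul_mul_self hp h6 (.inr rfl) hz' (2 * n)
      rw [show 2 * p * (p * (2 * n)) = 4 * (p * (p * n)) by ring,
        show 2 * (2 * n) = 4 * n by ring, traceSum_four_mul, traceSum_four_mul,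
        mul_left_comm p 2 n] at h'
      rw [ringClassCoeff, ringClassCoeff, ringClassCoeff, ← mul_assoc 2 p, h, h']
      push_cast
      ring

lemma heckeRecursion_of_not_isSquare (hp : p.Prime) (h6 : p.Coprime 6)
    (hsq : ¬IsSquare (-6 : ZMod p)) : HeckeRecursion ringClassCoeff p 0 (-1) := by
  refine ⟨fun n hn ↦ ?_, fun n ↦ ?_⟩
  · have h := traceSum_mul_of_not_isSquare hp hsq hn
    have h' := traceSum_mul_of_not_isSquare hp hsq (not_dvd_two_mul h6 hn)
    simp [ringClassCoeff, mul_left_comm 2, h, h']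
  · simp [ringClassCoeff, mul_left_comm 2, traceSum_mul_mul_self_of_not_isSquare hp h6 hsq]

lemma heckeRecursion_three : HeckeRecursion ringClassCoeff 3 0 0 := by
  constructor <;> intro n <;> simp [ringClassCoeff, mul_left_comm 2, traceSum_three_mul]

end RingClassCoeff

section Representation

variable {p : ℕ}

lemma exists_sq_lt_prime_and_dvd_mul_sub (hp : p.Prime) (t : ℤ) :
    ∃ x y : ℤ, 0 < y ∧ x ^ 2 < p ∧ y ^ 2 < p ∧ (p : ℤ) ∣ y * t - x := by
  obtain ⟨j, k, hk0, hk, hjk⟩ :=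
    Real.exists_int_int_abs_mul_sub_le ((t : ℝ) / p) (Nat.sqrt_pos.2 hp.pos)
  have hp0 : (0 : ℝ) < p := mod_cast hp.pos
  have hlt : (p : ℝ) < (p.sqrt + 1) ^ 2 := mod_cast Nat.lt_succ_sqrt' p
  refine ⟨k * t - j * p, k, hk0, ?_, ?_, ⟨j, by ring⟩⟩
  · have hx : |(k * t - j * p : ℝ)| ≤ p / (p.sqrt + 1) := by
      rw [show (k * t - j * p : ℝ) = p * (k * (t / p) - j) by field_simp, abs_mul, abs_of_pos hp0,
        div_eq_mul_one_div (p : ℝ) (p.sqrt + 1)]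
      exact mul_le_mul_of_nonneg_left hjk hp0.le
    have : (k * t - j * p : ℝ) ^ 2 < p := calc
      (k * t - j * p : ℝ) ^ 2 ≤ (p / (p.sqrt + 1)) ^ 2 := sq_le_sq.2 (hx.trans (le_abs_self _))
      _ < p := by
        rw [div_pow, div_lt_iff₀ (by positivity), sq]
        exact mul_lt_mul_of_pos_left hlt hp0
    exact_mod_cast this
  · refine lt_of_le_of_ne ?_ fun h ↦
      (Nat.prime_iff_prime_int.1 hp).irreducible.not_isSquare (h ▸ IsSquare.sq k)
    calc k ^ 2 ≤ (p.sqrt : ℤ) ^ 2 := pow_le_pow_left₀ hk0.le hk 2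
      _ ≤ p := mod_cast Nat.sqrt_le' p

lemma exists_norm_eq_mul_of_isSquare (hp : p.Prime) (hsq : IsSquare (-6 : ZMod p)) :
    ∃ (z : ℤ√(-6)) (j : ℤ), z.norm = j * p ∧ 0 < j ∧ j < 7 := by
  obtain ⟨s, hs⟩ := hsq
  obtain ⟨t, rfl⟩ := ZMod.intCast_surjective s
  obtain ⟨x, y, hy, hx2, hy2, hxy⟩ := exists_sq_lt_prime_and_dvd_mul_sub hp t
  have hdvd : (p : ℤ) ∣ x ^ 2 + 6 * y ^ 2 := by
    rw [← ZMod.intCast_zmod_eq_zero_iff_dvd] at hxy ⊢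
    push_cast at hxy ⊢
    linear_combination (-(x : ZMod p) - y * t) * hxy - y ^ 2 * hs
  obtain ⟨j, hj⟩ := hdvd
  have hp0 : (0 : ℤ) < p := mod_cast hp.pos
  refine ⟨⟨x, y⟩, j, ?_, ?_, ?_⟩
  · rw [norm_eq_sq_add_six_mul_sq]
    linear_combination hj
  all_goals nlinarith only [hp0, hj, hx2, hy2, sq_nonneg x, pow_pos hy 2]

lemma exists_norm_eq_two_mul_of_norm_eq_five_mul {z : ℤ√(-6)} {n : ℤ} (hz : z.norm = 5 * n) :
    ∃ w : ℤ√(-6), w.norm = 2 * n := by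
  obtain ⟨x, y⟩ := z
  rw [norm_eq_sq_add_six_mul_sq] at hz
  have h5 : (5 : ℤ) ∣ (x - 2 * y) * (x + 2 * y) := ⟨n - 2 * y ^ 2, by linear_combination hz⟩
  simp only [norm_eq_sq_add_six_mul_sq]
  -- The witness is `z * (2 ± √-6) / 5`, up to conjugation.
  rcases Int.Prime.dvd_mul' Nat.prime_five h5 with ⟨a, ha⟩ | ⟨a, ha⟩
  · obtain rfl : x = 5 * a + 2 * y := by linear_combination ha
    exact ⟨⟨2 * a + 2 * y, a⟩, by linarith⟩
  · obtain rfl : x = 5 * a - 2 * y := by linear_combination ha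
    exact ⟨⟨2 * a - 2 * y, a⟩, by linarith⟩

lemma exists_norm_eq_or_eq_two_mul (hp : p.Prime) (hsq : IsSquare (-6 : ZMod p)) :
    ∃ z : ℤ√(-6), z.norm = p ∨ z.norm = 2 * p := by
  obtain ⟨z, j, hz, hj0, hj7⟩ := exists_norm_eq_mul_of_isSquare hp hsq
  have hsum := norm_eq_sq_add_six_mul_sq z
  have three_dvd (h : 3 ∣ z.norm) : 3 ∣ z.re :=
    Int.prime_three.dvd_of_dvd_pow (n := 2) (by omega)
  have two_dvd (h : 2 ∣ z.norm) : 2 ∣ z.re :=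
    Int.prime_two.dvd_of_dvd_pow (n := 2) (by omega)
  interval_cases j
  · exact ⟨z, .inl (by linarith)⟩
  · exact ⟨z, .inr hz⟩
  · obtain ⟨a, ha⟩ := three_dvd ⟨p, hz⟩
    rw [ha] at hsum
    exact ⟨⟨2 * z.im, a⟩, .inr (by simp only [norm_eq_sq_add_six_mul_sq]; linarith)⟩
  · obtain ⟨w, rfl⟩ := two_dvd_of_four_dvd_norm ⟨p, hz⟩
    rw [Zsqrtd.norm_mul, show (2 : ℤ√(-6)).norm = 4 from rfl] at hz
    exact ⟨w, .inl (by linarith)⟩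
  · exact (exists_norm_eq_two_mul_of_norm_eq_five_mul hz).imp fun _ ↦ .inr
  · obtain ⟨a, ha⟩ : 6 ∣ z.re := by
      have h2 := two_dvd (by omega)
      have h3 := three_dvd (by omega)
      omega
    rw [ha] at hsum
    exact ⟨⟨z.im, a⟩, .inl (by simp only [norm_eq_sq_add_six_mul_sq]; linarith)⟩

lemma isSquare_neg_six_iff (hp : p.Prime) (h6 : p.Coprime 6) :
    IsSquare (-6 : ZMod p) ↔ p % 24 ∈ ({1, 5, 7, 11} : Set ℕ) := by
  have : Fact p.Prime := ⟨hp⟩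
  have h0 : ((-6 : ℤ) : ZMod p) ≠ 0 := by
    have := ((ZMod.isUnit_iff_coprime 6 p).2 h6.symm).ne_zero
    simpa using this
  have h2 : Odd p := (h6.coprime_dvd_right (by decide : 2 ∣ 6)).odd_of_right
  have hjac : jacobiSym (-6) (p % 24 : ℕ) = 1 ↔ IsSquare ((-6 : ℤ) : ZMod p) := by
    rw [← legendreSym.eq_one_iff p h0, jacobiSym.legendreSym.to_jacobiSym,
      jacobiSym.mod_right (-6) h2]
    rfl
  push_cast at hjac
  rw [← hjac]
  have hlt : p % 24 < 24 := Nat.mod_lt _ (by norm_num)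
  have hr : (p % 24).Coprime 6 := ((Nat.mod_modEq p 24).of_dvd (by decide)).gcd_eq.trans h6
  generalize p % 24 = r at *
  interval_cases r <;> first | (exfalso; revert hr; decide) | norm_num

lemma isCoprime_of_form_eq_prime (hp : p.Prime) {a b x y : ℤ}
    (h : a * x ^ 2 + b * y ^ 2 = p) : IsCoprime x y := by
  have hdvd : (Int.gcd x y * Int.gcd x y : ℤ) ∣ p := by
    rw [← h, ← sq]
    exact dvd_add ((pow_dvd_pow_of_dvd (Int.gcd_dvd_left ..) 2).mul_left a)
      ((pow_dvd_pow_of_dvd (Int.gcd_dvd_right ..) 2).mul_left b)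
  exact Int.isCoprime_iff_gcd_eq_one.2
    (Nat.isUnit_iff.1 (hp.prime.irreducible.squarefree _ (mod_cast hdvd)))

lemma mem_QSet_iff (hp : p.Prime) (h2 : Odd p) :
    p ∈ QSet ↔ ∃ z : ℤ√(-6), (z.norm = p ∨ z.norm = 2 * p) ∧ 3 ∣ z.im := by
  have hp2 : ¬(2 : ℤ) ∣ p := by exact_mod_cast h2.not_two_dvd_nat
  have two_dvd {a : ℤ} (h : 2 ∣ a ^ 2) : 2 ∣ a := Int.prime_two.dvd_of_dvd_pow h
  have coprime_two {a : ℤ} (h : ¬2 ∣ a) : IsCoprime a 2 :=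
    (Int.prime_two.coprime_iff_not_dvd.2 h).symm
  simp only [norm_eq_sq_add_six_mul_sq]
  constructor
  · rintro ⟨-, -, j, rfl | rfl | rfl, x, y, h, -⟩
    · exact ⟨⟨4 * x, 3 * y⟩, .inr (by linarith), dvd_mul_right 3 y⟩
    · obtain ⟨y, rfl⟩ := two_dvd (a := y) (by omega)
      exact ⟨⟨2 * x, 3 * y⟩, .inr (by linarith), dvd_mul_right 3 y⟩
    · obtain ⟨y, rfl⟩ := two_dvd (a := y) (by omega)
      obtain ⟨y, rfl⟩ := two_dvd (a := y) (by ring_nf at h; omega)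
      exact ⟨⟨x, 3 * y⟩, .inl (by linarith), dvd_mul_right 3 y⟩
  · rintro ⟨⟨x, y⟩, hz | hz, y, rfl⟩
    · have hxy := isCoprime_of_form_eq_prime hp (a := 1) (b := 54) (x := x) (y := y)
        (by linarith)
      have hx := coprime_two (a := x) fun ⟨c, hc⟩ ↦ hp2
        ⟨2 * c ^ 2 + 27 * y ^ 2, by rw [hc] at hz; linarith⟩
      refine ⟨hp, h2, 8, by simp, x, 2 * (2 * y), by linarith, ?_⟩
      exact Int.isCoprime_iff_gcd_eq_one.1 (hx.mul_right (hx.mul_right hxy))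
    · obtain ⟨x, rfl⟩ := two_dvd (a := x) (by dsimp at hz; omega)
      by_cases hx : 2 ∣ x
      · obtain ⟨x, rfl⟩ := hx
        have h : 8 * x ^ 2 + 27 * y ^ 2 = p := by linarith
        exact ⟨hp, h2, 1, by simp, x, y, by linarith,
          Int.isCoprime_iff_gcd_eq_one.1 (isCoprime_of_form_eq_prime hp h)⟩
      · have h : 2 * x ^ 2 + 27 * y ^ 2 = p := by linarith
        exact ⟨hp, h2, 4, by simp, x, 2 * y, by linarith, Int.isCoprime_iff_gcd_eq_one.1
          ((coprime_two hx).mul_right (isCoprime_of_form_eq_prime hp h))⟩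

lemma cubicTrace_eq_ite (h6 : p.Coprime 6) {z : ℤ√(-6)} (hz : z.norm = p ∨ z.norm = 2 * p) :
    cubicTrace z = if 3 ∣ z.im then 2 else -1 := by
  have h3 : (p : ZMod 3) ≠ 0 := natCast_zmod_three_ne_zero h6
  have hre : (z.re : ZMod 3) ≠ 0 := by
    intro hre
    have hnorm : (z.norm : ZMod 3) = 0 := by
      rw [norm_eq_sq_add_six_mul_sq]
      push_cast
      rw [hre, show (6 : ZMod 3) = 0 from rfl]
      ring
    rcases hz with hz | hz <;> rw [hz] at hnorm <;> push_cast at hnorm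
    · exact h3 hnorm
    · exact h3 ((isUnit_iff_ne_zero.2 (by decide : (2 : ZMod 3) ≠ 0)).mul_right_eq_zero.1 hnorm)
  simp [cubicTrace, hre, ZMod.intCast_zmod_eq_zero_iff_dvd]

lemma ringClassCoeff_of_mem (hp : p.Prime) (h6 : p.Coprime 6)
    (hmod : p % 24 ∈ ({1, 5, 7, 11} : Set ℕ)) :
    ringClassCoeff p = 3 * QSet.indicator 1 p - 1 := by
  obtain ⟨z, hz⟩ := exists_norm_eq_or_eq_two_mul hp ((isSquare_neg_six_iff hp h6).2 hmod)
  have h2 : Odd p := (h6.coprime_dvd_right (by decide : 2 ∣ 6)).odd_of_right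
  by_cases hQ : p ∈ QSet
  · obtain ⟨w, hw, h3⟩ := (mem_QSet_iff hp h2).1 hQ
    rw [(heckeRecursion_of_norm_eq hp h6 hw).map_prime ringClassCoeff_one hp,
      cubicTrace_eq_ite h6 hw, if_pos h3, Set.indicator_of_mem hQ]
    norm_num
  · have h3 : ¬3 ∣ z.im := fun h3 ↦ hQ ((mem_QSet_iff hp h2).2 ⟨z, hz, h3⟩)
    rw [(heckeRecursion_of_norm_eq hp h6 hz).map_prime ringClassCoeff_one hp,
      cubicTrace_eq_ite h6 hz, if_neg h3, Set.indicator_of_notMem hQ]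
    norm_num

lemma coprime_six_of_ne (hp : p.Prime) (h2 : p ≠ 2) (h3 : p ≠ 3) : p.Coprime 6 :=
  Nat.Coprime.mul_right ((Nat.coprime_primes hp Nat.prime_two).2 h2)
    ((Nat.coprime_primes hp Nat.prime_three).2 h3)

lemma ringClassCoeff_eq_zero (hp : p.Prime) (h2 : p ≠ 2) (hmod : p % 24 ∉ ({1, 5, 7, 11} : Set ℕ)) :
    ringClassCoeff p = 0 := by
  rcases eq_or_ne p 3 with rfl | h3
  · exact heckeRecursion_three.map_prime ringClassCoeff_one hp
  · have h6 := coprime_six_of_ne hp h2 h3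
    rw [← isSquare_neg_six_iff hp h6] at hmod
    exact (heckeRecursion_of_not_isSquare hp h6 hmod).map_prime ringClassCoeff_one hp

lemma indicator_ringClassCoeff {k : ℕ} (hk : k ∈ ({1, 5, 7, 11} : Set ℕ)) (hp : p.Prime) :
    {n : ℕ | (n : ZMod 8) = k}.indicator ringClassCoeff p =
      3 * (QSetMod k).indicator 1 p - {n : ℕ | (n : ZMod 24) = k}.indicator 1 p := by
  classical
  simp only [Set.indicator_apply, Set.mem_ofPred_eq, QSetMod, Pi.one_apply,
    ZMod.natCast_eq_natCast_iff']
  have hk' : k = 1 ∨ k = 5 ∨ k = 7 ∨ k = 11 := hk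
  by_cases hpk : p % 24 = k
  · have h6 : p.Coprime 6 := coprime_six_of_ne hp (by omega) (by omega)
    rw [if_pos (by omega), if_pos (show p % 24 = k % 24 by omega),
      ringClassCoeff_of_mem hp h6 (hpk ▸ hk)]
    simp [Set.indicator_apply, hpk]
  · rw [if_neg (show ¬(p ∈ QSet ∧ p % 24 = k) from fun h ↦ hpk h.2),
      if_neg (show ¬p % 24 = k % 24 by omega)]
    have hzero (h : p % 8 = k % 8) : ringClassCoeff p = 0 := by
      refine ringClassCoeff_eq_zero hp (by omega) ?_
      simp only [Set.mem_insert_iff, Set.mem_singleton_iff]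
      omega
    simpa using hzero

end Representation

section PartialSums

lemma abs_sum_range_le_of_add_add_eq_zero {f : ℕ → ℝ} {q : ℕ} {M : ℝ} (hq : 0 < q)
    (hM : ∀ i, |f i| ≤ M) (hf : ∀ i, f i + f (i + q) + f (i + 2 * q) = 0) (L : ℕ) :
    |∑ i ∈ Finset.range L, f i| ≤ 3 * q * M := by
  have hM0 : 0 ≤ M := (abs_nonneg _).trans (hM 0)
  induction L using Nat.strong_induction_on with
  | _ L ih =>
    rcases lt_or_ge L (3 * q) with hL | hL
    · calc |∑ i ∈ Finset.range L, f i| ≤ ∑ i ∈ Finset.range L, |f i| :=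
            Finset.abs_sum_le_sum_abs _ _
        _ ≤ L * M := by simpa using Finset.sum_le_card_nsmul (Finset.range L) _ M fun i _ ↦ hM i
        _ ≤ 3 * q * M := mul_le_mul_of_nonneg_right (mod_cast hL.le) hM0
    · obtain ⟨L, rfl⟩ := Nat.exists_eq_add_of_le hL
      have hperiod : ∑ i ∈ Finset.range (3 * q), f i = 0 := by
        rw [show 3 * q = q + q + q by ring, Finset.sum_range_add, Finset.sum_range_add,
          ← Finset.sum_add_distrib, ← Finset.sum_add_distrib]
        refine Finset.sum_eq_zero fun i _ ↦ ?_
        rw [← hf i]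
        ring_nf
      have hshift (i : ℕ) : f (3 * q + i) = f i := by
        have := hf (i + q)
        rw [show i + q + q = i + 2 * q by ring, show i + q + 2 * q = 3 * q + i by ring] at this
        linarith [hf i]
      simpa [Finset.sum_range_add, hperiod, hshift] using ih L (by omega)

lemma abs_sum_Icc_le_of_add_add_eq_zero {f : ℤ → ℝ} {q : ℕ} {M : ℝ} (hq : 0 < q)
    (hM : ∀ y, |f y| ≤ M) (hf : ∀ y, f y + f (y + q) + f (y + 2 * q) = 0) (a b : ℤ) :
    |∑ y ∈ Finset.Icc a b, f y| ≤ 3 * q * M := by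
  rw [Int.Icc_eq_finset_map, Finset.sum_map]
  refine abs_sum_range_le_of_add_add_eq_zero hq (fun i ↦ hM _) (fun i ↦ ?_) _
  simpa [add_assoc, add_comm, add_left_comm] using hf (i + a)

/-- The lattice points of the square `|x|, |y| ≤ √N`. -/
noncomputable def latticeBox (N : ℕ) : Finset (ℤ × ℤ) :=
  Finset.Icc (-(N.sqrt : ℤ)) N.sqrt ×ˢ Finset.Icc (-(N.sqrt : ℤ)) N.sqrt

/-- The value at `v = (x, y)` of the diagonal quadratic form `a x² + b y²`. -/
def diagForm (a b : ℕ) (v : ℤ × ℤ) : ℕ := a * v.1.natAbs ^ 2 + b * v.2.natAbs ^ 2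

lemma mem_Icc_neg_sqrt_iff {x : ℤ} {N : ℕ} :
    x ∈ Finset.Icc (-(N.sqrt : ℤ)) N.sqrt ↔ x.natAbs ^ 2 ≤ N := by
  rw [Finset.mem_Icc, ← abs_le, ← Nat.le_sqrt', Int.abs_eq_natAbs, Nat.cast_le]

lemma card_Icc_neg_sqrt (N : ℕ) :
    ((Finset.Icc (-(N.sqrt : ℤ)) N.sqrt).card : ℝ) = 2 * N.sqrt + 1 := by
  rw [Int.card_Icc, show ((N.sqrt : ℤ) + 1 - -(N.sqrt : ℤ)).toNat = 2 * N.sqrt + 1 by omega]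
  norm_num

variable {a b N : ℕ}

lemma mem_latticeBox_of_diagForm_le (ha : 0 < a) (hb : 0 < b) {v : ℤ × ℤ}
    (h : diagForm a b v ≤ N) : v ∈ latticeBox N := by
  rw [latticeBox, Finset.mem_product, mem_Icc_neg_sqrt_iff, mem_Icc_neg_sqrt_iff]
  have h1 := Nat.le_mul_of_pos_left (v.1.natAbs ^ 2) ha
  have h2 := Nat.le_mul_of_pos_left (v.2.natAbs ^ 2) hb
  unfold diagForm at h
  omega

lemma natCast_diagForm {R : Type*} [CommRing R] (v : ℤ × ℤ) :
    (diagForm a b v : R) = a * (v.1 : R) ^ 2 + b * (v.2 : R) ^ 2 := by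
  have (x : ℤ) : ((x.natAbs : ℕ) : R) ^ 2 = (x : R) ^ 2 :=
    mod_cast congrArg (Int.cast (R := R)) x.natAbs_sq
  simp only [diagForm, Nat.cast_add, Nat.cast_mul, Nat.cast_pow, this]

lemma traceSum_eq_sum_latticeBox {n : ℕ} (hn : n ≤ N) :
    traceSum n = ∑ v ∈ latticeBox N with diagForm 1 6 v = n, cubicTrace ⟨v.1, v.2⟩ := by
  symm
  refine Finset.sum_bij' (fun v _ ↦ ⟨v.1, v.2⟩) (fun z _ ↦ (z.re, z.im)) (fun v hv ↦ ?_)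
    (fun z hz ↦ ?_) (fun _ _ ↦ rfl) (fun _ _ ↦ rfl) (fun _ _ ↦ rfl)
  · rw [mem_elementsOfNorm, norm_eq_sq_add_six_mul_sq, ← (Finset.mem_filter.1 hv).2,
      natCast_diagForm]
    simp
  · have hform : diagForm 1 6 (z.re, z.im) = n := by
      rw [mem_elementsOfNorm, norm_eq_sq_add_six_mul_sq] at hz
      zify
      rw [natCast_diagForm]
      simpa using hz
    exact Finset.mem_filter.2
      ⟨mem_latticeBox_of_diagForm_le one_pos (by norm_num) (hform.trans_le hn), hform⟩

lemma traceSum_two_mul_eq_sum_latticeBox {n : ℕ} (hn : n ≤ N) :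
    traceSum (2 * n) = ∑ v ∈ latticeBox N with diagForm 2 3 v = n, cubicTrace ⟨v.1, v.2⟩ := by
  have hdouble (x y : ℤ) : (⟨2 * x, y⟩ : ℤ√(-6)).norm = 2 * diagForm 2 3 (x, y) := by
    rw [norm_eq_sq_add_six_mul_sq, natCast_diagForm]
    push_cast
    ring
  have h2 : (2 : ZMod 3) ≠ 0 := by decide
  have : Fact (Nat.Prime 3) := ⟨Nat.prime_three⟩
  symm
  refine Finset.sum_nbij (fun v ↦ ⟨2 * v.1, v.2⟩) (fun v hv ↦ ?_) (fun v _ w _ h ↦ ?_)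
    (fun z hz ↦ ?_) fun v _ ↦ ?_
  · rw [mem_elementsOfNorm, hdouble, (Finset.mem_filter.1 hv).2]
    simp
  · simpa [Prod.ext_iff] using h
  · obtain ⟨x, y⟩ := z
    rw [Finset.mem_coe, mem_elementsOfNorm] at hz
    obtain ⟨x, rfl⟩ : 2 ∣ x := Int.prime_two.dvd_of_dvd_pow (n := 2) (by
      rw [norm_eq_sq_add_six_mul_sq] at hz
      dsimp at hz
      omega)
    have hform : diagForm 2 3 (x, y) = n := by
      rw [hdouble] at hz
      push_cast at hz
      omega
    exact ⟨(x, y), Finset.mem_filter.2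
      ⟨mem_latticeBox_of_diagForm_le two_pos three_pos (hform.trans_le hn), hform⟩, rfl⟩
  · simp [cubicTrace, h2]

lemma abs_cubicTrace_le (z : ℤ√(-6)) : |(cubicTrace z : ℝ)| ≤ 2 := by
  unfold cubicTrace
  split_ifs <;> norm_num

lemma cubicTrace_add_add_eq_zero (x y : ℤ) :
    cubicTrace ⟨x, y⟩ + cubicTrace ⟨x, y + 8⟩ + cubicTrace ⟨x, y + 2 * 8⟩ = 0 := by
  simp only [cubicTrace]
  push_cast
  generalize (x : ZMod 3) = x
  generalize (y : ZMod 3) = y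
  revert x y
  decide

lemma diagForm_le_iff_mem_Icc (hb : 0 < b) {x : ℤ} (hx : a * x.natAbs ^ 2 ≤ N) {y : ℤ} :
    diagForm a b (x, y) ≤ N ↔ y ∈ Finset.Icc (-(((N - a * x.natAbs ^ 2) / b).sqrt : ℤ))
      ((N - a * x.natAbs ^ 2) / b).sqrt := by
  rw [mem_Icc_neg_sqrt_iff, Nat.le_div_iff_mul_le hb, mul_comm, Nat.le_sub_iff_add_le' hx, diagForm]

variable (χ : DirichletCharacter ℝ 8)

lemma abs_sum_mul_cubicTrace_row_le (ha : 0 < a) (hb : 0 < b) (x : ℤ) :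
    |∑ y ∈ Finset.Icc (-(N.sqrt : ℤ)) N.sqrt with diagForm a b (x, y) ≤ N,
      χ (diagForm a b (x, y) : ℕ) * cubicTrace ⟨x, y⟩| ≤ 48 := by
  rcases le_or_gt (a * x.natAbs ^ 2) N with hx | hx
  · have hrow : {y ∈ Finset.Icc (-(N.sqrt : ℤ)) N.sqrt | diagForm a b (x, y) ≤ N} =
        Finset.Icc (-(((N - a * x.natAbs ^ 2) / b).sqrt : ℤ))
          ((N - a * x.natAbs ^ 2) / b).sqrt := by
      ext y
      rw [Finset.mem_filter, ← diagForm_le_iff_mem_Icc hb hx, and_iff_right_iff_imp]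
      exact fun h ↦ (Finset.mem_product.1 (mem_latticeBox_of_diagForm_le ha hb h)).2
    have hper (y : ℤ) : (diagForm a b (x, y + 8) : ZMod 8) = diagForm a b (x, y) := by
      rw [natCast_diagForm, natCast_diagForm]
      simp [show (8 : ZMod 8) = 0 from rfl]
    have hper' (y : ℤ) : (diagForm a b (x, y + 2 * 8) : ZMod 8) = diagForm a b (x, y) := by
      rw [two_mul, ← add_assoc, hper, hper]
    rw [hrow]
    refine (abs_sum_Icc_le_of_add_add_eq_zero (q := 8) (M := 2) (by norm_num) (fun y ↦ ?_)
      (fun y ↦ ?_) _ _).trans_eq (by norm_num)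
    · rw [abs_mul]
      exact (mul_le_of_le_one_left (abs_nonneg _) (χ.norm_le_one _)).trans (abs_cubicTrace_le _)
    · rw [Nat.cast_ofNat, hper, hper', ← mul_add, ← mul_add]
      exact mul_eq_zero_of_right _ (mod_cast cubicTrace_add_add_eq_zero x y)
  · rw [Finset.filter_false_of_mem fun y _ ↦ by unfold diagForm; dsimp; omega]
    norm_num

lemma abs_sum_mul_sum_diagForm_le (ha : 0 < a) (hb : 0 < b) :
    |∑ n ∈ Finset.range (N + 1), χ n *
      ∑ v ∈ latticeBox N with diagForm a b v = n, (cubicTrace ⟨v.1, v.2⟩ : ℝ)| ≤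
      48 * (2 * N.sqrt + 1) := by
  have hswap : ∑ n ∈ Finset.range (N + 1), χ n *
        ∑ v ∈ latticeBox N with diagForm a b v = n, (cubicTrace ⟨v.1, v.2⟩ : ℝ) =
      ∑ x ∈ Finset.Icc (-(N.sqrt : ℤ)) N.sqrt,
        ∑ y ∈ Finset.Icc (-(N.sqrt : ℤ)) N.sqrt with diagForm a b (x, y) ≤ N,
          χ (diagForm a b (x, y) : ℕ) * cubicTrace ⟨x, y⟩ := by
    simp only [Finset.sum_filter, ← Finset.sum_product']
    rw [← latticeBox, ← Finset.sum_filter]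
    simp only [Finset.mul_sum, ← Finset.sum_filter]
    simp only [← Nat.lt_succ_iff, ← Finset.mem_range, ← Finset.sum_fiberwise_eq_sum_filter]
    refine Finset.sum_congr rfl fun n _ ↦ Finset.sum_congr rfl fun v hv ↦ ?_
    rw [(Finset.mem_filter.1 hv).2]
  rw [hswap]
  refine (Finset.abs_sum_le_sum_abs _ _).trans <| (Finset.sum_le_card_nsmul _ _ _ fun x _ ↦
    abs_sum_mul_cubicTrace_row_le χ ha hb x).trans_eq ?_
  rw [nsmul_eq_mul, card_Icc_neg_sqrt, mul_comm]

lemma sum_abs_sum_diagForm_le :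
    ∑ n ∈ Finset.range (N + 1),
      |∑ v ∈ latticeBox N with diagForm a b v = n, (cubicTrace ⟨v.1, v.2⟩ : ℝ)| ≤
      2 * (2 * N.sqrt + 1) ^ 2 := by
  calc _ ≤ ∑ n ∈ Finset.range (N + 1), ∑ v ∈ latticeBox N with diagForm a b v = n, (2 : ℝ) :=
        Finset.sum_le_sum fun n _ ↦ (Finset.abs_sum_le_sum_abs _ _).trans <|
          Finset.sum_le_sum fun v _ ↦ abs_cubicTrace_le _
    _ ≤ ∑ v ∈ latticeBox N, 2 := by
      rw [Finset.sum_fiberwise_eq_sum_filter]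
      exact Finset.sum_le_sum_of_subset_of_nonneg (Finset.filter_subset _ _) fun _ _ _ ↦ by simp
    _ = 2 * (2 * N.sqrt + 1) ^ 2 := by
      rw [Finset.sum_const, nsmul_eq_mul, latticeBox, Finset.card_product, Nat.cast_mul,
        card_Icc_neg_sqrt]
      ring

/-- The Dirichlet coefficients of the twist of the ring class character by `χ`. -/
noncomputable def twistedCoeff (n : ℕ) : ℝ := χ n * ringClassCoeff n

lemma sum_Icc_one_eq_sum_range {f : ℕ → ℝ} (hf : f 0 = 0) (N : ℕ) :
    ∑ n ∈ Finset.Icc 1 N, f n = ∑ n ∈ Finset.range (N + 1), f n := by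
  rw [Finset.sum_range_eq_add_Ico _ N.succ_pos, hf, zero_add]
  rfl

lemma twistedCoeff_zero : twistedCoeff χ 0 = 0 := by
  rw [twistedCoeff, Nat.cast_zero, χ.map_zero' (by norm_num), zero_mul]

lemma twistedCoeff_eq_sum_latticeBox {n : ℕ} (hn : n ≤ N) :
    twistedCoeff χ n =
      χ n * (∑ v ∈ latticeBox N with diagForm 1 6 v = n, (cubicTrace ⟨v.1, v.2⟩ : ℝ)) / 4 +
      χ n * (∑ v ∈ latticeBox N with diagForm 2 3 v = n, (cubicTrace ⟨v.1, v.2⟩ : ℝ)) / 4 := by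
  rw [twistedCoeff, ringClassCoeff, traceSum_eq_sum_latticeBox hn,
    traceSum_two_mul_eq_sum_latticeBox hn]
  push_cast
  ring

lemma abs_sum_twistedCoeff_le (N : ℕ) :
    |∑ n ∈ Finset.Icc 1 N, twistedCoeff χ n| ≤ 24 * (2 * N.sqrt + 1) := by
  rw [sum_Icc_one_eq_sum_range (twistedCoeff_zero χ), Finset.sum_congr rfl fun n hn ↦
    twistedCoeff_eq_sum_latticeBox χ (Finset.mem_range_succ_iff.1 hn), Finset.sum_add_distrib,
    ← Finset.sum_div, ← Finset.sum_div]
  have h1 := abs_le.1 (abs_sum_mul_sum_diagForm_le (a := 1) (b := 6) (N := N) χ (by norm_num)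
    (by norm_num))
  have h2 := abs_le.1 (abs_sum_mul_sum_diagForm_le (a := 2) (b := 3) (N := N) χ (by norm_num)
    (by norm_num))
  exact abs_le.2 ⟨by linarith, by linarith⟩

lemma sum_abs_twistedCoeff_le (N : ℕ) :
    ∑ n ∈ Finset.Icc 1 N, |twistedCoeff χ n| ≤ (2 * N.sqrt + 1) ^ 2 := by
  have hterm (n : ℕ) (hn : n ∈ Finset.range (N + 1)) : |twistedCoeff χ n| ≤
      (|∑ v ∈ latticeBox N with diagForm 1 6 v = n, (cubicTrace ⟨v.1, v.2⟩ : ℝ)| +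
        |∑ v ∈ latticeBox N with diagForm 2 3 v = n, (cubicTrace ⟨v.1, v.2⟩ : ℝ)|) / 4 := by
    rw [twistedCoeff_eq_sum_latticeBox χ (Finset.mem_range_succ_iff.1 hn), ← add_div, ← mul_add,
      abs_div, abs_mul, abs_of_pos (four_pos (α := ℝ))]
    gcongr
    exact (mul_le_of_le_one_left (abs_nonneg _) (χ.norm_le_one _)).trans (abs_add_le _ _)
  rw [sum_Icc_one_eq_sum_range (by rw [twistedCoeff_zero, abs_zero])]
  refine (Finset.sum_le_sum hterm).trans ?_
  rw [← Finset.sum_div, Finset.sum_add_distrib]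
  linarith [sum_abs_sum_diagForm_le (a := 1) (b := 6) (N := N),
    sum_abs_sum_diagForm_le (a := 2) (b := 3) (N := N)]

lemma two_mul_sqrt_add_one_isBigO :
    (fun N : ℕ ↦ (2 * N.sqrt + 1 : ℝ)) =O[atTop] fun N ↦ (N : ℝ) ^ (1 / 2 : ℝ) := by
  refine IsBigO.of_bound 3 ?_
  filter_upwards [eventually_ge_atTop 1] with N hN
  have h1 : (1 : ℝ) ≤ √N := Real.one_le_sqrt.2 (mod_cast hN)
  rw [← Real.sqrt_eq_rpow, Real.norm_of_nonneg (by positivity), Real.norm_of_nonneg (by positivity)]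
  linarith [Real.nat_sqrt_le_real_sqrt (a := N)]

lemma sum_twistedCoeff_isBigO :
    (fun N : ℕ ↦ ∑ n ∈ Finset.Icc 1 N, (twistedCoeff χ n : ℂ)) =O[atTop]
      fun N ↦ (N : ℝ) ^ (1 / 2 : ℝ) := by
  refine .trans (.of_bound 24 (Eventually.of_forall fun N ↦ ?_)) two_mul_sqrt_add_one_isBigO
  rw [← Complex.ofReal_sum, Complex.norm_real,
    Real.norm_of_nonneg (by positivity : 0 ≤ 2 * (N.sqrt : ℝ) + 1)]
  exact abs_sum_twistedCoeff_le χ N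

lemma LSeriesSummable_twistedCoeff {s : ℂ} (hs : 1 < s.re) :
    LSeriesSummable (fun n ↦ (twistedCoeff χ n : ℂ)) s := by
  refine LSeriesSummable_of_sum_norm_bigO (r := 1) ?_ zero_le_one hs
  have hsq := two_mul_sqrt_add_one_isBigO.pow 2
  simp only [← Real.sqrt_eq_rpow, Real.sq_sqrt (Nat.cast_nonneg _)] at hsq
  simp only [Real.rpow_one, Complex.norm_real, Real.norm_eq_abs]
  refine .trans (.of_bound 1 (Eventually.of_forall fun N ↦ ?_)) hsq
  rw [one_mul, Real.norm_of_nonneg (Finset.sum_nonneg fun _ _ ↦ abs_nonneg _),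
    Real.norm_of_nonneg (by positivity)]
  exact sum_abs_twistedCoeff_le χ N

end PartialSums

section Twists

lemma exists_heckeRecursion_ringClassCoeff {p : ℕ} (hp : p.Prime) (h2 : p ≠ 2) :
    ∃ α κ : ℝ, HeckeRecursion ringClassCoeff p α κ ∧ |α| ≤ 2 ∧ |κ| ≤ 1 ∧
      (p < 5 → α = 0 ∧ κ = 0) := by
  rcases eq_or_ne p 3 with rfl | h3
  · exact ⟨0, 0, heckeRecursion_three, by norm_num, by norm_num, fun _ ↦ ⟨rfl, rfl⟩⟩
  have h5 : ¬p < 5 := fun h ↦ by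
    interval_cases p <;> first | exact h2 rfl | exact h3 rfl | exact absurd hp (by norm_num)
  have h6 := coprime_six_of_ne hp h2 h3
  by_cases hsq : IsSquare (-6 : ZMod p)
  · obtain ⟨z, hz⟩ := exists_norm_eq_or_eq_two_mul hp hsq
    exact ⟨_, _, heckeRecursion_of_norm_eq hp h6 hz, abs_cubicTrace_le z, by norm_num,
      fun h ↦ absurd h h5⟩
  · exact ⟨_, _, heckeRecursion_of_not_isSquare hp h6 hsq, by norm_num, by norm_num,
      fun h ↦ absurd h h5⟩

variable (χ : DirichletCharacter ℝ 8)

lemma twistedCoeff_one : twistedCoeff χ 1 = 1 := by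
  simp [twistedCoeff, ringClassCoeff_one]

lemma exists_heckeRecursion_twistedCoeff {p : ℕ} (hp : p.Prime) :
    ∃ α κ : ℝ, HeckeRecursion (twistedCoeff χ) p α κ ∧ |α| ≤ 2 ∧ |κ| ≤ 1 ∧
      (p < 5 → α = 0 ∧ κ = 0) := by
  rcases eq_or_ne p 2 with rfl | h2
  · have hχ : χ (2 : ℕ) = 0 := χ.map_nonunit (by decide)
    have hzero (n : ℕ) : twistedCoeff χ (2 * n) = 0 := by
      rw [twistedCoeff, Nat.cast_mul, map_mul, hχ, zero_mul, zero_mul]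
    exact ⟨0, 0, ⟨fun n _ ↦ by rw [hzero, zero_mul], fun n ↦ by rw [hzero]; ring⟩, by norm_num,
      by norm_num, fun _ ↦ ⟨rfl, rfl⟩⟩
  · obtain ⟨α, κ, h, hα, hκ, h5⟩ := exists_heckeRecursion_ringClassCoeff hp h2
    have hχ : |χ p| ≤ 1 := χ.norm_le_one _
    refine ⟨_, _, h.twist ((χ : ZMod 8 →* ℝ).comp (Nat.castRingHom (ZMod 8)).toMonoidHom), ?_, ?_,
      fun hp5 ↦ by simp [h5 hp5]⟩
    · change |χ p * α| ≤ 2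
      rw [abs_mul]
      exact (mul_le_of_le_one_left (abs_nonneg _) hχ).trans hα
    · change |χ p ^ 2 * κ| ≤ 1
      rw [abs_mul, abs_pow]
      exact mul_le_one₀ (pow_le_one₀ (abs_nonneg _) hχ) (abs_nonneg _) hκ

/-- A number `B < p / 2` such that the twisted coefficient at `p ^ k` is at most `B ^ k` in absolute
value. For `p ≥ 5` it is the positive root of `B² = 2 B + 1`, because `|α| ≤ 2` and `|κ| ≤ 1` in the
recursion at `p`; for `p = 2, 3` both `α` and `κ` vanish. -/
noncomputable def coeffBound (p : ℕ) : ℝ := if p < 5 then 0 else 1 + √2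

lemma abs_twistedCoeff_pow_le {p : ℕ} (k : ℕ) (hp : p.Prime) :
    |twistedCoeff χ (p ^ k)| ≤ coeffBound p ^ k := by
  obtain ⟨α, κ, h, hα, hκ, h5⟩ := exists_heckeRecursion_twistedCoeff χ hp
  refine h.abs_map_pow_le (twistedCoeff_one χ) hp ?_ ?_ k <;>
    unfold coeffBound <;> split_ifs with hp5
  · simp [h5 hp5]
  · linarith [Real.one_lt_sqrt_two]
  · simp [h5 hp5]
  · nlinarith [Real.sq_sqrt (zero_le_two (α := ℝ)), Real.sqrt_nonneg 2]

lemma coeffBound_le (p : ℕ) : coeffBound p ≤ 1 + √2 := by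
  unfold coeffBound
  split_ifs
  · positivity
  · rfl

lemma coeffBound_le_mul (p : ℕ) : coeffBound p ≤ (1 + √2) / 5 * p := by
  unfold coeffBound
  split_ifs with hp
  · positivity
  · have : (5 : ℝ) ≤ p := mod_cast not_lt.1 hp
    nlinarith [Real.sqrt_nonneg 2]

lemma primeSeries_twistedCoeff_isBigO_one_or_exists_le_log :
    primeSeries (twistedCoeff χ) =O[𝓝[>] 1] (fun _ ↦ (1 : ℝ)) ∨
      ∃ C, ∀ᶠ s in 𝓝[>] 1, primeSeries (twistedCoeff χ) s ≤ Real.log (s - 1) + C := by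
  obtain ⟨K, hK⟩ := exists_exp_primeSeries_le_norm_LSeries
    (by linarith [Real.sqrt_two_lt_three_halves] : (1 + √2) / 5 < 1 / 2) (twistedCoeff_one χ)
    (HeckeRecursion.map_mul_of_coprime (fun p hp ↦
      let ⟨α, κ, h, _⟩ := exists_heckeRecursion_twistedCoeff χ hp; ⟨α, κ, h⟩) (twistedCoeff_one χ))
    (fun p _ ↦ coeffBound_le p) (fun p _ ↦ coeffBound_le_mul p)
    (fun _ k hp ↦ abs_twistedCoeff_pow_le χ k hp)
  obtain ⟨l, hl⟩ := exists_LSeries_sub_isBigO (by norm_num) (by norm_num : (1 / 2 : ℝ) < 1)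
    (fun _ ↦ LSeriesSummable_twistedCoeff χ) (sum_twistedCoeff_isBigO χ)
  refine isBigO_one_or_exists_le_log hl (K := K) ?_
  filter_upwards [self_mem_nhdsWithin] with s hs
  exact hK s hs (LSeriesSummable_twistedCoeff χ (by simpa using hs))

end Twists

section Orthogonality

lemma exponent_units_zmod_eight : Monoid.exponent (ZMod 8)ˣ = 2 := by
  refine Nat.dvd_antisymm (Monoid.exponent_dvd_of_forall_pow_eq_one (by decide)) ?_
  rw [← orderOf_eq_prime (x := (-1 : (ZMod 8)ˣ)) (p := 2) (by decide) (by decide)]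
  exact Monoid.order_dvd_exponent _

instance : HasEnoughRootsOfUnity ℝ (Monoid.exponent (ZMod 8)ˣ) := by
  rw [exponent_units_zmod_eight]
  exact ⟨⟨-1, IsPrimitiveRoot.neg_one 0 (by norm_num)⟩, inferInstance⟩

lemma sum_inv_mul_twistedCoeff {k : ℕ} (hk : k.Coprime 8) (n : ℕ) :
    ∑ χ : DirichletCharacter ℝ 8, χ (k : ZMod 8)⁻¹ * twistedCoeff χ n =
      4 * {n : ℕ | (n : ZMod 8) = k}.indicator ringClassCoeff n := by
  classical
  simp only [twistedCoeff, ← mul_assoc, ← Finset.sum_mul,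
    DirichletCharacter.sum_char_inv_mul_char_eq ℝ ((ZMod.isUnit_iff_coprime k 8).2 hk),
    Set.indicator_apply, Set.mem_ofPred_eq, eq_comm (a := (k : ZMod 8)), ite_mul, mul_ite, zero_mul,
    mul_zero]
  rfl

end Orthogonality

section Asymptotics

lemma summable_mul_rpow_primes {a : ℕ → ℝ} {C : ℝ} (ha : ∀ p, p.Prime → |a p| ≤ C) {s : ℝ}
    (hs : 1 < s) : Summable fun p : Nat.Primes ↦ a p * (p : ℝ) ^ (-s) := by
  refine .of_norm_bounded ((Nat.Primes.summable_rpow.2 (neg_lt_neg hs)).mul_left C) fun p ↦ ?_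
  rw [norm_mul, Real.norm_of_nonneg (Real.rpow_nonneg (Nat.cast_nonneg (p : ℕ)) (-s))]
  exact mul_le_mul_of_nonneg_right (ha p p.2) (Real.rpow_nonneg (Nat.cast_nonneg _) _)

lemma summable_indicator_mul_rpow_primes (S : Set ℕ) {s : ℝ} (hs : 1 < s) :
    Summable fun p : Nat.Primes ↦ S.indicator 1 (p : ℕ) * (p : ℝ) ^ (-s) := by
  classical
  refine summable_mul_rpow_primes (C := 1) (fun p _ ↦ ?_) hs
  rw [Set.indicator_apply]
  split_ifs <;> simp

lemma primeSeries_indicator_nonneg (S : Set ℕ) (s : ℝ) : 0 ≤ primeSeries (S.indicator 1) s :=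
  tsum_nonneg fun _ ↦ mul_nonneg (Set.indicator_nonneg (fun _ _ ↦ zero_le_one) _)
    (Real.rpow_nonneg (Nat.cast_nonneg _) _)

variable {k : ℕ}

lemma sum_inv_mul_primeSeries_twistedCoeff (hk : k ∈ ({1, 5, 7, 11} : Set ℕ)) {s : ℝ}
    (hs : 1 < s) :
    ∑ χ : DirichletCharacter ℝ 8, χ (k : ZMod 8)⁻¹ * primeSeries (twistedCoeff χ) s =
      12 * primeSeries ((QSetMod k).indicator 1) s -
        4 * primeSeries ({n : ℕ | (n : ZMod 24) = k}.indicator 1) s := by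
  have h8 : k.Coprime 8 := by rcases hk with rfl | rfl | rfl | rfl <;> decide
  have hsum (χ : DirichletCharacter ℝ 8) :=
    summable_mul_rpow_primes (a := twistedCoeff χ) (C := 1 + √2) (fun p hp ↦ by
      simpa using (abs_twistedCoeff_pow_le χ 1 hp).trans
        ((pow_one _).trans_le (coeffBound_le p))) hs
  simp only [primeSeries, ← tsum_mul_left]
  rw [← Summable.tsum_finsetSum fun χ _ ↦ (hsum χ).mul_left _,
    ← ((summable_indicator_mul_rpow_primes _ hs).mul_left 12).tsum_sub
      ((summable_indicator_mul_rpow_primes _ hs).mul_left 4)]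
  refine tsum_congr fun p ↦ ?_
  simp only [← mul_assoc, ← Finset.sum_mul]
  rw [sum_inv_mul_twistedCoeff h8, indicator_ringClassCoeff hk p.2]
  ring

lemma primeSeries_zmod_twentyFour_add_log_isBigO (hk : k ∈ ({1, 5, 7, 11} : Set ℕ)) :
    (fun s ↦ primeSeries ({n : ℕ | (n : ZMod 24) = k}.indicator 1) s + 1 / 8 * Real.log (s - 1))
      =O[𝓝[>] 1] fun _ ↦ (1 : ℝ) := by
  have h24 : k.Coprime 24 := by rcases hk with rfl | rfl | rfl | rfl <;> decide
  have htotient : Nat.totient 24 = 8 := by decide +kernel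
  simpa [htotient] using
    primeSeries_residueClass_add_log_isBigO ((ZMod.isUnit_iff_coprime k 24).2 h24)

lemma primeSeries_twistedCoeff_isBigO_one (χ : DirichletCharacter ℝ 8) :
    primeSeries (twistedCoeff χ) =O[𝓝[>] 1] fun _ ↦ (1 : ℝ) := by
  obtain ⟨C, hC⟩ := (primeSeries_zmod_twentyFour_add_log_isBigO (k := 1) (.inl rfl)).bound
  refine forall_isBigO_one_of_le_sum (P := fun χ ↦ primeSeries (twistedCoeff χ)) (c := 1 / 2)
    (C := 4 * C) (by norm_num) primeSeries_twistedCoeff_isBigO_one_or_exists_le_log ?_ χ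
  filter_upwards [hC, self_mem_nhdsWithin] with s hs hs1
  have hsum := sum_inv_mul_primeSeries_twistedCoeff (k := 1) (.inl rfl) hs1
  simp only [Nat.cast_one, ZMod.inv_one, map_one, one_mul] at hsum
  rw [hsum]
  have hQ := primeSeries_indicator_nonneg (QSetMod 1) s
  rw [Nat.cast_one, norm_one, mul_one, Real.norm_eq_abs] at hs
  linarith [(abs_le.1 hs).2]

theorem primeSeries_QSetMod_add_log_isBigO (hk : k ∈ ({1, 5, 7, 11} : Set ℕ)) :
    (fun s ↦ primeSeries ((QSetMod k).indicator 1) s + 1 / 24 * Real.log (s - 1))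
      =O[𝓝[>] 1] fun _ ↦ (1 : ℝ) := by
  have htwists := IsBigO.fun_sum (s := Finset.univ) fun (χ : DirichletCharacter ℝ 8) _ ↦
    (primeSeries_twistedCoeff_isBigO_one χ).const_mul_left (χ (k : ZMod 8)⁻¹)
  refine ((htwists.const_mul_left (1 / 12)).add
    ((primeSeries_zmod_twentyFour_add_log_isBigO hk).const_mul_left (1 / 3))).congr' ?_ .rfl
  filter_upwards [self_mem_nhdsWithin] with s hs
  rw [sum_inv_mul_primeSeries_twistedCoeff hk hs]
  ring

end Asymptotics

theorem stmt_18 (k : ℕ) (hk : k ∈ ({1, 5, 7, 11} : Set ℕ)) :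
    Tendsto
      (fun s : ℝ =>
        (∑' p : QSetMod k, ((p : ℕ) : ℝ) ^ (-s)) /
          (∑' p : {q : ℕ // q.Prime}, ((p : ℕ) : ℝ) ^ (-s)))
      (𝓝[>] (1 : ℝ)) (𝓝 (1 / 24)) ∧ (QSetMod k).Infinite := by
  have hprime : ∀ p ∈ QSetMod k, p.Prime := fun p hp ↦ hp.1.1
  have hlog := primeSeries_QSetMod_add_log_isBigO hk
  exact ⟨tendsto_tsum_div_tsum_primes hprime hlog,
    infinite_of_primeSeries_add_log_isBigO hprime (by norm_num) hlog⟩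
end

section
/- For every prime p ≥ 5 with p ≠ 11, there exists μ ∈ {4, 6} such that for every integer k ≥ 0, b₂₁((11p^{μk} − 5)/6) is odd. In particular, b₂₁(n) is odd for infinitely many nonnegative integers n. -/
/-- `b21 n` is the number of 21-regular partitions of `n`,
i.e. partitions of `n` none of whose parts is divisible by 21. -/
def b21 (n : ℕ) : ℕ :=
  (Finset.univ.filter fun c : n.Partition => ∀ i ∈ c.parts, ¬ (21 ∣ i)).card

/-!
Let `B` be the generating series of `b21` and `θ_k = ∑ X ^ ((t ^ 2 - 1) / k)`. Modulo 2, the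
pentagonal number theorem gives `B * θ₂₄ = θ₂₄(X ^ 21)` and Jacobi's identity gives
`θ₂₄ ^ 3 = θ₈`. Multiplying the first relation by `θ₂₄ ^ 3` makes `θ₂₄ ^ 4`, a series in `X ^ 4`,
the factor of `B`, and comparing the exponents congruent to `1` modulo `4` shows that
`b21 (4 * m + 1)` has the parity of the number of `(x, y)` with `3 ∤ x` and
`3 * x ^ 2 + 8 * y ^ 2 = 24 * m + 11`.

When `24 * m + 11 = 11 * q`, multiplication by `3 + √-24`, of norm `33`, turns these into solutions
of `x ^ 2 + 24 * y ^ 2 = q` with `3 ∤ x + y`. Changing the sign of `y` is an involution, and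
it leaves, modulo 2, the solution `(√q, 0)` and the number of solutions prime to `3`. The latter is
even for `q = p ^ (6 * k)`: the solutions of level `p ^ (2 * l)` not divisible by `p` are, up to
signs, the power `z ^ l` of a single `z = u + w √-24`, and the imaginary part of `z ^ l` is
`l * u ^ (l - 1) * w` modulo `3`, so that among three consecutive levels zero or two contribute.
-/

open PowerSeries

theorem natCast_ncard_eq_ncard_fixedPoints {α : Type*} {S : Set α} (hS : S.Finite) {t : α → α}
    (ht : Set.MapsTo t S S) (htt : ∀ a ∈ S, t (t a) = a) :
    (S.ncard : ZMod 2) = ({a ∈ S | t a = a}.ncard : ZMod 2) := by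
  classical
  lift S to Finset α using hS
  have hmoved : ∑ _ ∈ S.filter (fun a => ¬ t a = a), (1 : ZMod 2) = 0 := by
    refine Finset.sum_involution (fun a _ => t a) (fun _ _ => CharTwo.add_self_eq_zero 1)
      (fun _ ha _ => (Finset.mem_filter.1 ha).2) (fun a ha => ?_)
      (fun a ha => htt a (Finset.mem_filter.1 ha).1)
    obtain ⟨haS, hne⟩ := Finset.mem_filter.1 ha
    exact Finset.mem_filter.2 ⟨ht haS, fun h => hne (htt a haS ▸ h).symm⟩
  have hfixed : {a ∈ (S : Set α) | t a = a} = (S.filter fun a => t a = a : Finset α) := by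
    simp only [Finset.coe_filter, Finset.mem_coe]
  rw [hfixed, Set.ncard_coe_finset, Set.ncard_coe_finset,
    ← Finset.card_filter_add_card_filter_not (fun a => t a = a), Nat.cast_add, add_eq_left]
  simpa only [Finset.sum_const, nsmul_one] using hmoved

/-- The solutions of `x² + k y² = M` in integers with `x > 0`: one from each pair `±(x, y)`
with `x ≠ 0`. -/
def halfPlaneReps (k M : ℕ) : Set (ℤ × ℤ) :=
  {z | 0 < z.1 ∧ z.1 ^ 2 + k * z.2 ^ 2 = M}

/-- The solutions of `x² + k y² = M` in natural numbers both prime to `3`. -/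
def repsPrimeToThree (k M : ℕ) : Set (ℕ × ℕ) :=
  {w | ¬ 3 ∣ w.1 ∧ ¬ 3 ∣ w.2 ∧ w.1 ^ 2 + k * w.2 ^ 2 = M}

theorem finite_halfPlaneReps {k : ℕ} (hk : 0 < k) (M : ℕ) : (halfPlaneReps k M).Finite := by
  refine (Set.finite_Icc ((-M, -M) : ℤ × ℤ) (M, M)).subset fun z hz => ?_
  obtain ⟨-, hM⟩ := hz
  have habs (a : ℤ) : |a| ≤ a ^ 2 := by
    rw [Int.abs_eq_natAbs]
    exact Int.natAbs_le_self_sq a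
  have : (1 : ℤ) ≤ k := by exact_mod_cast hk
  have hx : |z.1| ≤ M := by nlinarith [habs z.1, sq_nonneg z.2]
  have hy : |z.2| ≤ M := by nlinarith [habs z.2, sq_nonneg z.1, sq_nonneg z.2]
  exact ⟨⟨(abs_le.1 hx).1, (abs_le.1 hy).1⟩, ⟨(abs_le.1 hx).2, (abs_le.1 hy).2⟩⟩

open Classical in
theorem natCast_ncard_halfPlaneReps_of_conj_invariant {k : ℕ} (hk : 0 < k) (M : ℕ)
    {P : ℤ × ℤ → Prop} (hP : ∀ x y, P (x, y) → P (x, -y)) :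
    ({z ∈ halfPlaneReps k M | P z}.ncard : ZMod 2) =
      if ∃ c : ℕ, 0 < c ∧ c ^ 2 = M ∧ P (c, 0) then 1 else 0 := by
  rw [natCast_ncard_eq_ncard_fixedPoints (t := fun z => (z.1, -z.2))
    ((finite_halfPlaneReps hk M).subset (Set.sep_subset _ _))
    (fun z ⟨hz, hPz⟩ => ⟨by simpa [halfPlaneReps] using hz, hP _ _ hPz⟩)
    (fun z _ => by simp only [neg_neg])]
  have hfixed (z : ℤ × ℤ) (hz : z ∈ halfPlaneReps k M ∧ P z) (hc : (z.1, -z.2) = z) :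
      ∃ c : ℕ, z = ((c : ℤ), (0 : ℤ)) ∧ 0 < c ∧ c ^ 2 = M ∧ P (c, 0) := by
    obtain ⟨x, y⟩ := z
    obtain rfl : y = 0 := by simpa [neg_eq_self] using hc
    obtain ⟨⟨hx, hM⟩, hPz⟩ := hz
    lift x to ℕ using hx.le
    have hxM : (x : ℤ) ^ 2 = M := by simpa using hM
    exact ⟨x, rfl, by simpa using hx, by exact_mod_cast hxM, hPz⟩
  split_ifs with h
  · obtain ⟨c, hc, hcM, hPc⟩ := h
    rw [Set.ncard_eq_one.2 ⟨((c : ℤ), 0), ?_⟩, Nat.cast_one]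
    refine Set.eq_singleton_iff_unique_mem.2 ⟨⟨⟨⟨by simpa using hc, ?_⟩, hPc⟩, ?_⟩, ?_⟩
    · simpa using mod_cast hcM
    · simp
    · rintro z ⟨hz, hconj⟩
      obtain ⟨d, rfl, -, hdM, -⟩ := hfixed z hz hconj
      rw [Nat.pow_left_injective two_ne_zero (hdM.trans hcM.symm)]
  · rw [Set.ncard_eq_zero
      ((finite_halfPlaneReps hk M).subset fun z hz => hz.1.1)|>.2, Nat.cast_zero]
    refine Set.eq_empty_iff_forall_notMem.2 fun z hz => h ?_
    obtain ⟨c, -, hc⟩ := hfixed z hz.1 hz.2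
    exact ⟨c, hc⟩

open Classical in
theorem natCast_ncard_halfPlaneReps_not_three_dvd_fst {k : ℕ} (hk : 0 < k) (M : ℕ) :
    ({z ∈ halfPlaneReps k M | ¬ 3 ∣ z.1}.ncard : ZMod 2) =
      if ∃ c : ℕ, c ^ 2 = M ∧ ¬ 3 ∣ c then 1 else 0 := by
  rw [natCast_ncard_halfPlaneReps_of_conj_invariant hk M (P := fun z => ¬ 3 ∣ z.1)
    fun _ _ => id]
  refine if_congr (exists_congr fun c => ?_) rfl rfl
  simp only [← Int.natCast_dvd_natCast, Nat.cast_ofNat]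
  grind

/-- Off `3 ∣ x y` the condition `3 ∤ x + y` selects one of the two signs of `y`. -/
theorem ncard_halfPlaneReps_eq_ncard_repsPrimeToThree (k M : ℕ) :
    {z ∈ halfPlaneReps k M | ¬ 3 ∣ z.1 + z.2 ∧ ¬ 3 ∣ z.1 ∧ ¬ 3 ∣ z.2}.ncard =
      (repsPrimeToThree k M).ncard := by
  refine Set.BijOn.ncard_eq (f := fun z : ℤ × ℤ => (z.1.natAbs, z.2.natAbs)) ⟨?_, ?_, ?_⟩
  · rintro ⟨x, y⟩ ⟨⟨-, hM⟩, -, hx, hy⟩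
    refine ⟨by lia, by lia, ?_⟩
    zify
    simpa only [sq_abs] using hM
  · rintro ⟨x, y⟩ ⟨⟨hx, -⟩, h⟩ ⟨x', y'⟩ ⟨⟨hx', -⟩, h'⟩ heq
    simp only [Prod.mk.injEq] at *
    lia
  · rintro ⟨a, b⟩ ⟨ha, hb, hM⟩
    simp only at ha hb hM
    obtain ⟨y, hy, hay⟩ : ∃ y : ℤ, y.natAbs = b ∧ ¬ (3 : ℤ) ∣ a + y := by
      by_cases hab : (3 : ℤ) ∣ a + b
      · exact ⟨-b, by lia, by lia⟩
      · exact ⟨b, by lia, hab⟩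
    refine ⟨(a, y), ⟨⟨by simp only; lia, ?_⟩, hay, by simp only; lia, by simp only; lia⟩,
      by simp [hy]⟩
    subst hy
    zify at hM
    simpa only [sq_abs] using hM

open Classical in
theorem natCast_ncard_halfPlaneReps_not_three_dvd_add {k : ℕ} (hk : 0 < k) (M : ℕ) :
    ({z ∈ halfPlaneReps k M | ¬ 3 ∣ z.1 + z.2}.ncard : ZMod 2) =
      (if ∃ c : ℕ, c ^ 2 = M ∧ ¬ 3 ∣ c then 1 else 0) +
        ((repsPrimeToThree k M).ncard : ZMod 2) := by
  set S := {z ∈ halfPlaneReps k M | ¬ 3 ∣ z.1 + z.2}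
  have hS : S.Finite := (finite_halfPlaneReps hk M).subset (Set.sep_subset _ _)
  have hflip : S ∩ {z | 3 ∣ z.1 ∨ 3 ∣ z.2} =
      {z ∈ halfPlaneReps k M | ¬ 3 ∣ z.1 + z.2 ∧ (3 ∣ z.1 ∨ 3 ∣ z.2)} := by
    ext z; simp only [S, Set.mem_inter_iff, Set.mem_ofPred_eq, and_assoc]
  have hfree : S \ {z | 3 ∣ z.1 ∨ 3 ∣ z.2} =
      {z ∈ halfPlaneReps k M | ¬ 3 ∣ z.1 + z.2 ∧ ¬ 3 ∣ z.1 ∧ ¬ 3 ∣ z.2} := by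
    ext z; simp only [S, Set.mem_sdiff, Set.mem_ofPred_eq, and_assoc, not_or]
  rw [← Set.ncard_inter_add_ncard_sdiff_eq_ncard S {z | 3 ∣ z.1 ∨ 3 ∣ z.2} hS, Nat.cast_add,
    hflip, hfree, ncard_halfPlaneReps_eq_ncard_repsPrimeToThree,
    natCast_ncard_halfPlaneReps_of_conj_invariant hk M
      (P := fun z => ¬ 3 ∣ z.1 + z.2 ∧ (3 ∣ z.1 ∨ 3 ∣ z.2)) fun x y h => by simp only at *; lia]
  congr 1
  refine if_congr (exists_congr fun c => ?_) rfl rfl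
  simp only [← Int.natCast_dvd_natCast, Nat.cast_ofNat]
  grind

/-- Multiplication by `c + √-k` on `x + y √-k`, with the signs of both coordinates forgotten. -/
def mulSqrtNeg (k c : ℕ) (z : ℤ × ℤ) : ℕ × ℕ :=
  ((c * z.1 - k * z.2).natAbs, (z.1 + c * z.2).natAbs)

section MulSqrtNeg

variable {k c M : ℕ} {T : Set (ℕ × ℕ)}

theorem dvd_abs_sub_abs_and_dvd_abs_add_abs {d a b : ℤ} :
    d ∣ |a| - |b| ∧ d ∣ |a| + |b| ↔ d ∣ a - b ∧ d ∣ a + b := by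
  rcases abs_choice a with ha | ha <;> rcases abs_choice b with hb | hb <;> rw [ha, hb]
  · rw [sub_neg_eq_add, ← sub_eq_add_neg, and_comm]
  · rw [← neg_add', dvd_neg, neg_add_eq_sub, dvd_sub_comm, and_comm]
  · rw [sub_neg_eq_add, neg_add_eq_sub, dvd_sub_comm, ← neg_add, dvd_neg]

theorem sq_add_mul_sq_mulSqrtNeg (k c : ℕ) (z : ℤ × ℤ) :
    ((mulSqrtNeg k c z).1 ^ 2 + k * (mulSqrtNeg k c z).2 ^ 2 : ℤ) =
      (c ^ 2 + k) * (z.1 ^ 2 + k * z.2 ^ 2) := by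
  simp only [mulSqrtNeg, Int.natCast_natAbs, sq_abs]
  ring

theorem eq_of_mulSqrtNeg_eq (hk : 0 < k) {z z' : ℤ × ℤ} (hz : 0 < z.1) (hz' : 0 < z'.1)
    (hsign : ¬ ((c ^ 2 + k : ℤ) ∣ (mulSqrtNeg k c z').1 - c * (mulSqrtNeg k c z').2 ∧
      (c ^ 2 + k : ℤ) ∣ (mulSqrtNeg k c z').1 + c * (mulSqrtNeg k c z').2))
    (h : mulSqrtNeg k c z = mulSqrtNeg k c z') : z = z' := by
  obtain ⟨x, y⟩ := z
  obtain ⟨x', y'⟩ := z'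
  have hD : (0 : ℤ) < c ^ 2 + k := by positivity
  simp only [mulSqrtNeg, Prod.mk.injEq, Int.natAbs_eq_natAbs_iff] at h hz hz'
  have hboth (hadd : (c ^ 2 + k : ℤ) ∣ (c * x' - k * y') + c * (x' + c * y')) : False := by
    have hsub : (c ^ 2 + k : ℤ) ∣ (c * x' - k * y') - c * (x' + c * y') := ⟨-y', by ring⟩
    refine hsign ?_
    have habs : (c : ℤ) * |x' + c * y'| = |c * (x' + c * y')| := by rw [abs_mul, Nat.abs_cast]
    simp only [mulSqrtNeg, Int.natCast_natAbs]
    rw [habs, dvd_abs_sub_abs_and_dvd_abs_add_abs]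
    exact ⟨hsub, hadd⟩
  obtain ⟨hre | hre, him | him⟩ := h
  · have hx : (c ^ 2 + k : ℤ) * x = (c ^ 2 + k) * x' := by linear_combination c * hre + k * him
    have hy : (c ^ 2 + k : ℤ) * y = (c ^ 2 + k) * y' := by linear_combination c * him - hre
    rw [mul_left_cancel₀ hD.ne' hx, mul_left_cancel₀ hD.ne' hy]
  · exact (hboth ⟨-y, by linear_combination c * him - hre⟩).elim
  · exact (hboth ⟨y, by linear_combination hre - c * him⟩).elim
  · have hx : (c ^ 2 + k : ℤ) * x = (c ^ 2 + k) * -x' := by linear_combination c * hre + k * him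
    have := mul_left_cancel₀ hD.ne' hx
    lia

theorem exists_mulSqrtNeg_eq (hk : 0 < k) {w : ℕ × ℕ} (hne : c * w.1 ≠ k * w.2)
    (hw : w.1 ^ 2 + k * w.2 ^ 2 = (c ^ 2 + k) * M)
    (hdvd : (c ^ 2 + k : ℤ) ∣ w.1 - c * w.2 ∨ (c ^ 2 + k : ℤ) ∣ w.1 + c * w.2) :
    ∃ z ∈ halfPlaneReps k M, mulSqrtNeg k c z = w := by
  obtain ⟨u, v⟩ := w
  obtain ⟨v', hv', y, hy⟩ : ∃ v' : ℤ, v'.natAbs = v ∧ (c ^ 2 + k : ℤ) ∣ c * v' - u := by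
    rcases hdvd with h | h
    · exact ⟨v, Int.natAbs_natCast v, by rwa [dvd_sub_comm]⟩
    · exact ⟨-v, by simp, by rwa [dvd_sub_comm, mul_neg, sub_neg_eq_add]⟩
  obtain ⟨x, hx⟩ : ∃ x : ℤ, x = v' - c * y := ⟨_, rfl⟩
  have hre : c * x - k * y = u := by linear_combination c * hx + hy
  have him : x + c * y = v' := by linear_combination hx
  have hD : (c ^ 2 + k : ℤ) ≠ 0 := by positivity
  have hform : x ^ 2 + k * y ^ 2 = M := by
    have hv2 : (v : ℤ) ^ 2 = v' ^ 2 := by rw [← hv', Int.natCast_natAbs, sq_abs]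
    zify at hw
    refine mul_left_cancel₀ hD ?_
    rw [← hw, hv2]
    subst hx
    linear_combination ((u : ℤ) + c * v' - (c ^ 2 + k) * y) * hy
  have hx0 : x ≠ 0 := by
    rintro rfl
    refine hne ?_
    rw [zero_add] at him
    rw [mul_zero, zero_sub] at hre
    rw [← hv', ← Int.natAbs_natCast u, ← hre, ← him]
    simp only [Int.natAbs_neg, Int.natAbs_mul, Int.natAbs_natCast]
    ring
  rcases lt_or_gt_of_ne hx0 with hneg | hpos
  · exact ⟨(-x, -y), ⟨by simpa using hneg, by simpa using hform⟩, by
      simp only [mulSqrtNeg, Prod.mk.injEq]; lia⟩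
  · exact ⟨(x, y), ⟨hpos, hform⟩, by simp [mulSqrtNeg, hre, him, hv']⟩

theorem ncard_halfPlaneReps_mulSqrtNeg_mem (hk : 0 < k) (hne : ∀ w ∈ T, c * w.1 ≠ k * w.2)
    (hT : ∀ w ∈ T, w.1 ^ 2 + k * w.2 ^ 2 = (c ^ 2 + k) * M)
    (hdvd : ∀ w ∈ T, (c ^ 2 + k : ℤ) ∣ w.1 - c * w.2 ∨ (c ^ 2 + k : ℤ) ∣ w.1 + c * w.2)
    (hsign : ∀ w ∈ T, ¬ ((c ^ 2 + k : ℤ) ∣ w.1 - c * w.2 ∧ (c ^ 2 + k : ℤ) ∣ w.1 + c * w.2)) :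
    {z ∈ halfPlaneReps k M | mulSqrtNeg k c z ∈ T}.ncard = T.ncard :=
  Set.BijOn.ncard_eq (f := mulSqrtNeg k c) ⟨fun _ hz => hz.2,
    fun _ hz _ hz' => eq_of_mulSqrtNeg_eq hk hz.1.1 hz'.1.1 (hsign _ hz'.2),
    fun w hw => by
      obtain ⟨z, hz, rfl⟩ := exists_mulSqrtNeg_eq hk (hne w hw) (hT w hw) (hdvd w hw)
      exact ⟨z, ⟨hz, hw⟩, rfl⟩⟩

end MulSqrtNeg

theorem sq_mod_three_eq_one {c : ℕ} (hc : ¬ 3 ∣ c) : c ^ 2 % 3 = 1 := by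
  obtain h | h : c % 3 = 1 ∨ c % 3 = 2 := by lia
  all_goals simp [Nat.pow_mod, h]

theorem sq_mod_eight_eq_one {c : ℕ} (hc : ¬ 2 ∣ c) : c ^ 2 % 8 = 1 := by
  obtain h | h | h | h : c % 8 = 1 ∨ c % 8 = 3 ∨ c % 8 = 5 ∨ c % 8 = 7 := by lia
  all_goals simp [Nat.pow_mod, h]

theorem sq_mod_four_eq_zero {c : ℕ} (hc : 2 ∣ c) : c ^ 2 % 4 = 0 :=
  Nat.mod_eq_zero_of_dvd (pow_dvd_pow_of_dvd hc 2)

section FormOneTwo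

variable {M : ℕ}

theorem ncard_repsPrimeToThree_two_three_mul (hM : ¬ 2 ∣ M) :
    (repsPrimeToThree 2 (3 * M)).ncard =
      {z ∈ halfPlaneReps 2 M | ¬ 3 ∣ z.1 + z.2}.ncard := by
  rw [← ncard_halfPlaneReps_mulSqrtNeg_mem (k := 2) (c := 1) (M := M) two_pos]
  · congr 1
    ext ⟨x, y⟩
    refine and_congr_right fun hz => ?_
    have hform := sq_add_mul_sq_mulSqrtNeg 2 1 (x, y)
    rw [hz.2] at hform
    have hnorm : (mulSqrtNeg 2 1 (x, y)).1 ^ 2 + 2 * (mulSqrtNeg 2 1 (x, y)).2 ^ 2 = 3 * M := by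
      zify
      linear_combination hform
    simp only [repsPrimeToThree, Set.mem_ofPred_eq, hnorm, and_true]
    simp only [mulSqrtNeg]
    lia
  · rintro w ⟨-, -, hw⟩ h
    have := sq_mod_four_eq_zero (c := w.1) (by lia)
    lia
  · rintro w ⟨-, -, hw⟩
    linarith
  · rintro w ⟨h1, h2, -⟩
    lia
  · rintro w ⟨h1, -⟩
    lia

open Classical in
theorem natCast_ncard_repsPrimeToThree_two_three_mul (hM : ¬ 2 ∣ M) :
    ((repsPrimeToThree 2 (3 * M)).ncard : ZMod 2) =
      if (∃ c : ℕ, c ^ 2 = M) ∨ ∃ c : ℕ, 3 * c ^ 2 = M then 1 else 0 := by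
  induction M using Nat.strong_induction_on with
  | _ M ih =>
  rw [ncard_repsPrimeToThree_two_three_mul hM,
    natCast_ncard_halfPlaneReps_not_three_dvd_add two_pos]
  by_cases h3 : 3 ∣ M
  · obtain ⟨M, rfl⟩ := h3
    have hnotsq : ¬ ∃ c : ℕ, c ^ 2 = 3 * M ∧ ¬ 3 ∣ c := by
      rintro ⟨c, hc, h⟩
      have := sq_mod_three_eq_one h
      lia
    have hdescent : (∃ c : ℕ, c ^ 2 = 3 * M) ↔ ∃ c : ℕ, 3 * c ^ 2 = M := by
      refine ⟨fun ⟨c, hc⟩ => ?_, fun ⟨c, hc⟩ => ⟨3 * c, by rw [← hc]; ring⟩⟩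
      obtain ⟨c, rfl⟩ : 3 ∣ c := Nat.prime_three.dvd_of_dvd_pow ⟨M, hc⟩
      exact ⟨c, by lia⟩
    have hcancel : (∃ c : ℕ, 3 * c ^ 2 = 3 * M) ↔ ∃ c : ℕ, c ^ 2 = M := by
      simp only [Nat.mul_right_inj three_ne_zero]
    rw [if_neg hnotsq, zero_add, ih M (by lia) (by lia)]
    simp only [hdescent, hcancel, or_comm]
  · have hempty : repsPrimeToThree 2 M = ∅ := by
      refine Set.eq_empty_iff_forall_notMem.2 fun w ⟨h1, h2, hw⟩ => ?_
      have := sq_mod_three_eq_one h1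
      have := sq_mod_three_eq_one h2
      lia
    rw [hempty, Set.ncard_empty, Nat.cast_zero, add_zero]
    refine if_congr ⟨fun ⟨c, hc, _⟩ => .inl ⟨c, hc⟩, ?_⟩ rfl rfl
    rintro (⟨c, rfl⟩ | ⟨c, rfl⟩)
    · exact ⟨c, rfl, fun h => h3 (dvd_pow h two_ne_zero)⟩
    · exact absurd (dvd_mul_right _ _) h3

end FormOneTwo

/-- The theta series `∑ q ^ n` over the `n` such that `k n + 1` is a square, modulo `2`. For
`k = 24` the exponents are the generalized pentagonal numbers, for `k = 8` the triangular ones. -/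
noncomputable def sqTheta (k : ℕ) : (ZMod 2)⟦X⟧ :=
  mk fun n => if IsSquare (k * n + 1) then 1 else 0

theorem coeff_sqTheta (k n : ℕ) :
    coeff n (sqTheta k) = if IsSquare (k * n + 1) then 1 else 0 :=
  coeff_mk _ _

open Classical in
theorem coeff_expand_sqTheta {r : ℕ} (hr : r ≠ 0) (k n : ℕ) :
    coeff n (expand r hr (sqTheta k)) = if ∃ m, r * m = n ∧ IsSquare (k * m + 1) then 1 else 0 := by
  rw [coeff_expand]
  by_cases hn : r ∣ n
  · obtain ⟨m, rfl⟩ := hn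
    simp [Nat.mul_div_cancel_left m (Nat.pos_of_ne_zero hr), coeff_sqTheta, hr]
  · rw [if_neg hn, if_neg]
    rintro ⟨m, rfl, -⟩
    exact hn (dvd_mul_right r m)

theorem coeff_expand_sqTheta_mul_expand_sqTheta {r s k l : ℕ} (hr : r ≠ 0) (hs : s ≠ 0)
    (hk : k ≠ 0) (hl : l ≠ 0) (N : ℕ) :
    coeff N (expand r hr (sqTheta k) * expand s hs (sqTheta l)) =
      ({w : ℕ × ℕ | ∃ m n, w.1 ^ 2 = k * m + 1 ∧ w.2 ^ 2 = l * n + 1 ∧ r * m + s * n = N}.ncard :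
        ZMod 2) := by
  classical
  simp only [coeff_mul, coeff_expand_sqTheta, ← ite_and, mul_ite, mul_one, mul_zero]
  rw [Finset.sum_boole, ← Set.ncard_coe_finset]
  congr 1
  symm
  have hdiv {j c m : ℕ} (hj : j ≠ 0) (h : c ^ 2 = j * m + 1) : (c ^ 2 - 1) / j = m := by
    rw [h, Nat.add_sub_cancel, Nat.mul_div_cancel_left m (Nat.pos_of_ne_zero hj)]
  refine Set.ncard_congr (fun w _ => (r * ((w.1 ^ 2 - 1) / k), s * ((w.2 ^ 2 - 1) / l))) ?_ ?_ ?_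
  · rintro ⟨a, b⟩ ⟨m, n, ha, hb, hN⟩
    simp only [Finset.coe_filter, Finset.HasAntidiagonal.mem_antidiagonal, Set.mem_ofPred_eq,
      hdiv hk ha, hdiv hl hb]
    exact ⟨hN, ⟨n, rfl, b, by rw [← hb, sq]⟩, ⟨m, rfl, a, by rw [← ha, sq]⟩⟩
  · rintro ⟨a, b⟩ ⟨a', b'⟩ ⟨m, n, ha, hb, -⟩ ⟨m', n', ha', hb', -⟩ heq
    simp only [hdiv hk ha, hdiv hl hb, hdiv hk ha', hdiv hl hb', Prod.mk.injEq,
      Nat.mul_right_inj hr, Nat.mul_right_inj hs] at heq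
    obtain ⟨rfl, rfl⟩ := heq
    exact Prod.ext (Nat.pow_left_injective two_ne_zero (ha.trans ha'.symm))
      (Nat.pow_left_injective two_ne_zero (hb.trans hb'.symm))
  · rintro ⟨i, j⟩ hij
    simp only [Finset.coe_filter, Finset.HasAntidiagonal.mem_antidiagonal, Set.mem_ofPred_eq] at hij
    obtain ⟨hN, ⟨n, rfl, b, hb⟩, ⟨m, rfl, a, ha⟩⟩ := hij
    rw [← sq] at ha hb
    exact ⟨(a, b), ⟨m, n, ha.symm, hb.symm, hN⟩, by simp only [hdiv hk ha.symm, hdiv hl hb.symm]⟩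

theorem exists_sq_eq_three_mul_add_one {c : ℕ} : (∃ n, c ^ 2 = 3 * n + 1) ↔ ¬ 3 ∣ c := by
  refine ⟨?_, fun h => ⟨c ^ 2 / 3, by have := sq_mod_three_eq_one h; lia⟩⟩
  rintro ⟨n, hn⟩ h
  have := dvd_pow h two_ne_zero
  lia

theorem exists_sq_eq_eight_mul_add_one {c : ℕ} : (∃ n, c ^ 2 = 8 * n + 1) ↔ ¬ 2 ∣ c := by
  refine ⟨?_, fun h => ⟨c ^ 2 / 8, by have := sq_mod_eight_eq_one h; lia⟩⟩
  rintro ⟨n, hn⟩ h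
  have := dvd_pow h two_ne_zero
  lia

theorem exists_sq_eq_twentyfour_mul_add_one {c : ℕ} :
    (∃ n, c ^ 2 = 24 * n + 1) ↔ ¬ 2 ∣ c ∧ ¬ 3 ∣ c := by
  rw [← exists_sq_eq_three_mul_add_one, ← exists_sq_eq_eight_mul_add_one]
  refine ⟨fun ⟨n, hn⟩ => ⟨⟨3 * n, by lia⟩, 8 * n, by lia⟩, fun ⟨⟨m, hm⟩, n, hn⟩ => ⟨m / 3, by lia⟩⟩

/-- Modulo `2`, Jacobi's identity `∏ (1 - qⁿ)³ = ∑ (-1)ⁿ (2 n + 1) q ^ (n (n + 1) / 2)`. -/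
theorem sqTheta_twentyfour_mul_expand_two :
    sqTheta 24 * expand 2 two_ne_zero (sqTheta 24) = sqTheta 8 := by
  classical
  ext N
  have hcoeff := coeff_expand_sqTheta_mul_expand_sqTheta one_ne_zero two_ne_zero
    (by norm_num : 24 ≠ 0) (by norm_num : 24 ≠ 0) N
  have hreps : {w : ℕ × ℕ | ∃ m n, w.1 ^ 2 = 24 * m + 1 ∧ w.2 ^ 2 = 24 * n + 1 ∧
      1 * m + 2 * n = N} = repsPrimeToThree 2 (3 * (8 * N + 1)) := by
    ext ⟨a, b⟩
    simp only [repsPrimeToThree, Set.mem_ofPred_eq]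
    constructor
    · rintro ⟨m, n, ha, hb, hN⟩
      exact ⟨(exists_sq_eq_twentyfour_mul_add_one.1 ⟨m, ha⟩).2,
        (exists_sq_eq_twentyfour_mul_add_one.1 ⟨n, hb⟩).2, by lia⟩
    · rintro ⟨ha, hb, hN⟩
      have ha2 : ¬ 2 ∣ a := fun h => by have := sq_mod_four_eq_zero h; lia
      have := sq_mod_eight_eq_one ha2
      have hb2 : ¬ 2 ∣ b := fun h => by have := sq_mod_four_eq_zero h; lia
      obtain ⟨m, hm⟩ := exists_sq_eq_twentyfour_mul_add_one.2 ⟨ha2, ha⟩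
      obtain ⟨n, hn⟩ := exists_sq_eq_twentyfour_mul_add_one.2 ⟨hb2, hb⟩
      exact ⟨m, n, hm, hn, by lia⟩
  rw [expand_one_apply, hreps, natCast_ncard_repsPrimeToThree_two_three_mul (by lia)] at hcoeff
  rw [hcoeff, coeff_sqTheta]
  refine if_congr (.trans ⟨?_, ?_⟩ (isSquare_iff_exists_sq _).symm) rfl rfl
  · rintro (⟨c, hc⟩ | ⟨c, hc⟩)
    · exact ⟨c, hc.symm⟩
    · by_cases h2 : 2 ∣ c
      · have := sq_mod_four_eq_zero h2; lia
      · have := sq_mod_eight_eq_one h2; lia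
  · exact fun ⟨c, hc⟩ => Or.inl ⟨c, hc.symm⟩

theorem ncard_repsPrimeToThree_two_three_mul_eight_mul_add_three (N : ℕ) :
    {w : ℕ × ℕ | ∃ m n, w.1 ^ 2 = 24 * m + 1 ∧ w.2 ^ 2 = 3 * n + 1 ∧ 1 * m + 1 * n = N}.ncard =
      (repsPrimeToThree 2 (3 * (8 * N + 3))).ncard := by
  refine Set.BijOn.ncard_eq (f := fun w => (w.1, 2 * w.2)) ⟨?_, ?_, ?_⟩
  · rintro ⟨a, b⟩ ⟨m, n, ha, hb, hN⟩
    have ha3 := (exists_sq_eq_twentyfour_mul_add_one.1 ⟨m, ha⟩).2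
    have hb3 := exists_sq_eq_three_mul_add_one.1 ⟨n, hb⟩
    exact ⟨ha3, by lia, by linear_combination ha + 8 * hb + 24 * hN⟩
  · rintro ⟨a, b⟩ - ⟨a', b'⟩ - h
    simpa using h
  · rintro ⟨a, b⟩ ⟨ha, hb, hN⟩
    dsimp only at ha hb hN
    have ha2 : ¬ 2 ∣ a := fun h => by have := sq_mod_four_eq_zero h; lia
    have := sq_mod_eight_eq_one ha2
    obtain ⟨d, rfl⟩ : 2 ∣ b := by
      by_contra h
      have := sq_mod_eight_eq_one h; lia
    obtain ⟨m, hm⟩ := exists_sq_eq_twentyfour_mul_add_one.2 ⟨ha2, ha⟩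
    obtain ⟨n, hn⟩ := exists_sq_eq_three_mul_add_one.2 fun h => hb (h.mul_left 2)
    exact ⟨(a, d), ⟨m, n, hm, hn, by lia⟩, rfl⟩

theorem sqTheta_twentyfour_mul_sqTheta_three :
    sqTheta 24 * sqTheta 3 = expand 3 three_ne_zero (sqTheta 8) := by
  classical
  ext N
  have hcoeff := coeff_expand_sqTheta_mul_expand_sqTheta one_ne_zero one_ne_zero
    (by norm_num : 24 ≠ 0) three_ne_zero N
  rw [expand_one_apply, expand_one_apply,
    ncard_repsPrimeToThree_two_three_mul_eight_mul_add_three,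
    natCast_ncard_repsPrimeToThree_two_three_mul (by lia)] at hcoeff
  rw [hcoeff, coeff_expand_sqTheta]
  refine if_congr ⟨?_, ?_⟩ rfl rfl
  · rintro (⟨c, hc⟩ | ⟨c, hc⟩)
    · by_cases h2 : 2 ∣ c
      · have := sq_mod_four_eq_zero h2; lia
      · have := sq_mod_eight_eq_one h2; lia
    · by_cases h2 : 2 ∣ c
      · have := sq_mod_four_eq_zero h2; lia
      · obtain ⟨m, hm⟩ := exists_sq_eq_eight_mul_add_one.2 h2
        exact ⟨m, by lia, hm ▸ IsSquare.sq c⟩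
  · rintro ⟨m, rfl, hm⟩
    obtain ⟨c, hc⟩ := (isSquare_iff_exists_sq _).1 hm
    exact Or.inr ⟨c, by lia⟩

section FormOneSeven

variable (m : ℕ)

/-- The solutions of `x² + 7 y² = 16 (2 m + 1)` that parametrize the terms of `q ^ (4 m + 1)` in
the product of `sqTheta 8` and `sqTheta 24` at `q²¹`. -/
def repsOneSeven : Set (ℕ × ℕ) :=
  {w | ¬ 2 ∣ w.2 ∧ ¬ 3 ∣ w.2 ∧ w.1 ^ 2 + 7 * w.2 ^ 2 = 16 * (2 * m + 1)}

variable {m}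

theorem not_two_dvd_fst_of_mem_repsOneSeven {w : ℕ × ℕ} (hw : w ∈ repsOneSeven m) :
    ¬ 2 ∣ w.1 := fun h => by
  have := sq_mod_four_eq_zero h
  have := sq_mod_eight_eq_one hw.1
  have := hw.2.2
  lia

theorem sixteen_dvd_of_mem_repsOneSeven {w : ℕ × ℕ} (hw : w ∈ repsOneSeven m) :
    (16 : ℤ) ∣ w.1 - 3 * w.2 ∨ (16 : ℤ) ∣ w.1 + 3 * w.2 := by
  have hx := not_two_dvd_fst_of_mem_repsOneSeven hw
  obtain ⟨x, y⟩ := w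
  obtain ⟨hy, -, hw⟩ := hw
  dsimp only at hx hy hw
  have hy8 := sq_mod_eight_eq_one hy
  have hprod : (32 : ℤ) ∣ (x - 3 * y) * (x + 3 * y) := by
    have : ((x : ℤ) - 3 * y) * (x + 3 * y) = x ^ 2 - 9 * y ^ 2 := by ring
    rw [this]
    zify at hw hy8
    lia
  have hcoprime (u : ℤ) : IsCoprime (16 : ℤ) (2 * u + 1) := by
    have : IsCoprime (2 : ℤ) (2 * u + 1) := ⟨-u, 1, by ring⟩
    simpa using this.pow_left (m := 4)
  have hodd (u v : ℤ) (h : 32 ∣ 2 * (2 * u + 1) * v) : 16 ∣ v := by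
    refine (hcoprime u).dvd_of_dvd_mul_left (Int.dvd_of_mul_dvd_mul_left two_ne_zero ?_)
    rwa [← mul_assoc]
  rcases (by lia : x % 4 = y % 4 ∨ (x + y) % 4 = 0) with h | h
  · obtain ⟨u, hu⟩ : ∃ u : ℤ, (x : ℤ) - 3 * y = 2 * (2 * u + 1) := ⟨(x - 3 * y) / 4, by lia⟩
    rw [hu] at hprod
    exact Or.inr (hodd u _ hprod)
  · obtain ⟨u, hu⟩ : ∃ u : ℤ, (x : ℤ) + 3 * y = 2 * (2 * u + 1) := ⟨(x + 3 * y) / 4, by lia⟩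
    rw [mul_comm, hu] at hprod
    exact Or.inl (hodd u _ hprod)

theorem ncard_repsOneSeven :
    (repsOneSeven m).ncard = {z ∈ halfPlaneReps 7 (2 * m + 1) | ¬ 3 ∣ z.1}.ncard := by
  rw [← ncard_halfPlaneReps_mulSqrtNeg_mem (k := 7) (c := 3) (M := 2 * m + 1) (by norm_num)]
  · congr 1
    ext ⟨x, y⟩
    refine and_congr_right fun hz => ?_
    replace hz := hz.2
    dsimp only at hz
    have hform := sq_add_mul_sq_mulSqrtNeg 7 3 (x, y)
    have hnorm : (mulSqrtNeg 7 3 (x, y)).1 ^ 2 + 7 * (mulSqrtNeg 7 3 (x, y)).2 ^ 2 =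
        16 * (2 * m + 1) := by
      zify
      push_cast at hz hform
      linear_combination hform + 16 * hz
    have hodd : (x + y) % 2 = 1 := by
      have := Int.even_pow' (m := x) two_ne_zero
      have := Int.even_pow' (m := y) two_ne_zero
      grind
    simp only [repsOneSeven, Set.mem_ofPred_eq, hnorm, and_true]
    simp only [mulSqrtNeg]
    lia
  · rintro w ⟨-, h3, -⟩ h
    lia
  · rintro w ⟨-, -, hw⟩
    linarith
  · exact fun w hw => sixteen_dvd_of_mem_repsOneSeven hw
  · intro w hw
    have := not_two_dvd_fst_of_mem_repsOneSeven hw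
    push_cast
    lia

theorem coeff_sqTheta_eight_mul_expand_twentyone (m : ℕ) :
    coeff (4 * m + 1) (sqTheta 8 * expand 21 (by norm_num) (sqTheta 24)) =
      coeff m (expand 12 (by norm_num) (sqTheta 24)) := by
  classical
  have hcoeff := coeff_expand_sqTheta_mul_expand_sqTheta one_ne_zero (by norm_num : 21 ≠ 0)
    (by norm_num : 8 ≠ 0) (by norm_num : 24 ≠ 0) (4 * m + 1)
  have hreps : {w : ℕ × ℕ | ∃ i j, w.1 ^ 2 = 8 * i + 1 ∧ w.2 ^ 2 = 24 * j + 1 ∧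
      1 * i + 21 * j = 4 * m + 1} = repsOneSeven m := by
    ext w
    constructor
    · rintro ⟨i, j, hx, hy, h⟩
      obtain ⟨hy2, hy3⟩ := exists_sq_eq_twentyfour_mul_add_one.1 ⟨j, hy⟩
      exact ⟨hy2, hy3, by lia⟩
    · intro hw
      obtain ⟨i, hi⟩ :=
        exists_sq_eq_eight_mul_add_one.2 (not_two_dvd_fst_of_mem_repsOneSeven hw)
      obtain ⟨j, hj⟩ := exists_sq_eq_twentyfour_mul_add_one.2 ⟨hw.1, hw.2.1⟩
      have := hw.2.2
      exact ⟨i, j, hi, hj, by lia⟩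
  rw [expand_one_apply, hreps, ncard_repsOneSeven,
    natCast_ncard_halfPlaneReps_not_three_dvd_fst (by norm_num)] at hcoeff
  rw [hcoeff, coeff_expand_sqTheta]
  refine if_congr ⟨?_, ?_⟩ rfl rfl
  · rintro ⟨c, hc, h3⟩
    have h2 : ¬ 2 ∣ c := fun h => by have := sq_mod_four_eq_zero h; lia
    obtain ⟨n, hn⟩ := exists_sq_eq_twentyfour_mul_add_one.2 ⟨h2, h3⟩
    exact ⟨n, by lia, hn ▸ IsSquare.sq c⟩
  · rintro ⟨n, rfl, hn⟩
    obtain ⟨c, hc⟩ := (isSquare_iff_exists_sq _).1 hn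
    exact ⟨c, by lia, (exists_sq_eq_twentyfour_mul_add_one.1 ⟨n, hc.symm⟩).2⟩

end FormOneSeven

theorem coeff_expand_three_sqTheta_mul_sqTheta_three (m : ℕ) :
    coeff m (expand 3 three_ne_zero (sqTheta 24) * sqTheta 3) =
      ({w : ℕ × ℕ | ¬ 3 ∣ w.1 ∧ 3 * w.1 ^ 2 + 8 * w.2 ^ 2 = 24 * m + 11}.ncard : ZMod 2) := by
  have hcoeff := coeff_expand_sqTheta_mul_expand_sqTheta three_ne_zero one_ne_zero
    (by norm_num : 24 ≠ 0) three_ne_zero m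
  rw [expand_one_apply] at hcoeff
  rw [hcoeff]
  congr 2
  ext ⟨x, y⟩
  constructor
  · rintro ⟨i, j, hx, hy, h⟩
    exact ⟨(exists_sq_eq_twentyfour_mul_add_one.1 ⟨i, hx⟩).2, by lia⟩
  · rintro ⟨hx, h⟩
    dsimp only at hx h
    have hx2 : ¬ 2 ∣ x := fun h2 => by have := sq_mod_four_eq_zero h2; lia
    have hy : ¬ 3 ∣ y := fun h3 => by have := pow_dvd_pow_of_dvd h3 2; lia
    obtain ⟨i, hi⟩ := exists_sq_eq_twentyfour_mul_add_one.2 ⟨hx2, hx⟩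
    obtain ⟨j, hj⟩ := exists_sq_eq_three_mul_add_one.2 hy
    exact ⟨i, j, hi, hj, by lia⟩

section RegularPartitions

open PowerSeries.WithPiTopology

variable (R : Type*) [CommRing R]

theorem continuous_expand [TopologicalSpace R] {m : ℕ} (hm : m ≠ 0) :
    Continuous (expand m hm : R⟦X⟧ →ₐ[R] R⟦X⟧) := by
  refine continuous_iff_continuousAt.2 fun F => (tendsto_iff_coeff_tendsto _ _ _ _).2 fun d => ?_
  simp only [coeff_expand]
  split_ifs
  · exact (continuous_coeff R (d / m)).continuousAt
  · exact tendsto_const_nhds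

theorem mk_card_restricted_mul_pentagonalSeries [NoZeroDivisors R] {m : ℕ} (hm : m ≠ 0) :
    (mk fun n => ((Nat.Partition.restricted n (¬ m ∣ ·)).card : R)) * pentagonalSeries R =
      expand m hm (pentagonalSeries R) := by
  let _ : TopologicalSpace R := ⊥
  have : DiscreteTopology R := ⟨rfl⟩
  have hm' := Nat.pos_of_ne_zero hm
  have hprod := (Nat.Partition.hasProd_powerSeriesMk_card_countRestricted R hm').mul
    (hasProd_one_sub_X_pow R)
  have hexpand := (hasProd_one_sub_X_pow R).map (expand m hm) (continuous_expand R hm)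
  rw [Nat.Partition.powerSeriesMk_card_restricted_eq_powerSeriesMk_card_countRestricted R hm']
  have hfactor : (fun i : ℕ => (∑ j ∈ Finset.range m, (X : R⟦X⟧) ^ ((i + 1) * j)) *
      (1 - X ^ (i + 1))) = expand m hm ∘ fun i => 1 - X ^ (i + 1) := by
    funext i
    simp only [Function.comp_apply, map_sub, map_one, map_pow, expand_X]
    rw [← pow_mul, mul_comm m, pow_mul, ← geom_sum_mul_neg (X ^ (i + 1))]
    simp only [pow_mul]
  rw [hfactor] at hprod
  exact hprod.unique hexpand

end RegularPartitions

theorem mem_range_pentagonal {n : ℕ} : n ∈ Set.range pentagonal ↔ IsSquare (24 * n + 1) := by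
  rw [isSquare_iff_exists_sq]
  constructor
  · rintro ⟨k, rfl⟩
    refine ⟨(6 * k - 1).natAbs, ?_⟩
    zify
    rw [sq_abs]
    linear_combination 12 * two_mul_natCast_pentagonal k
  · rintro ⟨c, hc⟩
    obtain ⟨hc2, hc3⟩ := exists_sq_eq_twentyfour_mul_add_one.1 ⟨n, hc.symm⟩
    obtain ⟨k, hk⟩ : ∃ k : ℤ, (c : ℤ) = 6 * k - 1 ∨ (c : ℤ) = -(6 * k - 1) := by
      obtain h | h : c % 6 = 1 ∨ c % 6 = 5 := by lia
      · exact ⟨-(c / 6 : ℕ), by lia⟩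
      · exact ⟨(c / 6 : ℕ) + 1, by lia⟩
    have hck : (c : ℤ) ^ 2 = (6 * k - 1) ^ 2 := sq_eq_sq_iff_eq_or_eq_neg.2 hk
    refine ⟨k, ?_⟩
    zify at hc ⊢
    linarith [two_mul_natCast_pentagonal k]

theorem pentagonalSeries_zmod_two : pentagonalSeries (ZMod 2) = sqTheta 24 := by
  ext n
  rw [coeff_sqTheta]
  split_ifs with hn
  · refine (Fin.exists_fin_two.1 ⟨_, rfl⟩).resolve_left ?_
    rwa [← mem_range_pentagonal, ← not_not (a := n ∈ _),
      ← coeff_pentagonalSeries_eq_zero_iff (R := ZMod 2)] at hn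
  · rw [← mem_range_pentagonal] at hn
    exact coeff_pentagonalSeries_eq_zero _ hn

theorem pow_prime_pow_eq_expand (p : ℕ) [hp : Fact p.Prime] (n : ℕ) (F : (ZMod p)⟦X⟧) :
    F ^ p ^ n = expand (p ^ n) (pow_ne_zero n hp.out.ne_zero) F := by
  have h := MvPowerSeries.map_iterateFrobenius_expand p hp.out.ne_zero F n
  have hid : iterateFrobenius (ZMod p) p n = RingHom.id (ZMod p) := Subsingleton.elim _ _
  rw [← h, hid, MvPowerSeries.map_id]
  rfl

/-- The subseries of `F` formed by the terms whose exponents are `a` modulo `r`. -/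
noncomputable def dissect {R : Type*} [Semiring R] (r a : ℕ) (F : R⟦X⟧) : R⟦X⟧ :=
  mk fun n => coeff (r * n + a) F

theorem coeff_dissect {R : Type*} [Semiring R] (r a n : ℕ) (F : R⟦X⟧) :
    coeff n (dissect r a F) = coeff (r * n + a) F :=
  coeff_mk _ _

theorem dissect_mul_expand {R : Type*} [CommRing R] {r a : ℕ} (hr : r ≠ 0) (ha : a < r)
    (F G : R⟦X⟧) : dissect r a (F * expand r hr G) = dissect r a F * G := by
  ext n
  simp only [coeff_dissect, coeff_mul]
  symm
  refine Finset.sum_of_injOn (fun w : ℕ × ℕ => (r * w.1 + a, r * w.2)) ?_ ?_ ?_ ?_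
  · rintro ⟨i, j⟩ - ⟨i', j'⟩ - h
    simpa [hr] using h
  · rintro ⟨i, j⟩ h
    simp only [Finset.mem_coe, Finset.HasAntidiagonal.mem_antidiagonal] at h ⊢
    linear_combination r * h
  · rintro ⟨i, j⟩ h h'
    refine mul_eq_zero_of_right _ (coeff_expand_of_not_dvd r hr G fun ⟨d, hd⟩ => h' ?_)
    simp only [Finset.HasAntidiagonal.mem_antidiagonal] at h hd
    obtain ⟨e, rfl⟩ : ∃ e, n = e + d := Nat.exists_eq_add_of_le' <|
      Nat.lt_add_one_iff.1 (lt_of_mul_lt_mul_left (a := r) (by lia) r.zero_le)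
    exact ⟨(e, d), by simp, by simp only [Prod.mk.injEq]; lia⟩
  · rintro ⟨i, j⟩ -
    rw [coeff_expand_mul]

theorem sqTheta_twentyfour_ne_zero : sqTheta 24 ≠ 0 := fun h => by
  have := coeff_sqTheta 24 0
  simp [h] at this

theorem sqTheta_twentyfour_pow_three : sqTheta 24 ^ 3 = sqTheta 8 := by
  have htwo : sqTheta 24 ^ 2 = expand 2 two_ne_zero (sqTheta 24) := pow_prime_pow_eq_expand 2 1 _
  rw [← sqTheta_twentyfour_mul_expand_two, ← htwo]
  ring

theorem mk_b21_mul_sqTheta :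
    (mk fun n => (b21 n : ZMod 2)) * sqTheta 24 = expand 21 (by norm_num) (sqTheta 24) := by
  rw [← pentagonalSeries_zmod_two]
  exact mk_card_restricted_mul_pentagonalSeries (ZMod 2) (by norm_num)

theorem dissect_four_one_mk_b21 :
    dissect 4 1 (mk fun n => (b21 n : ZMod 2)) =
      expand 3 three_ne_zero (sqTheta 24) * sqTheta 3 := by
  set B : (ZMod 2)⟦X⟧ := mk fun n => (b21 n : ZMod 2)
  set θ := sqTheta 24
  have hfour (F : (ZMod 2)⟦X⟧) : expand 4 four_ne_zero F = F ^ 4 :=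
    (pow_prime_pow_eq_expand 2 2 F).symm
  refine mul_right_cancel₀ sqTheta_twentyfour_ne_zero ?_
  calc dissect 4 1 B * θ
      = dissect 4 1 (B * θ ^ 4) := by
        rw [← hfour, dissect_mul_expand four_ne_zero (by norm_num)]
    _ = dissect 4 1 (sqTheta 8 * expand 21 (by norm_num) θ) := by
        rw [← mk_b21_mul_sqTheta, ← sqTheta_twentyfour_pow_three]
        congr 1
        ring
    _ = expand 12 (by norm_num) θ := by
        ext m
        rw [coeff_dissect]
        exact coeff_sqTheta_eight_mul_expand_twentyone m
    _ = expand 3 three_ne_zero θ ^ 4 := by rw [← hfour, ← expand_mul]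
    _ = expand 3 three_ne_zero θ * expand 3 three_ne_zero (sqTheta 8) := by
        rw [← sqTheta_twentyfour_pow_three, map_pow]
        ring
    _ = expand 3 three_ne_zero θ * sqTheta 3 * θ := by
        rw [← sqTheta_twentyfour_mul_sqTheta_three]
        ring

theorem natCast_b21_four_mul_add_one (m : ℕ) :
    (b21 (4 * m + 1) : ZMod 2) =
      {w : ℕ × ℕ | ¬ 3 ∣ w.1 ∧ 3 * w.1 ^ 2 + 8 * w.2 ^ 2 = 24 * m + 11}.ncard := by
  rw [← coeff_expand_three_sqTheta_mul_sqTheta_three, ← dissect_four_one_mk_b21,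
    coeff_dissect, coeff_mk]

section FormThreeEight

variable {q : ℕ}

theorem eleven_dvd_of_three_mul_sq_add_eight_mul_sq {x y : ℕ}
    (h : 3 * x ^ 2 + 8 * y ^ 2 = 11 * q) : (11 : ℤ) ∣ x - y ∨ (11 : ℤ) ∣ x + y := by
  have hprime : Prime (11 : ℤ) := by norm_num
  have hprod : (11 : ℤ) ∣ 3 * ((x - y) * (x + y)) := by
    refine ⟨q - y ^ 2, ?_⟩
    zify at h
    linear_combination h
  exact hprime.dvd_or_dvd ((hprime.dvd_or_dvd hprod).resolve_left (by norm_num))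

theorem not_eleven_dvd_and_of_three_mul_sq_add_eight_mul_sq (h11 : ¬ 11 ∣ q) {x y : ℕ}
    (h : 3 * x ^ 2 + 8 * y ^ 2 = 11 * q) : ¬ ((11 : ℤ) ∣ x - y ∧ (11 : ℤ) ∣ x + y) := by
  rintro ⟨hsub, hadd⟩
  obtain ⟨a, rfl⟩ : 11 ∣ x := by lia
  obtain ⟨b, rfl⟩ : 11 ∣ y := by lia
  exact h11 ⟨3 * a ^ 2 + 8 * b ^ 2, by linarith⟩

theorem ncard_three_mul_sq_add_eight_mul_sq (h2 : ¬ 2 ∣ q) (h11 : ¬ 11 ∣ q) :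
    {w : ℕ × ℕ | ¬ 3 ∣ w.1 ∧ 3 * w.1 ^ 2 + 8 * w.2 ^ 2 = 11 * q}.ncard =
      {z ∈ halfPlaneReps 24 q | ¬ 3 ∣ z.1 + z.2}.ncard := by
  have hinj : Function.Injective fun w : ℕ × ℕ => (3 * w.1, w.2) := by
    rintro ⟨x, y⟩ ⟨x', y'⟩ h
    simpa using h
  rw [← Set.ncard_image_of_injective _ hinj,
    ← ncard_halfPlaneReps_mulSqrtNeg_mem (k := 24) (c := 3) (M := q) (by norm_num)]
  · congr 1
    ext ⟨x, y⟩
    refine and_congr_right fun hz => ⟨?_, fun h => ?_⟩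
    · rintro ⟨⟨u, v⟩, ⟨hu, -⟩, huv⟩
      simp only [mulSqrtNeg, Prod.mk.injEq] at huv
      lia
    · replace hz := hz.2
      refine ⟨((x - 8 * y).natAbs, (x + 3 * y).natAbs), ⟨by lia, ?_⟩, ?_⟩
      · zify
        simp only [sq_abs]
        push_cast at hz
        linear_combination 11 * hz
      · simp only [mulSqrtNeg, Prod.mk.injEq]
        lia
  · rintro _ ⟨⟨x, y⟩, ⟨-, hw⟩, rfl⟩ h
    dsimp only at h hw
    obtain ⟨t, rfl⟩ : 8 ∣ x := by lia
    obtain rfl : y = 3 * t := by lia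
    exact h2 ⟨12 * t ^ 2, by linarith⟩
  · rintro _ ⟨⟨x, y⟩, ⟨-, hw⟩, rfl⟩
    linarith
  · rintro _ ⟨⟨x, y⟩, ⟨-, hw⟩, rfl⟩
    have := eleven_dvd_of_three_mul_sq_add_eight_mul_sq hw
    push_cast
    lia
  · rintro _ ⟨⟨x, y⟩, ⟨-, hw⟩, rfl⟩
    have := not_eleven_dvd_and_of_three_mul_sq_add_eight_mul_sq h11 hw
    push_cast
    lia

end FormThreeEight

theorem odd_b21_iff {n : ℕ} (h2 : ¬ 2 ∣ n) (h3 : ¬ 3 ∣ n) (h11 : ¬ 11 ∣ n) :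
    Odd (b21 ((11 * n ^ 2 - 5) / 6)) ↔ Even (repsPrimeToThree 24 (n ^ 2)).ncard := by
  classical
  obtain ⟨t, ht⟩ := exists_sq_eq_twentyfour_mul_add_one.2 ⟨h2, h3⟩
  have hindex : (11 * n ^ 2 - 5) / 6 = 4 * (11 * t) + 1 := by lia
  have hcount : 24 * (11 * t) + 11 = 11 * n ^ 2 := by lia
  have hparity := natCast_b21_four_mul_add_one (11 * t)
  rw [hcount, ncard_three_mul_sq_add_eight_mul_sq (mt Nat.prime_two.dvd_of_dvd_pow h2)
    (mt (by norm_num : Nat.Prime 11).dvd_of_dvd_pow h11),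
    natCast_ncard_halfPlaneReps_not_three_dvd_add (by norm_num), if_pos ⟨n, rfl, h3⟩] at hparity
  rw [hindex, ← ZMod.natCast_eq_one_iff_odd, hparity, add_eq_left, ZMod.natCast_eq_zero_iff_even]

section ZsqrtdPow

variable {d : ℤ} (z : ℤ√d) (n : ℕ)

theorem re_pow_modEq : (z ^ n).re ≡ z.re ^ n [ZMOD d] := by
  induction n with
  | zero => simp
  | succ n ih =>
    rw [pow_succ, Zsqrtd.re_mul, pow_succ]
    have hzero : d * (z ^ n).im * z.im ≡ 0 [ZMOD d] :=
      Int.modEq_zero_iff_dvd.2 ((dvd_mul_right d _).mul_right _)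
    simpa only [add_zero] using (ih.mul_right z.re).add hzero

theorem im_pow_succ_modEq : (z ^ (n + 1)).im ≡ (n + 1) * z.re ^ n * z.im [ZMOD d] := by
  induction n with
  | zero => simp
  | succ n ih =>
    rw [pow_succ, Zsqrtd.im_mul]
    calc (z ^ (n + 1)).re * z.im + (z ^ (n + 1)).im * z.re
        ≡ z.re ^ (n + 1) * z.im + (n + 1) * z.re ^ n * z.im * z.re [ZMOD d] :=
          ((re_pow_modEq z _).mul_right _).add (ih.mul_right _)
      _ = ((n + 1 : ℕ) + 1) * z.re ^ (n + 1) * z.im := by push_cast; ring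

theorem re_pow_succ_modEq_norm :
    (z ^ (n + 1)).re ≡ (2 * z.re) ^ n * z.re [ZMOD z.norm] := by
  induction n with
  | zero => simp
  | succ n ih =>
    have hrec : (z ^ (n + 2)).re = 2 * z.re * (z ^ (n + 1)).re - z.norm * (z ^ n).re := by
      simp only [pow_succ, Zsqrtd.re_mul, Zsqrtd.im_mul, Zsqrtd.norm_def]
      ring
    have hzero : z.norm * (z ^ n).re ≡ 0 [ZMOD z.norm] :=
      Int.modEq_zero_iff_dvd.2 (dvd_mul_right _ _)
    rw [hrec, pow_succ' (2 * z.re), mul_assoc (2 * z.re)]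
    simpa only [sub_zero] using (ih.mul_left (2 * z.re)).sub hzero

end ZsqrtdPow

theorem eq_zero_of_dvd_of_sq_add_mul_sq_eq_sq {k q e g : ℤ} (hk : 2 ≤ k) (hdvd : q ∣ e)
    (h : g ^ 2 + k * e ^ 2 = q ^ 2) : e = 0 := by
  by_contra he
  have hle : q ^ 2 ≤ e ^ 2 := Int.natAbs_le_iff_sq_le.1 (Int.natAbs_le_of_dvd_ne_zero hdvd he)
  nlinarith [sq_nonneg g, sq_pos_of_ne_zero he]

theorem sq_eq_sq_of_sq_add_mul_sq_eq_prime_pow {k p : ℤ} (hk : 2 ≤ k) (hp : Prime p)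
    (hp2 : ¬ p ∣ 2) {n : ℕ} (hn : n ≠ 0) {a b c d : ℤ} (hab : a ^ 2 + k * b ^ 2 = p ^ n)
    (hcd : c ^ 2 + k * d ^ 2 = p ^ n) (ha : ¬ p ∣ a) (hc : ¬ p ∣ c) :
    a ^ 2 = c ^ 2 ∧ b ^ 2 = d ^ 2 := by
  have hpow : p ∣ p ^ n := dvd_pow_self p hn
  have hprod : (a * d - c * b) * (a * d + c * b) = p ^ n * (d ^ 2 - b ^ 2) := by
    linear_combination d ^ 2 * hab - b ^ 2 * hcd
  have hd : ¬ p ∣ d := fun h => hc <| hp.dvd_of_dvd_pow <|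
    (dvd_add_left ((dvd_pow h two_ne_zero).mul_left k)).1 (hcd ▸ hpow)
  have hzero : (a * d - c * b) * (a * d + c * b) = 0 := by
    by_cases hsub : p ∣ a * d - c * b
    · have hadd : ¬ p ∣ a * d + c * b := fun hadd => by
        have h2ad : p ∣ 2 * (a * d) := by
          rw [show 2 * (a * d) = a * d - c * b + (a * d + c * b) by ring]
          exact dvd_add hsub hadd
        exact (hp.dvd_or_dvd h2ad).elim hp2 fun h => (hp.dvd_or_dvd h).elim ha hd
      have hdvd : p ^ n ∣ a * d - c * b :=
        ((hp.coprime_iff_not_dvd).2 hadd).pow_left.dvd_of_dvd_mul_right ⟨_, hprod⟩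
      rw [eq_zero_of_dvd_of_sq_add_mul_sq_eq_sq (g := a * c + k * b * d) hk hdvd
        (by linear_combination (c ^ 2 + k * d ^ 2) * hab + p ^ n * hcd), zero_mul]
    · have hdvd : p ^ n ∣ a * d + c * b :=
        ((hp.coprime_iff_not_dvd).2 hsub).pow_left.dvd_of_dvd_mul_left ⟨_, hprod⟩
      rw [eq_zero_of_dvd_of_sq_add_mul_sq_eq_sq (g := a * c - k * b * d) hk hdvd
        (by linear_combination (c ^ 2 + k * d ^ 2) * hab + p ^ n * hcd), mul_zero]
  have hbd : b ^ 2 = d ^ 2 := by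
    rw [hzero, eq_comm, mul_eq_zero] at hprod
    exact (sub_eq_zero.1 (hprod.resolve_left (pow_ne_zero n hp.ne_zero))).symm
  exact ⟨by linear_combination hab - hcd - k * hbd, hbd⟩

theorem norm_pow_zsqrtd {d : ℤ} (z : ℤ√d) (n : ℕ) : (z ^ n).norm = z.norm ^ n :=
  map_pow Zsqrtd.normMonoidHom z n

theorem not_dvd_re_pow_succ {d p : ℤ} (hp : Prime p) (hp2 : ¬ p ∣ 2) {z : ℤ√d}
    (hnorm : p ∣ z.norm) (hz : ¬ p ∣ z.re) (n : ℕ) : ¬ p ∣ (z ^ (n + 1)).re := by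
  rw [((re_pow_succ_modEq_norm z n).of_dvd hnorm).dvd_iff, hp.dvd_mul]
  exact not_or_intro (fun h => (hp.dvd_or_dvd (hp.dvd_of_dvd_pow h)).elim hp2 hz) hz

section PrimePowers

variable {k p : ℕ}

theorem finite_repsPrimeToThree (hk : 0 < k) (M : ℕ) : (repsPrimeToThree k M).Finite := by
  refine (Set.finite_Iic ((M, M) : ℕ × ℕ)).subset ?_
  rintro ⟨x, y⟩ ⟨-, -, rfl⟩
  exact ⟨(Nat.le_self_pow two_ne_zero x).trans (Nat.le_add_right _ _),
    (Nat.le_self_pow two_ne_zero y).trans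
      ((Nat.le_mul_of_pos_left _ hk).trans (Nat.le_add_left _ _))⟩

theorem ncard_repsPrimeToThree_sq_mul (hk : 0 < k) (hp : p.Prime) (hpk : ¬ p ∣ k) (hp3 : p ≠ 3)
    (M : ℕ) :
    (repsPrimeToThree k (p ^ 2 * M)).ncard =
      (repsPrimeToThree k M).ncard +
        {v ∈ repsPrimeToThree k (p ^ 2 * M) | ¬ p ∣ v.1}.ncard := by
  have hthree (a : ℕ) : 3 ∣ p * a ↔ 3 ∣ a :=
    ((Nat.coprime_primes Nat.prime_three hp).2 hp3.symm).dvd_mul_left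
  have hinj : Function.Injective fun v : ℕ × ℕ => (p * v.1, p * v.2) := by
    rintro ⟨x, y⟩ ⟨x', y'⟩ h
    simpa [hp.ne_zero] using h
  have himage : {v ∈ repsPrimeToThree k (p ^ 2 * M) | p ∣ v.1} =
      (fun v => (p * v.1, p * v.2)) '' repsPrimeToThree k M := by
    ext ⟨a, b⟩
    constructor
    · rintro ⟨⟨ha, hb, hM⟩, ⟨x, rfl⟩⟩
      dsimp only at ha hb hM
      have hdvd : p ∣ k * b ^ 2 := by
        rw [← Nat.dvd_add_right ((dvd_mul_right p x).trans (dvd_pow_self _ two_ne_zero)), hM]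
        exact (dvd_pow_self p two_ne_zero).mul_right M
      obtain ⟨y, rfl⟩ : p ∣ b := hp.dvd_of_dvd_pow ((hp.dvd_mul.1 hdvd).resolve_left hpk)
      refine ⟨(x, y), ⟨mt (hthree x).2 ha, mt (hthree y).2 hb, ?_⟩, rfl⟩
      exact Nat.eq_of_mul_eq_mul_left (pow_pos hp.pos 2) (by linarith)
    · rintro ⟨⟨x, y⟩, ⟨hx, hy, rfl⟩, h⟩
      obtain ⟨rfl, rfl⟩ := Prod.mk.inj h
      exact ⟨⟨mt (hthree x).1 hx, mt (hthree y).1 hy, by ring⟩, dvd_mul_right p x⟩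
  rw [← Set.ncard_image_of_injective (repsPrimeToThree k M) hinj, ← himage]
  exact (Set.ncard_inter_add_ncard_sdiff_eq_ncard _ {v : ℕ × ℕ | p ∣ v.1}
    (finite_repsPrimeToThree hk _)).symm

theorem ncard_repsPrimeToThree_not_dvd_fst (hk : 2 ≤ k) (hp : p.Prime) (hp2 : p ≠ 2) {n : ℕ}
    (hn : n ≠ 0) {x y : ℤ} (h : x ^ 2 + k * y ^ 2 = p ^ n) (hpx : ¬ (p : ℤ) ∣ x)
    (h3x : ¬ 3 ∣ x) :
    {v ∈ repsPrimeToThree k (p ^ n) | ¬ p ∣ v.1}.ncard = if 3 ∣ y then 0 else 1 := by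
  have hunique {v : ℕ × ℕ} (hv : v ∈ repsPrimeToThree k (p ^ n)) (hpv : ¬ p ∣ v.1) :
      v = (x.natAbs, y.natAbs) := by
    have hp2Z : ¬ (p : ℤ) ∣ 2 := by
      exact_mod_cast mt (Nat.prime_dvd_prime_iff_eq hp Nat.prime_two).1 hp2
    obtain ⟨h1, h2⟩ := sq_eq_sq_of_sq_add_mul_sq_eq_prime_pow (a := v.1) (b := v.2)
      (by exact_mod_cast hk) (Nat.prime_iff_prime_int.1 hp) hp2Z hn (by exact_mod_cast hv.2.2) h
      (by exact_mod_cast hpv) hpx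
    exact Prod.ext (Int.natAbs_eq_iff_sq_eq.2 h1) (Int.natAbs_eq_iff_sq_eq.2 h2)
  split_ifs with h3y
  · rw [Set.ncard_eq_zero ((finite_repsPrimeToThree (by lia) _).subset (Set.sep_subset _ _))]
    refine Set.eq_empty_of_forall_notMem ?_
    rintro v ⟨hv, hpv⟩
    obtain rfl := hunique hv hpv
    exact hv.2.1 (Int.natCast_dvd.1 h3y)
  · refine Set.ncard_eq_one.2 ⟨(x.natAbs, y.natAbs), Set.Subset.antisymm ?_ ?_⟩
    · rintro v ⟨hv, hpv⟩
      exact hunique hv hpv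
    · rintro _ rfl
      refine ⟨⟨mt Int.natCast_dvd.2 h3x, mt Int.natCast_dvd.2 h3y, ?_⟩, mt Int.natCast_dvd.2 hpx⟩
      zify
      simpa only [sq_abs] using h

-- The primitive solutions come, up to signs, from the single element `(u + w √-k) ^ (l + 1)`.
theorem ncard_repsPrimeToThree_not_dvd_fst_pow (hk : 0 < k) (hk3 : 3 ∣ k) (hp : p.Prime)
    (hp2 : p ≠ 2) (hp3 : p ≠ 3) {m : ℕ} (hm : m ≠ 0) {u w : ℤ} (huw : u ^ 2 + k * w ^ 2 = p ^ m)
    (hu : ¬ (p : ℤ) ∣ u) (l : ℕ) :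
    {v ∈ repsPrimeToThree k (p ^ (m * (l + 1))) | ¬ p ∣ v.1}.ncard =
      if (3 : ℤ) ∣ (l + 1) * w then 0 else 1 := by
  have hp2Z : ¬ (p : ℤ) ∣ 2 := by
    exact_mod_cast mt (Nat.prime_dvd_prime_iff_eq hp Nat.prime_two).1 hp2
  have hp3Z : ¬ (3 : ℤ) ∣ p := by
    exact_mod_cast mt (Nat.prime_dvd_prime_iff_eq Nat.prime_three hp).1 hp3.symm
  have hk3Z : (3 : ℤ) ∣ k := by exact_mod_cast hk3
  have hthree {a b : ℤ} {n : ℕ} (h : a ^ 2 + k * b ^ 2 = p ^ n) : ¬ 3 ∣ a := fun ha =>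
    hp3Z <| Int.prime_three.dvd_of_dvd_pow <| h ▸
      dvd_add (dvd_pow ha two_ne_zero) (hk3Z.mul_right _)
  let z : ℤ√(-k) := ⟨u, w⟩
  have hz : z.norm = p ^ m := by
    rw [← huw, Zsqrtd.norm_def]
    ring
  have hpow : (z ^ (l + 1)).re ^ 2 + k * (z ^ (l + 1)).im ^ 2 = p ^ (m * (l + 1)) := by
    rw [pow_mul, ← hz, ← norm_pow_zsqrtd, Zsqrtd.norm_def]
    ring
  have him : 3 ∣ (z ^ (l + 1)).im ↔ 3 ∣ (l + 1) * w := by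
    rw [((im_pow_succ_modEq z l).of_dvd hk3Z.neg_right).dvd_iff, mul_right_comm,
      Int.prime_three.dvd_mul]
    exact or_iff_left fun h => hthree huw (Int.prime_three.dvd_of_dvd_pow h)
  rw [ncard_repsPrimeToThree_not_dvd_fst (by lia) hp hp2 (by positivity) hpow
    (not_dvd_re_pow_succ (Nat.prime_iff_prime_int.1 hp) hp2Z (hz ▸ dvd_pow_self _ hm) hu l)
    (hthree hpow)]
  simp only [him]

end PrimePowers

-- Thue's lemma.
theorem exists_intCast_eq_mul_sq_lt {n : ℕ} (hn : ¬ IsSquare n) (t : ZMod n) :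
    ∃ a b : ℤ, (a ≠ 0 ∨ b ≠ 0) ∧ a ^ 2 < n ∧ b ^ 2 < n ∧ (a : ZMod n) = t * b := by
  have : NeZero n := ⟨by rintro rfl; exact hn (IsSquare.zero)⟩
  set r := n.sqrt
  have hr : r ^ 2 < n := (Nat.sqrt_le' n).lt_of_ne fun h => hn ⟨r, by rw [← h, sq]⟩
  have hsub {x y : ℕ} (hx : x < r + 1) (hy : y < r + 1) : ((x : ℤ) - y) ^ 2 < n :=
    (sq_le_sq' (by lia) (by lia) : ((x : ℤ) - y) ^ 2 ≤ (r : ℤ) ^ 2).trans_lt (by exact_mod_cast hr)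
  have hcard : (Finset.univ : Finset (ZMod n)).card <
      (Finset.range (r + 1) ×ˢ Finset.range (r + 1)).card := by
    rw [Finset.card_univ, ZMod.card, Finset.card_product, Finset.card_range]
    exact Nat.lt_succ_sqrt n
  obtain ⟨⟨x, y⟩, hxy, ⟨x', y'⟩, hxy', hne, heq⟩ :=
    Finset.exists_ne_map_eq_of_card_lt_of_maps_to hcard
      (f := fun v : ℕ × ℕ => (v.1 : ZMod n) - t * v.2)
      fun _ _ => Finset.mem_coe.2 (Finset.mem_univ _)
  simp only [Finset.mem_product, Finset.mem_range] at hxy hxy'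
  refine ⟨x - x', y - y', ?_, hsub hxy.1 hxy'.1, hsub hxy.2 hxy'.2, ?_⟩
  · simp only [ne_eq, Prod.mk.injEq] at hne
    lia
  · push_cast
    linear_combination heq

theorem exists_sq_add_mul_sq_eq_mul {n k : ℕ} (hn : ¬ IsSquare n) (hk : 0 < k)
    (h : IsSquare (-k : ZMod n)) :
    ∃ a b m : ℤ, a ^ 2 + k * b ^ 2 = m * n ∧ 0 < m ∧ m ≤ k := by
  obtain ⟨t, ht⟩ := h
  obtain ⟨a, b, hab, ha, hb, hat⟩ := exists_intCast_eq_mul_sq_lt hn t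
  have hdvd : (n : ℤ) ∣ a ^ 2 + k * b ^ 2 := by
    rw [← ZMod.intCast_zmod_eq_zero_iff_dvd]
    push_cast
    rw [hat]
    linear_combination -(b : ZMod n) ^ 2 * ht
  obtain ⟨m, hm⟩ := hdvd
  have : (0 : ℤ) < k := by exact_mod_cast hk
  have hpos : 0 < n * m := by
    rw [← hm]
    rcases hab with h | h <;> positivity
  have hn0 : (0 : ℤ) < n := (sq_nonneg a).trans_lt ha
  refine ⟨a, b, m, by rw [hm, mul_comm], pos_of_mul_pos_right hpos hn0.le, ?_⟩
  have hlt : n * m < n * (k + 1) := by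
    rw [← hm]
    nlinarith
  exact Int.lt_add_one_iff.1 (lt_of_mul_lt_mul_left hlt hn0.le)

theorem exists_eq_sq_add_six_mul_sq_or_of_mul {a b m n : ℤ} (h : a ^ 2 + 6 * b ^ 2 = m * n)
    (hpos : 0 < m) (hle : m ≤ 6) :
    ∃ x y, n = x ^ 2 + 6 * y ^ 2 ∨ n = 2 * x ^ 2 + 3 * y ^ 2 := by
  have two {x : ℤ} (hx : 2 ∣ x ^ 2) : 2 ∣ x := Int.prime_two.dvd_of_dvd_pow hx
  have three {x : ℤ} (hx : 3 ∣ x ^ 2) : 3 ∣ x := Int.prime_three.dvd_of_dvd_pow hx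
  interval_cases m
  · exact ⟨a, b, Or.inl (by linarith)⟩
  · obtain ⟨c, rfl⟩ := two (by lia : 2 ∣ a ^ 2)
    exact ⟨c, b, Or.inr (by linarith)⟩
  · obtain ⟨c, rfl⟩ := three (by lia : 3 ∣ a ^ 2)
    exact ⟨b, c, Or.inr (by linarith)⟩
  · obtain ⟨c, rfl⟩ := two (by lia : 2 ∣ a ^ 2)
    rw [mul_pow] at h
    obtain ⟨d, rfl⟩ := two (by lia : 2 ∣ b ^ 2)
    exact ⟨c, d, Or.inl (by linarith)⟩
  · wlog hab : 5 ∣ a + 2 * b generalizing b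
    · have hprod : 5 ∣ (a + 2 * b) * (a - 2 * b) := ⟨n - 2 * b ^ 2, by linear_combination h⟩
      have hsub := ((by norm_num : Prime (5 : ℤ)).dvd_or_dvd hprod).resolve_left hab
      exact this (b := -b) (by rwa [neg_sq]) (by rwa [mul_neg, ← sub_eq_add_neg])
    obtain ⟨c, hc⟩ := hab
    obtain rfl : a = 5 * c - 2 * b := by linarith
    exact ⟨c - b, c, Or.inr (by linarith)⟩
  · obtain ⟨c, rfl⟩ := two (by lia : 2 ∣ a ^ 2)
    rw [mul_pow] at h
    obtain ⟨d, rfl⟩ := three (by lia : 3 ∣ c ^ 2)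
    exact ⟨b, d, Or.inl (by linarith)⟩

theorem not_dvd_mul_sq_sub_mul_sq {p r s a b : ℤ} (hp : Prime p) (hr : ¬ p ∣ 2 * r) (hs : ¬ p ∣ s)
    (h : p = r * a ^ 2 + s * b ^ 2) : ¬ p ∣ r * a ^ 2 - s * b ^ 2 := by
  intro hdvd
  have ha : p ∣ a := by
    have : p ∣ 2 * r * a ^ 2 := by
      rw [show 2 * r * a ^ 2 = r * a ^ 2 - s * b ^ 2 + p by linear_combination -h]
      exact dvd_add_self_right.2 hdvd
    exact hp.dvd_of_dvd_pow ((hp.dvd_or_dvd this).resolve_left hr)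
  have hb : p ∣ b := by
    have : p ∣ s * b ^ 2 := by
      rw [← dvd_sub_right ((dvd_pow ha two_ne_zero).mul_left r)]
      exact hdvd
    exact hp.dvd_of_dvd_pow ((hp.dvd_or_dvd this).resolve_left hs)
  obtain ⟨x, rfl⟩ := ha
  obtain ⟨y, rfl⟩ := hb
  refine hp.not_isUnit (isUnit_of_dvd_one ⟨r * x ^ 2 + s * y ^ 2, ?_⟩)
  exact mul_left_cancel₀ hp.ne_zero (by linear_combination h)

theorem isSquare_neg_of_dvd_sq_add_mul_sq {p k a b : ℕ} [Fact p.Prime] (h : p ∣ a ^ 2 + k * b ^ 2)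
    (ha : ¬ p ∣ a) : IsSquare (-k : ZMod p) := by
  rw [← ZMod.natCast_eq_zero_iff] at h ha
  push_cast at h
  have hb : (b : ZMod p) ≠ 0 := by
    intro hb
    rw [hb, zero_pow two_ne_zero, mul_zero, add_zero, sq_eq_zero_iff] at h
    exact ha h
  refine ⟨a / b, ?_⟩
  field_simp
  linear_combination -h

theorem exists_sq_add_twentyfour_mul_sq_eq_sq {p : ℕ} (hp : p.Prime) (h5 : 5 ≤ p)
    (h : IsSquare (-(6 : ℕ) : ZMod p)) :
    ∃ u w : ℤ, u ^ 2 + (24 : ℕ) * w ^ 2 = p ^ 2 ∧ ¬ (p : ℤ) ∣ u := by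
  have hp12 : ¬ (p : ℤ) ∣ 12 := by
    norm_cast
    rw [show 12 = 4 * 3 by norm_num, hp.dvd_mul]
    rintro (h | h) <;> linarith [Nat.le_of_dvd (by norm_num) h]
  obtain ⟨a, b, m, hab, hpos, hle⟩ :=
    exists_sq_add_mul_sq_eq_mul (Irreducible.not_isSquare hp) (by norm_num) h
  obtain ⟨r, s, x, y, hrs, hxy⟩ : ∃ r s x y : ℤ, r * s = 6 ∧ p = r * x ^ 2 + s * y ^ 2 := by
    obtain ⟨x, y, hxy | hxy⟩ := exists_eq_sq_add_six_mul_sq_or_of_mul hab hpos hle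
    · exact ⟨1, 6, x, y, by norm_num, by rw [hxy, one_mul]⟩
    · exact ⟨2, 3, x, y, by norm_num, hxy⟩
  refine ⟨r * x ^ 2 - s * y ^ 2, x * y, ?_, ?_⟩
  · rw [hxy]
    push_cast
    linear_combination -4 * x ^ 2 * y ^ 2 * hrs
  · refine not_dvd_mul_sq_sub_mul_sq (Nat.prime_iff_prime_int.1 hp) (mt (fun h => ?_) hp12)
      (mt (fun h => ?_) hp12) hxy
    · exact h.trans ⟨s, by linear_combination -2 * hrs⟩
    · exact h.trans ⟨2 * r, by linear_combination -2 * hrs⟩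

section FormOneTwentyFour

variable {p : ℕ}

theorem ncard_repsPrimeToThree_not_dvd_fst_eq_zero (hp : p.Prime)
    (h : ¬ IsSquare (-(6 : ℕ) : ZMod p)) {n : ℕ} (hn : n ≠ 0) :
    {v ∈ repsPrimeToThree 24 (p ^ n) | ¬ p ∣ v.1}.ncard = 0 := by
  have := Fact.mk hp
  suffices hempty : {v ∈ repsPrimeToThree 24 (p ^ n) | ¬ p ∣ v.1} = ∅ by
    rw [hempty, Set.ncard_empty]
  refine Set.eq_empty_of_forall_notMem ?_
  rintro ⟨a, b⟩ ⟨⟨-, -, hab⟩, ha⟩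
  refine h (isSquare_neg_of_dvd_sq_add_mul_sq (a := a) (b := 2 * b) ?_ ha)
  rw [show a ^ 2 + 6 * (2 * b) ^ 2 = a ^ 2 + 24 * b ^ 2 by ring, hab]
  exact dvd_pow_self p hn

theorem even_ncard_repsPrimeToThree_not_dvd_fst_add_add (hp : p.Prime) (h5 : 5 ≤ p) (k : ℕ) :
    Even ({v ∈ repsPrimeToThree 24 (p ^ (2 * (3 * k + 1))) | ¬ p ∣ v.1}.ncard +
      {v ∈ repsPrimeToThree 24 (p ^ (2 * (3 * k + 1 + 1))) | ¬ p ∣ v.1}.ncard +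
      {v ∈ repsPrimeToThree 24 (p ^ (2 * (3 * k + 1 + 1 + 1))) | ¬ p ∣ v.1}.ncard) := by
  by_cases hsq : IsSquare (-(6 : ℕ) : ZMod p)
  · obtain ⟨u, w, huw, hu⟩ := exists_sq_add_twentyfour_mul_sq_eq_sq hp h5 hsq
    have hcount := ncard_repsPrimeToThree_not_dvd_fst_pow (k := 24) (by norm_num) (by norm_num) hp
      (by lia) (by lia) two_ne_zero huw hu
    have hdvd (c : ℤ) : 3 ∣ c * w ↔ 3 ∣ c ∨ 3 ∣ w := Int.prime_three.dvd_mul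
    rw [hcount, hcount, hcount]
    simp only [hdvd]
    split_ifs <;> first | decide | (push_cast at *; lia)
  · rw [ncard_repsPrimeToThree_not_dvd_fst_eq_zero hp hsq (by lia),
      ncard_repsPrimeToThree_not_dvd_fst_eq_zero hp hsq (by lia),
      ncard_repsPrimeToThree_not_dvd_fst_eq_zero hp hsq (by lia)]
    exact Even.zero

theorem even_ncard_repsPrimeToThree_prime_pow (hp : p.Prime) (h5 : 5 ≤ p) (k : ℕ) :
    Even (repsPrimeToThree 24 (p ^ (2 * (3 * k)))).ncard := by
  have hp24 : ¬ p ∣ 24 := by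
    rw [show 24 = 4 * (3 * 2) by norm_num, hp.dvd_mul, hp.dvd_mul]
    rintro (h | h | h) <;> linarith [Nat.le_of_dvd (by norm_num) h]
  have hsucc (l : ℕ) := ncard_repsPrimeToThree_sq_mul (k := 24) (by norm_num) hp hp24 (by lia)
    (p ^ (2 * l))
  simp only [← pow_add, ← mul_add_one, add_comm 2 (2 * _)] at hsucc
  induction k with
  | zero =>
    suffices hempty : repsPrimeToThree 24 (p ^ 0) = ∅ by
      rw [mul_zero, mul_zero, hempty, Set.ncard_empty]
      exact Even.zero
    refine Set.eq_empty_of_forall_notMem ?_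
    rintro ⟨a, b⟩ ⟨-, hb, h⟩
    dsimp only at hb h
    obtain rfl : b = 0 := by
      by_contra hb0
      have := pow_pos (Nat.pos_of_ne_zero hb0) 2
      lia
    exact hb (dvd_zero 3)
  | succ k ih =>
    have hsum := ih.add (even_ncard_repsPrimeToThree_not_dvd_fst_add_add hp h5 k)
    rwa [← add_assoc, ← add_assoc, ← hsucc, ← hsucc, ← hsucc] at hsum

end FormOneTwentyFour

theorem odd_b21_prime_pow {p : ℕ} (hp : p.Prime) (h5 : 5 ≤ p) (h11 : p ≠ 11) (k : ℕ) :
    Odd (b21 ((11 * p ^ (6 * k) - 5) / 6)) := by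
  have hndvd {q : ℕ} (hq : q.Prime) (hne : q ≠ p) : ¬ q ∣ p ^ (3 * k) := fun h =>
    hne ((Nat.prime_dvd_prime_iff_eq hq hp).1 (hq.dvd_of_dvd_pow h))
  rw [show 6 * k = 3 * k * 2 by ring, pow_mul, odd_b21_iff (hndvd Nat.prime_two (by lia))
    (hndvd Nat.prime_three (by lia)) (hndvd (by norm_num) h11.symm), ← pow_mul, mul_comm]
  exact even_ncard_repsPrimeToThree_prime_pow hp h5 k

theorem infinite_odd_b21 : {n : ℕ | Odd (b21 n)}.Infinite := by
  refine Set.infinite_of_forall_exists_gt fun n =>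
    ⟨_, odd_b21_prime_pow Nat.prime_five le_rfl (by norm_num) (n + 1), ?_⟩
  have hlt : n + 1 < 5 ^ (6 * (n + 1)) :=
    (Nat.lt_pow_self (by norm_num)).trans_le (Nat.pow_le_pow_right (by norm_num) (by lia))
  lia

theorem stmt_19 :
    (∀ p : ℕ, p.Prime → 5 ≤ p → p ≠ 11 →
      ∃ μ ∈ ({4, 6} : Set ℕ), ∀ k : ℕ, Odd (b21 ((11 * p ^ (μ * k) - 5) / 6))) ∧
    {n : ℕ | Odd (b21 n)}.Infinite :=
  ⟨fun _ hp h5 h11 => ⟨6, by simp, odd_b21_prime_pow hp h5 h11⟩, infinite_odd_b21⟩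
end
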